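/- arXiv:1006.0590 — 3 statements merged into one kernel-verified Lean document; each statement's English description precedes it below -/
import Mathlib

section
/- For every α > 0 there exists an integer n₀ = n₀(α) such that every oriented graph G of order n ≥ n₀ satisfying d⁺(x) + d⁻(y) ≥ (3/4 + α)n for every ordered pair of distinct vertices x, y for which G contains no edge from x to y, contains a Hamilton cycle. -/
/-- The outdegree of a vertex `x` in the digraph with adjacency relation `G`. -/
noncomputable def outDeg {V : Type*} (G : V → V → Prop) (x : V) : ℕ :=
  Nat.card {y : V // G x y}

/-- The indegree of a vertex `x` in the digraph with adjacency relation `G`. -/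
noncomputable def inDeg {V : Type*} (G : V → V → Prop) (x : V) : ℕ :=
  Nat.card {y : V // G y x}

/-- An oriented graph: no loops and no 2-cycles. -/
def IsOriented {V : Type*} (G : V → V → Prop) : Prop :=
  ∀ x y : V, G x y → ¬ G y x

/-- `f` is a Hamilton cycle of the digraph `G`. -/
def IsHamCycle {V : Type*} [Fintype V] (G : V → V → Prop)
    (f : ZMod (Fintype.card V) → V) : Prop :=
  Function.Bijective f ∧ ∀ i, G (f i) (f (i + 1))

/-- `DiPath G a b X`: there is a directed path of `G` from `a` to `b` with vertex set `X`. -/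
inductive DiPath {V : Type*} (G : V → V → Prop) : V → V → Finset V → Prop
  | single (a : V) : DiPath G a a {a}
  | cons {a a' b : V} {X : Finset V} (h : a ∉ X) :
      G a a' → DiPath G a' b X → DiPath G a b (Finset.cons a X h)

namespace DiPath

open scoped Classical

variable {V : Type*} {G : V → V → Prop} {a b c d : V} {X Y : Finset V}

theorem start_mem (h : DiPath G a b X) : a ∈ X := by
  cases h <;> simp

theorem append (h : DiPath G a b X) (h' : DiPath G c d Y) (hbc : G b c) (hXY : Disjoint X Y) :
    DiPath G a d (X ∪ Y) := by
  induction h with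
  | single a =>
    have ha : a ∉ Y := by simpa using hXY
    have := DiPath.cons ha hbc h'
    rwa [Finset.cons_eq_insert, Finset.insert_eq] at this
  | @cons a a' b X ha hG _ ih =>
    rw [Finset.cons_eq_insert, Finset.disjoint_insert_left] at hXY
    have := DiPath.cons (a := a) (by simp [ha, hXY.1]) hG (ih hbc hXY.2)
    rwa [Finset.cons_eq_insert, ← Finset.insert_union, ← Finset.cons_eq_insert a X ha] at this

theorem exists_succ (h : DiPath G a b X) {x : V} (hx : x ∈ X) (hxb : x ≠ b) : ∃ y, G x y := by
  induction h with
  | single => simp_all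
  | cons _ hG _ ih =>
    rcases Finset.mem_cons.1 hx with rfl | hx
    · exact ⟨_, hG⟩
    · exact ih hx hxb

theorem exists_pred (h : DiPath G a b X) {x : V} (hx : x ∈ X) (hxa : x ≠ a) : ∃ y, G y x := by
  induction h with
  | single => simp_all
  | @cons a a' b X _ hG _ ih =>
    rcases Finset.mem_cons.1 hx with rfl | hx
    · exact absurd rfl hxa
    · by_cases h' : x = a'
      · exact ⟨a, h' ▸ hG⟩
      · exact ih hx h'

theorem mono {G' : V → V → Prop} (hG : ∀ x y, G x y → G' x y) (h : DiPath G a b X) :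
    DiPath G' a b X := by
  induction h with
  | single a => exact .single a
  | cons h' hG' _ ih => exact .cons h' (hG _ _ hG') ih

theorem map {W : Type*} {G' : W → W → Prop} (f : V ↪ W) (hG : ∀ x y, G x y → G' (f x) (f y))
    (h : DiPath G a b X) : DiPath G' (f a) (f b) (X.map f) := by
  induction h with
  | single a => simpa using DiPath.single (f a)
  | cons h' hG' _ ih =>
    rw [Finset.map_cons]
    exact .cons _ (hG _ _ hG') ih

theorem rank_le {f : V → ℕ} (hf : ∀ x y, G x y → f x < f y) (h : DiPath G a b X) : f a ≤ f b := by
  induction h with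
  | single => rfl
  | cons _ hG' _ ih => exact (hf _ _ hG').le.trans ih

theorem exists_enum (h : DiPath G a b X) : ∃ g : ℕ → V, g 0 = a ∧ g (X.card - 1) = b ∧
    Set.InjOn g {i | i < X.card} ∧ (∀ i < X.card, g i ∈ X) ∧
    ∀ i, i + 1 < X.card → G (g i) (g (i + 1)) := by
  induction h with
  | single a => exact ⟨fun _ => a, by simp [Set.InjOn]⟩
  | @cons a a' b X ha hG hp ih =>
    obtain ⟨g, h0, h1, hinj, hmem, hstep⟩ := ih
    have hpos : 0 < X.card := Finset.card_pos.2 ⟨_, hp.start_mem⟩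
    refine ⟨fun i => Nat.casesOn i a g, rfl, ?_, ?_, ?_, ?_⟩
    · obtain ⟨k, hk⟩ : ∃ k, X.card = k + 1 := ⟨X.card - 1, by omega⟩
      simp only [Finset.card_cons, hk] at h1 ⊢
      exact h1
    · rintro (_ | i) hi (_ | j) hj hij
      · rfl
      · simp only [Set.mem_ofPred_eq, Finset.card_cons] at hj hij
        exact absurd ((show a = g j from hij) ▸ hmem j (by omega)) ha
      · simp only [Set.mem_ofPred_eq, Finset.card_cons] at hi hij
        exact absurd ((show g i = a from hij) ▸ hmem i (by omega)) ha
      · simp only [Set.mem_ofPred_eq, Finset.card_cons] at hi hj hij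
        rw [hinj (by simpa using hi) (by simpa using hj) hij]
    · rintro (_ | i) hi
      · simp
      · simp only [Finset.card_cons] at hi
        simp [hmem i (by omega)]
    · rintro (_ | i) hi
      · simpa [h0] using hG
      · simp only [Finset.card_cons] at hi
        exact hstep i (by omega)

theorem exists_isHamCycle [Fintype V] (h : DiPath G a b Finset.univ) (hba : G b a) :
    ∃ f : ZMod (Fintype.card V) → V, IsHamCycle G f := by
  obtain ⟨g, h0, h1, hinj, -, hstep⟩ := h.exists_enum
  rw [Finset.card_univ] at *
  have : Nonempty V := ⟨a⟩
  have hn : 0 < Fintype.card V := Fintype.card_pos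
  have : NeZero (Fintype.card V) := ⟨hn.ne'⟩
  refine ⟨fun i => g i.val, ?_, fun i => ?_⟩
  · rw [Fintype.bijective_iff_injective_and_card]
    exact ⟨fun i j hij => ZMod.val_injective _ (hinj (ZMod.val_lt i) (ZMod.val_lt j) hij),
      ZMod.card _⟩
  · rcases Nat.lt_or_ge (i.val + 1) (Fintype.card V) with hi | hi
    · have : Fact (1 < Fintype.card V) := ⟨by omega⟩
      have hv : (i + 1).val = i.val + 1 := by
        rw [ZMod.val_add_of_lt (by rwa [ZMod.val_one]), ZMod.val_one]
      simp only [hv]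
      exact hstep _ hi
    · have hi' : i.val = Fintype.card V - 1 := by
        have := ZMod.val_lt i
        omega
      have : i + 1 = 0 := by
        rw [← ZMod.natCast_zmod_val i, hi', ← Nat.cast_add_one, Nat.sub_add_cancel hn,
          ZMod.natCast_self]
      simp only [this, hi', h1, ZMod.val_zero, h0]
      exact hba

end DiPath

section Walks

open scoped Classical

variable {V : Type*} {G : V → V → Prop} {ν : ℝ}

/-- The edge relation of `G`, or of its reverse when `s = false`. -/
def dirEdge (G : V → V → Prop) (s : Bool) (x y : V) : Prop :=
  if s then G x y else G y x

theorem dirEdge_not {s : Bool} {x y : V} : dirEdge G (!s) x y ↔ dirEdge G s y x := by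
  cases s <;> simp [dirEdge]

variable [Fintype V]

/-- A two-sided robust expander with linear minimum semidegree. -/
structure IsExpander (G : V → V → Prop) (ν : ℝ) : Prop where
  degree (s : Bool) (x : V) :
    (Fintype.card V : ℝ) / 8 ≤ (Finset.univ.filter fun y => dirEdge G s x y).card
  expand (s : Bool) (S : Finset V) : (Fintype.card V : ℝ) / 16 ≤ S.card →
    min (S.card : ℝ) (15 / 16 * Fintype.card V) + ν * Fintype.card V ≤
      (Finset.univ.filter fun y =>
        ν * Fintype.card V ≤ ((S.filter fun x => dirEdge G s x y).card : ℝ)).card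

/-- Interior vertices, in reverse order, of the walks from `u` to `y` with `j + 1` steps, the `i`-th
step being forward if `s i = true` and backward otherwise. -/
noncomputable def walks (G : V → V → Prop) (s : ℕ → Bool) (u : V) : ℕ → V → Finset (List V)
  | 0, y => if dirEdge G (s 0) u y then {[]} else ∅
  | j + 1, y => (Finset.univ.filter fun z => dirEdge G (s (j + 1)) z y).biUnion
      fun z => (walks G s u j z).image (List.cons z)

variable {s : ℕ → Bool} {u y : V} {j : ℕ} {l : List V}

theorem mem_walks_zero : l ∈ walks G s u 0 y ↔ l = [] ∧ dirEdge G (s 0) u y := by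
  by_cases h : dirEdge G (s 0) u y <;> simp [walks, h]

theorem mem_walks_succ : l ∈ walks G s u (j + 1) y ↔
    ∃ z l', l = z :: l' ∧ dirEdge G (s (j + 1)) z y ∧ l' ∈ walks G s u j z := by
  simp only [walks, Finset.mem_biUnion, Finset.mem_filter, Finset.mem_univ, true_and,
    Finset.mem_image]
  constructor
  · rintro ⟨z, hz, l', hl', rfl⟩
    exact ⟨z, l', rfl, hz, hl'⟩
  · rintro ⟨z, l', rfl, hz, hl'⟩
    exact ⟨z, hz, l', hl', rfl⟩

theorem length_of_mem_walks (h : l ∈ walks G s u j y) : l.length = j := by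
  induction j generalizing l y with
  | zero => simp [(mem_walks_zero.1 h).1]
  | succ j ih =>
    obtain ⟨z, l', rfl, -, hl'⟩ := mem_walks_succ.1 h
    simp [ih hl']

theorem card_walks_succ : (walks G s u (j + 1) y).card =
    ∑ z with dirEdge G (s (j + 1)) z y, (walks G s u j z).card := by
  rw [walks, Finset.card_biUnion]
  · exact Finset.sum_congr rfl fun z _ =>
      Finset.card_image_of_injective _ (List.cons_injective)
  · intro z _ z' _ hzz'
    rw [Function.onFun, Finset.disjoint_left]
    rintro _ h h'
    obtain ⟨l, -, rfl⟩ := Finset.mem_image.1 h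
    obtain ⟨l', -, h'⟩ := Finset.mem_image.1 h'
    exact hzz' (List.cons.inj h').1.symm

theorem card_walks_succ_ge {A : Finset V} {b m : ℝ} (hm : 0 ≤ m)
    (hA : ∀ z ∈ A, m ≤ (walks G s u j z).card)
    (hb : b ≤ (A.filter fun z => dirEdge G (s (j + 1)) z y).card) :
    b * m ≤ (walks G s u (j + 1) y).card := by
  rw [card_walks_succ]
  push_cast
  calc b * m ≤ (A.filter fun z => dirEdge G (s (j + 1)) z y).card * m := by gcongr
    _ = ∑ z ∈ A.filter fun z => dirEdge G (s (j + 1)) z y, m := by simp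
    _ ≤ ∑ z ∈ A.filter fun z => dirEdge G (s (j + 1)) z y, ((walks G s u j z).card : ℝ) :=
      Finset.sum_le_sum fun z hz => hA z (Finset.mem_filter.1 hz).1
    _ ≤ _ := Finset.sum_le_sum_of_subset_of_nonneg
      (Finset.filter_subset_filter _ (Finset.subset_univ _)) fun _ _ _ => by positivity

theorem IsExpander.card_reach (hG : IsExpander G ν) (hν : 0 ≤ ν) (s : ℕ → Bool) (u : V) (j : ℕ) :
    min ((Fintype.card V : ℝ) / 8 + j * (ν * Fintype.card V)) (15 / 16 * Fintype.card V) ≤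
      (Finset.univ.filter fun y =>
        (ν * Fintype.card V) ^ j ≤ ((walks G s u j y).card : ℝ)).card := by
  have hn : (0 : ℝ) ≤ Fintype.card V := by positivity
  have hνn : 0 ≤ ν * Fintype.card V := by positivity
  induction j with
  | zero =>
    refine (min_le_left _ _).trans ?_
    simp only [Nat.cast_zero, zero_mul, add_zero]
    refine (hG.degree (s 0) u).trans (Nat.cast_le.2 (Finset.card_le_card ?_))
    intro y hy
    simp only [Finset.mem_filter, Finset.mem_univ, true_and] at hy
    simp [walks, hy]
  | succ j ih =>
    set A := Finset.univ.filter fun y =>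
        (ν * Fintype.card V) ^ j ≤ ((walks G s u j y).card : ℝ) with hA
    have hA16 : (Fintype.card V : ℝ) / 16 ≤ A.card := by
      refine le_trans (le_min ?_ ?_) ih
      · have : 0 ≤ (j : ℝ) * (ν * Fintype.card V) := by positivity
        linarith
      · linarith
    refine le_trans ?_ ((hG.expand (s (j + 1)) A hA16).trans
      (Nat.cast_le.2 (Finset.card_le_card ?_)))
    · push_cast
      rcases min_cases (A.card : ℝ) (15 / 16 * Fintype.card V) with ⟨h1, h2⟩ | ⟨h1, h2⟩
      · rw [h1]
        rcases min_le_iff.1 ih with h3 | h3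
        · exact (min_le_left _ _).trans (by linarith)
        · exact (min_le_right _ _).trans (by linarith)
      · rw [h1]
        exact (min_le_right _ _).trans (by linarith)
    · intro y hy
      simp only [Finset.mem_filter, Finset.mem_univ, true_and] at hy ⊢
      rw [pow_succ']
      exact card_walks_succ_ge (by positivity) (fun z hz => (Finset.mem_filter.1 hz).2) hy

/-- In a robust expander any two vertices are joined by many walks with a given direction pattern. -/
theorem IsExpander.card_walks_ge (hG : IsExpander G ν) (hν : 0 ≤ ν) (hν' : ν ≤ 1 / 16)
    (s : ℕ → Bool) (u v : V) {j : ℕ} (hj : 1 ≤ j * ν) :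
    (ν * Fintype.card V) ^ (j + 1) ≤ ((walks G s u (j + 1) v).card : ℝ) := by
  have hn : (0 : ℝ) ≤ Fintype.card V := by positivity
  rw [pow_succ']
  set A := Finset.univ.filter fun y =>
        (ν * Fintype.card V) ^ j ≤ ((walks G s u j y).card : ℝ) with hA
  have hcard : 15 / 16 * (Fintype.card V : ℝ) ≤ A.card := by
    refine le_trans (le_min ?_ le_rfl) (hG.card_reach hν s u j)
    nlinarith
  refine card_walks_succ_ge (A := A) (by positivity) (fun z hz => (Finset.mem_filter.1 hz).2) ?_
  have hdeg := hG.degree (!s (j + 1)) v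
  simp only [dirEdge_not] at hdeg
  have h1 := Finset.card_inter_add_card_union A
    (Finset.univ.filter fun z => dirEdge G (s (j + 1)) z v)
  have h2 := Finset.card_le_univ (A ∪ Finset.univ.filter fun z => dirEdge G (s (j + 1)) z v)
  have h3 : A.filter (fun z => dirEdge G (s (j + 1)) z v) =
      A ∩ Finset.univ.filter fun z => dirEdge G (s (j + 1)) z v := by
    ext; simp
  rw [h3]
  have h1' : ((A ∩ Finset.univ.filter fun z => dirEdge G (s (j + 1)) z v).card : ℝ) +
    (A ∪ Finset.univ.filter fun z => dirEdge G (s (j + 1)) z v).card = A.card +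
    (Finset.univ.filter fun z => dirEdge G (s (j + 1)) z v).card := by exact_mod_cast h1
  have h2' : ((A ∪ Finset.univ.filter fun z => dirEdge G (s (j + 1)) z v).card : ℝ) ≤
    Fintype.card V := by exact_mod_cast h2
  have : ν * (Fintype.card V : ℝ) ≤ 1 / 16 * Fintype.card V := by gcongr
  linarith

end Walks

section Selection

open scoped Classical

variable {V : Type*} [Fintype V]

theorem card_lists_le {K : ℕ} {D : Finset (List V)} (hD : ∀ l ∈ D, l.length = K) :
    D.card ≤ Fintype.card V ^ K := by
  rw [← card_vector K, ← Fintype.card_coe]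
  exact Fintype.card_le_of_injective (fun l => (⟨l.1, hD l.1 l.2⟩ : List.Vector V K))
    fun l l' h => Subtype.ext (show (l : List V) = l' from congrArg List.Vector.toList h)

theorem card_bad_lists_le {K : ℕ} (F : Finset V) {D : Finset (List V)}
    (hD : ∀ l ∈ D, l.length = K) (hbad : ∀ l ∈ D, ¬ (l.Nodup ∧ ∀ x ∈ l, x ∉ F)) :
    D.card * Fintype.card V ≤ K * (F.card + K) * Fintype.card V ^ K := by
  induction K generalizing F D with
  | zero =>
    have : D = ∅ := Finset.eq_empty_of_forall_notMem fun l hl =>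
      hbad l hl (by simp [List.length_eq_zero_iff.1 (hD l hl)])
    simp [this]
  | succ K ih =>
    set n := Fintype.card V
    let E : V → Finset (List V) := fun z => (D.image List.tail).filter fun l => z :: l ∈ D
    have hE : ∀ z l, l ∈ E z → z :: l ∈ D := fun z l hl => (Finset.mem_filter.1 hl).2
    have hElen : ∀ z, ∀ l ∈ E z, l.length = K := fun z l hl => by
      simpa using hD _ (hE z l hl)
    have hDE : D ⊆ Finset.univ.biUnion fun z => (E z).image (List.cons z) := by
      intro l hl
      match l, hD l hl with
      | z :: l, _ =>
        simp only [Finset.mem_biUnion, Finset.mem_univ, true_and, Finset.mem_image]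
        exact ⟨z, l, Finset.mem_filter.2 ⟨Finset.mem_image.2 ⟨_, hl, rfl⟩, hl⟩, rfl⟩
    have h1 : D.card ≤ ∑ z, (E z).card :=
      (Finset.card_le_card hDE).trans (Finset.card_biUnion_le.trans
        (Finset.sum_le_sum fun z _ => Finset.card_image_le))
    have h2 : ∀ z, (E z).card * n ≤
        (if z ∈ F then n ^ (K + 1) else 0) + K * (F.card + 1 + K) * n ^ K := by
      intro z
      split_ifs with hz
      · have := Nat.mul_le_mul_right n (card_lists_le (hElen z))
        rw [pow_succ]
        exact this.trans (Nat.le_add_right _ _)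
      · rw [zero_add, ← Finset.card_insert_of_notMem hz]
        refine ih (insert z F) (hElen z) fun l hl hgood => hbad _ (hE z l hl) ⟨?_, ?_⟩
        · refine List.nodup_cons.2 ⟨fun hzl => ?_, hgood.1⟩
          exact hgood.2 z hzl (Finset.mem_insert_self _ _)
        · intro x hx
          rcases List.mem_cons.1 hx with rfl | hx
          · exact hz
          · exact fun hxF => hgood.2 x hx (Finset.mem_insert_of_mem hxF)
    calc D.card * n ≤ ∑ z, (E z).card * n := by
          rw [← Finset.sum_mul]; exact Nat.mul_le_mul_right n h1
      _ ≤ ∑ z, ((if z ∈ F then n ^ (K + 1) else 0) + K * (F.card + 1 + K) * n ^ K) :=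
          Finset.sum_le_sum fun z _ => h2 z
      _ = F.card * n ^ (K + 1) + n * (K * (F.card + 1 + K) * n ^ K) := by
          rw [Finset.sum_add_distrib, ← Finset.sum_filter]
          simp [n]
      _ ≤ (K + 1) * (F.card + (K + 1)) * n ^ (K + 1) := by
          rw [pow_succ]
          have : 0 ≤ n ^ K * n := Nat.zero_le _
          nlinarith

theorem card_good_lists_ge {K : ℕ} {c : ℝ} (F : Finset V) {D : Finset (List V)} (hK : 1 ≤ K)
    (hV : 0 < Fintype.card V) (hD : ∀ l ∈ D, l.length = K)
    (hcard : c * (Fintype.card V : ℝ) ^ K ≤ D.card)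
    (hF : F.card + K ≤ c / (2 * K) * Fintype.card V) :
    c / 2 * (Fintype.card V : ℝ) ^ K ≤ (D.filter fun l => l.Nodup ∧ ∀ x ∈ l, x ∉ F).card := by
  have h1 := card_bad_lists_le F (D := D.filter fun l => ¬ (l.Nodup ∧ ∀ x ∈ l, x ∉ F))
    (fun l hl => hD l (Finset.mem_filter.1 hl).1) (fun l hl => (Finset.mem_filter.1 hl).2)
  have h2 := Finset.card_filter_add_card_filter_not (s := D)
    (fun l => l.Nodup ∧ ∀ x ∈ l, x ∉ F)
  set B := D.filter fun l => ¬ (l.Nodup ∧ ∀ x ∈ l, x ∉ F)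
  set A := D.filter fun l => l.Nodup ∧ ∀ x ∈ l, x ∉ F
  have hn : (0 : ℝ) < Fintype.card V := by exact_mod_cast hV
  have hK' : (0 : ℝ) < K := by exact_mod_cast hK
  have h1' : (B.card : ℝ) * Fintype.card V ≤
      K * (F.card + K) * (Fintype.card V : ℝ) ^ K := by exact_mod_cast h1
  have h2' : (A.card : ℝ) + B.card = D.card := by exact_mod_cast h2
  have h3 : (K : ℝ) * (F.card + K) ≤ c / 2 * Fintype.card V := by
    calc (K : ℝ) * (F.card + K) ≤ K * (c / (2 * K) * Fintype.card V) := by gcongr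
      _ = _ := by field_simp
  have h4 : (B.card : ℝ) ≤ c / 2 * (Fintype.card V : ℝ) ^ K := by
    refine le_of_mul_le_mul_right ?_ hn
    calc (B.card : ℝ) * Fintype.card V ≤ K * (F.card + K) * (Fintype.card V : ℝ) ^ K := h1'
      _ ≤ (c / 2 * Fintype.card V) * (Fintype.card V : ℝ) ^ K := by gcongr
      _ = _ := by ring
  linarith

/-- A finite set of lists that are duplicate-free, avoid `F` and are pairwise disjoint. -/
structure IsPacking (F : Finset V) (T : Finset (List V)) : Prop where
  nodup : ∀ l ∈ T, l.Nodup
  avoid : ∀ l ∈ T, ∀ x ∈ l, x ∉ F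
  disjoint : ∀ l ∈ T, ∀ l' ∈ T, l ≠ l' → ∀ x ∈ l, x ∉ l'

theorem exists_packing_weight {ι : Type*} [Fintype ι] {K : ℕ} {c β : ℝ} (hc : 0 < c)
    (hc1 : c ≤ 1) (hK : 1 ≤ K) (hβK : β * K ≤ c / (8 * K))
    (hV : (K : ℝ) ≤ c / (4 * K) * Fintype.card V)
    {D : ι → Finset (List V)} {F : Finset V} (hD : ∀ i, ∀ l ∈ D i, l.length = K)
    (hcard : ∀ i, c * (Fintype.card V : ℝ) ^ K ≤ (D i).card)
    (hF : F.card ≤ c / (8 * K) * Fintype.card V) (m : ℕ) (hm : m ≤ β * Fintype.card V) :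
    ∃ T : Finset (List V), T.card ≤ m ∧ IsPacking F T ∧ (∀ l ∈ T, ∃ i, l ∈ D i) ∧
      ∑ i, (1 / 2 : ℝ) ^ (T.filter (· ∈ D i)).card ≤ (1 - c / 4) ^ m * Fintype.card ι := by
  have hK' : (0 : ℝ) < K := by exact_mod_cast hK
  rcases isEmpty_or_nonempty ι with hι | ⟨⟨i₀⟩⟩
  · exact ⟨∅, by simp, ⟨by simp, by simp, by simp⟩, by simp, by simp⟩
  have hn : (0 : ℝ) < Fintype.card V := by
    by_contra! h
    have := mul_nonpos_of_nonneg_of_nonpos (show 0 ≤ c / (4 * K) by positivity) h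
    linarith
  have hn' : 0 < Fintype.card V := by exact_mod_cast hn
  induction m with
  | zero => exact ⟨∅, by simp, ⟨by simp, by simp, by simp⟩, by simp, by simp⟩
  | succ m ih =>
    push_cast at hm
    obtain ⟨T, hTm, hT, hTD, hTw⟩ := ih (by linarith)
    have hlen : ∀ l ∈ T, l.length = K := fun l hl => by
      obtain ⟨i, hi⟩ := hTD l hl
      exact hD i l hi
    set F' := F ∪ T.biUnion List.toFinset with hF'
    have hF'card : (F'.card : ℝ) + K ≤ c / (2 * K) * Fintype.card V := by
      have h1 : F'.card ≤ F.card + m * K := by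
        refine (Finset.card_union_le _ _).trans (Nat.add_le_add_left ?_ _)
        refine (Finset.card_biUnion_le_card_mul _ _ K fun l hl => ?_).trans
          (Nat.mul_le_mul_right K hTm)
        exact (List.toFinset_card_le l).trans (hlen l hl).le
      have h1' : (F'.card : ℝ) ≤ F.card + m * K := by exact_mod_cast h1
      have h2 : (m : ℝ) * K ≤ c / (8 * K) * Fintype.card V := by
        calc (m : ℝ) * K ≤ (β * Fintype.card V) * K := by gcongr; linarith
          _ = (β * K) * Fintype.card V := by ring
          _ ≤ _ := by gcongr
      have h3 : c / (2 * K) * Fintype.card V = 2 * (c / (8 * K) * Fintype.card V) +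
        c / (4 * K) * Fintype.card V := by field_simp; ring
      linarith
    have hgood := fun i => card_good_lists_ge F' hK hn' (hD i) (hcard i) hF'card
    set A := Finset.univ.biUnion fun i => (D i).filter fun l => l.Nodup ∧ ∀ x ∈ l, x ∉ F' with hA
    have hAlen : ∀ l ∈ A, l.length = K := fun l hl => by
      simp only [hA, Finset.mem_biUnion, Finset.mem_univ, true_and, Finset.mem_filter] at hl
      obtain ⟨i, hi, -⟩ := hl
      exact hD i l hi
    have hAne : A.Nonempty := by
      have : (0 : ℝ) < ((D i₀).filter fun l => l.Nodup ∧ ∀ x ∈ l, x ∉ F').card :=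
        lt_of_lt_of_le (by positivity) (hgood i₀)
      obtain ⟨l, hl⟩ := Finset.card_pos.1 (Nat.cast_pos.1 this)
      exact ⟨l, Finset.mem_biUnion.2 ⟨i₀, Finset.mem_univ _, hl⟩⟩
    set w : ι → ℝ := fun i => (1 / 2 : ℝ) ^ (T.filter (· ∈ D i)).card with hw
    have hwpos : ∀ i, 0 < w i := fun i => by positivity
    obtain ⟨l, hlA, hl⟩ : ∃ l ∈ A, c / 2 * ∑ i, w i ≤ ∑ i with l ∈ D i, w i := by
      refine Finset.exists_le_of_sum_le hAne ?_
      have h1 : ∑ l ∈ A, ∑ i with l ∈ D i, w i = ∑ i, (A.filter (· ∈ D i)).card * w i := by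
        simp only [Finset.sum_filter]
        rw [Finset.sum_comm]
        refine Finset.sum_congr rfl fun i _ => ?_
        rw [← Finset.sum_filter]
        simp
      rw [h1]
      simp only [Finset.sum_const, nsmul_eq_mul, Finset.mul_sum]
      refine Finset.sum_le_sum fun i _ => ?_
      have h2 : (A.card : ℝ) ≤ (Fintype.card V : ℝ) ^ K := by
        exact_mod_cast card_lists_le hAlen
      have h3 : (((D i).filter fun l => l.Nodup ∧ ∀ x ∈ l, x ∉ F').card : ℝ) ≤
          (A.filter (· ∈ D i)).card := by
        refine Nat.cast_le.2 (Finset.card_le_card fun l hl => ?_)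
        refine Finset.mem_filter.2 ⟨?_, (Finset.mem_filter.1 hl).1⟩
        exact Finset.mem_biUnion.2 ⟨i, Finset.mem_univ _, hl⟩
      calc (A.card : ℝ) * (c / 2 * w i) ≤ (Fintype.card V : ℝ) ^ K * (c / 2 * w i) := by
            have := hwpos i
            gcongr
        _ = (c / 2 * (Fintype.card V : ℝ) ^ K) * w i := by ring
        _ ≤ _ := by
            have := hwpos i
            gcongr
            exact (hgood i).trans h3
    simp only [hA, Finset.mem_biUnion, Finset.mem_univ, true_and, Finset.mem_filter] at hlA
    obtain ⟨i₁, hli₁, hlnodup, hlF'⟩ := hlA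
    have hlK := hD i₁ l hli₁
    have hlF : ∀ x ∈ l, x ∉ F := fun x hx hxF => hlF' x hx (Finset.mem_union_left _ hxF)
    have hlT' : ∀ l' ∈ T, ∀ x ∈ l, x ∉ l' := fun l' hl' x hx hxl' =>
      hlF' x hx (Finset.mem_union_right _ (Finset.mem_biUnion.2 ⟨l', hl', List.mem_toFinset.2 hxl'⟩))
    have hlT : l ∉ T := fun h => by
      match l, hlK with
      | [], h0 => simp at h0; omega
      | x :: l, _ => exact hlT' _ h x (by simp) (by simp)
    refine ⟨insert l T, ?_, ⟨?_, ?_, ?_⟩, ?_, ?_⟩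
    · rw [Finset.card_insert_of_notMem hlT]; omega
    · exact fun l' hl' => (Finset.mem_insert.1 hl').elim (fun h => h ▸ hlnodup) (hT.nodup l')
    · exact fun l' hl' => (Finset.mem_insert.1 hl').elim (fun h => h ▸ hlF) (hT.avoid l')
    · intro l₁ h₁ l₂ h₂ h12 x hx₁ hx₂
      rcases Finset.mem_insert.1 h₁ with e₁ | m₁ <;> rcases Finset.mem_insert.1 h₂ with e₂ | m₂
      · exact h12 (e₁.trans e₂.symm)
      · exact hlT' _ m₂ x (e₁ ▸ hx₁) hx₂
      · exact hlT' _ m₁ x (e₂ ▸ hx₂) hx₁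
      · exact hT.disjoint _ m₁ _ m₂ h12 x hx₁ hx₂
    · exact fun l' hl' => (Finset.mem_insert.1 hl').elim (fun h => ⟨i₁, h ▸ hli₁⟩) (hTD l')
    · have h1 : ∀ i, (1 / 2 : ℝ) ^ ((insert l T).filter (· ∈ D i)).card =
          w i - 1 / 2 * (if l ∈ D i then w i else 0) := by
        intro i
        rw [Finset.filter_insert]
        split_ifs with h
        · rw [Finset.card_insert_of_notMem (fun h' => hlT (Finset.mem_filter.1 h').1), pow_succ]
          ring
        · simp [hw]
      simp only [h1]
      rw [Finset.sum_sub_distrib, ← Finset.mul_sum, ← Finset.sum_filter]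
      calc _ ≤ (1 - c / 4) * ∑ i, w i := by linarith
        _ ≤ (1 - c / 4) * ((1 - c / 4) ^ m * Fintype.card ι) := by
            gcongr
            linarith
        _ = _ := by ring

/-- A random greedy selection finds a small disjoint family of lists meeting every `D i` often. -/
theorem exists_packing (c β : ℝ) (K : ℕ) (hc : 0 < c) (hc1 : c ≤ 1) (hβ : 0 < β) (hK : 1 ≤ K)
    (hβK : β * K ≤ c / (8 * K)) :
    ∃ n₀ : ℕ, ∀ (V : Type) [Fintype V], n₀ ≤ Fintype.card V →
      ∀ (ι : Type) [Fintype ι] (D : ι → Finset (List V)) (F : Finset V),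
      Fintype.card ι ≤ Fintype.card V ^ 2 → (∀ i, ∀ l ∈ D i, l.length = K) →
      (∀ i, c * (Fintype.card V : ℝ) ^ K ≤ (D i).card) →
      F.card ≤ c / (8 * K) * Fintype.card V →
      ∃ T : Finset (List V), T.card ≤ β * Fintype.card V ∧ IsPacking F T ∧
        (∀ l ∈ T, ∃ i, l ∈ D i) ∧
        ∀ i, c * β / 8 * Fintype.card V ≤ (T.filter (· ∈ D i)).card := by
  have hK' : (0 : ℝ) < K := by exact_mod_cast hK
  refine ⟨⌈(K : ℝ) / (c / (4 * K))⌉₊ + ⌈18 * (8 / (c * β)) ^ 3⌉₊ + 1, ?_⟩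
  intro V _ hV ι _ D F hι hD hcard hF
  have hV' : ((⌈(K : ℝ) / (c / (4 * K))⌉₊ + ⌈18 * (8 / (c * β)) ^ 3⌉₊ + 1 : ℕ) : ℝ) ≤
    Fintype.card V := by exact_mod_cast hV
  push_cast at hV'
  have hV1 : (K : ℝ) / (c / (4 * K)) ≤ Fintype.card V := by
    have := Nat.le_ceil ((K : ℝ) / (c / (4 * K)))
    have : (0 : ℝ) ≤ ⌈18 * (8 / (c * β)) ^ 3⌉₊ := by positivity
    linarith
  have hV2 : 18 * (8 / (c * β)) ^ 3 < Fintype.card V := by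
    have := Nat.le_ceil (18 * (8 / (c * β)) ^ 3)
    have : (0 : ℝ) ≤ ⌈(K : ℝ) / (c / (4 * K))⌉₊ := by positivity
    linarith
  set n : ℝ := (Fintype.card V : ℝ) with hn
  have hn0 : 0 < n := lt_of_le_of_lt (by positivity) hV2
  obtain ⟨T, hTm, hT, hTD, hTw⟩ := exists_packing_weight hc hc1 hK hβK
    (by rwa [div_le_iff₀' (by positivity)] at hV1) hD hcard hF ⌊β * n⌋₊
    (Nat.floor_le (by positivity))
  refine ⟨T, (Nat.cast_le.2 hTm).trans (Nat.floor_le (by positivity)), hT, hTD, fun i => ?_⟩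
  by_contra! hlt
  have h1 : (1 / 2 : ℝ) ^ (T.filter (· ∈ D i)).card ≤ (1 - c / 4) ^ ⌊β * n⌋₊ * n ^ 2 := by
    refine (Finset.single_le_sum (f := fun i => (1 / 2 : ℝ) ^ (T.filter (· ∈ D i)).card)
      (fun i _ => by positivity) (Finset.mem_univ i)).trans (hTw.trans ?_)
    have : (Fintype.card ι : ℝ) ≤ n ^ 2 := by
      rw [hn]
      exact_mod_cast hι
    have : 0 ≤ 1 - c / 4 := by linarith
    gcongr
  have h2 : Real.exp (-(c * β / 8 * n)) ≤ (1 / 2 : ℝ) ^ (T.filter (· ∈ D i)).card := by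
    have he : Real.exp (-1) ≤ 1 / 2 := by
      rw [Real.exp_neg, one_div]
      gcongr
      linarith [Real.add_one_le_exp (1 : ℝ)]
    calc Real.exp (-(c * β / 8 * n)) ≤ Real.exp ((T.filter (· ∈ D i)).card * (-1)) := by
          gcongr; linarith
      _ = Real.exp (-1) ^ (T.filter (· ∈ D i)).card := by rw [Real.exp_nat_mul]
      _ ≤ _ := by gcongr
  have h3 : (1 - c / 4) ^ ⌊β * n⌋₊ ≤ Real.exp (1 - c * β / 4 * n) := by
    have he : 1 - c / 4 ≤ Real.exp (-(c / 4)) := by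
      linarith [Real.add_one_le_exp (-(c / 4))]
    calc (1 - c / 4) ^ ⌊β * n⌋₊ ≤ Real.exp (-(c / 4)) ^ ⌊β * n⌋₊ := by
          have : 0 ≤ 1 - c / 4 := by linarith
          gcongr
      _ = Real.exp (⌊β * n⌋₊ * (-(c / 4))) := by rw [Real.exp_nat_mul]
      _ ≤ _ := by
          gcongr
          have := Nat.lt_floor_add_one (β * n)
          nlinarith
  have h4 : (c * β / 8 * n) ^ 3 / 6 ≤ Real.exp (c * β / 8 * n) := by
    have := Real.pow_div_factorial_le_exp (c * β / 8 * n) (by positivity) 3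
    simpa [Nat.factorial] using this
  have h5 : Real.exp (c * β / 8 * n) ≤ Real.exp 1 * n ^ 2 := by
    have h6 : Real.exp (-(c * β / 8 * n)) ≤ Real.exp (1 - c * β / 4 * n) * n ^ 2 :=
      h2.trans (h1.trans (by gcongr))
    have h7 : Real.exp (c * β / 8 * n) =
        Real.exp (c * β / 4 * n) * Real.exp (-(c * β / 8 * n)) := by
      rw [← Real.exp_add]; ring_nf
    have h8 : Real.exp 1 = Real.exp (c * β / 4 * n) * Real.exp (1 - c * β / 4 * n) := by
      rw [← Real.exp_add]; ring_nf
    rw [h7, h8, mul_assoc]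
    gcongr
  have h9 : Real.exp 1 < 3 := by linarith [Real.exp_one_lt_d9]
  have h10 : 18 < (c * β / 8) ^ 3 * n := by
    have : (8 / (c * β)) ^ 3 * (c * β / 8) ^ 3 = 1 := by
      rw [← mul_pow]; field_simp
    nlinarith [show 0 < (c * β / 8) ^ 3 by positivity]
  have h11 : 18 * n ^ 2 < (c * β / 8) ^ 3 * n * n ^ 2 := by gcongr
  have h12 : Real.exp 1 * n ^ 2 < 3 * n ^ 2 := by gcongr
  nlinarith

end Selection

section Ore

open scoped Classical

variable {V : Type*} {G : V → V → Prop} {α ν : ℝ}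

/-- The number of edges from `A` to `B`, as a real number. -/
noncomputable def edgeCount (G : V → V → Prop) (A B : Finset V) : ℝ :=
  ∑ x ∈ A, ∑ y ∈ B, if G x y then 1 else 0

theorem edgeCount_union_left {A B : Finset V} (C : Finset V) (h : Disjoint A B) :
    edgeCount G (A ∪ B) C = edgeCount G A C + edgeCount G B C :=
  Finset.sum_union h

theorem edgeCount_union_right (C : Finset V) {A B : Finset V} (h : Disjoint A B) :
    edgeCount G C (A ∪ B) = edgeCount G C A + edgeCount G C B := by
  simp only [edgeCount, Finset.sum_union h, Finset.sum_add_distrib]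

theorem edgeCount_flip (A B : Finset V) :
    edgeCount (fun x y => G y x) A B = edgeCount G B A :=
  Finset.sum_comm

theorem edgeCount_le (A B : Finset V) : edgeCount G A B ≤ A.card * B.card := by
  calc edgeCount G A B ≤ ∑ x ∈ A, ∑ y ∈ B, (1 : ℝ) :=
        Finset.sum_le_sum fun _ _ => Finset.sum_le_sum fun _ _ => by split_ifs <;> norm_num
    _ = _ := by simp

theorem edgeCount_mono_left {A B : Finset V} (C : Finset V) (h : A ⊆ B) :
    edgeCount G A C ≤ edgeCount G B C :=
  Finset.sum_le_sum_of_subset_of_nonneg h fun _ _ _ =>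
    Finset.sum_nonneg fun _ _ => by split_ifs <;> norm_num

theorem edgeCount_mono_right (C : Finset V) {A B : Finset V} (h : A ⊆ B) :
    edgeCount G C A ≤ edgeCount G C B :=
  Finset.sum_le_sum fun _ _ => Finset.sum_le_sum_of_subset_of_nonneg h fun _ _ _ => by
    split_ifs <;> norm_num

theorem edgeCount_eq_sum_out (A B : Finset V) :
    edgeCount G A B = ∑ x ∈ A, ((B.filter fun y => G x y).card : ℝ) := by
  simp [edgeCount]

theorem edgeCount_eq_sum_in (A B : Finset V) :
    edgeCount G A B = ∑ y ∈ B, ((A.filter fun x => G x y).card : ℝ) := by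
  rw [edgeCount, Finset.sum_comm]
  simp

theorem edgeCount_add_swap_le (hG : IsOriented G) (A B : Finset V) :
    edgeCount G A B + edgeCount G B A ≤ A.card * B.card := by
  rw [← edgeCount_flip A B]
  simp only [edgeCount, ← Finset.sum_add_distrib]
  calc _ ≤ ∑ x ∈ A, ∑ y ∈ B, (1 : ℝ) :=
        Finset.sum_le_sum fun x _ => Finset.sum_le_sum fun y _ => by
          have := hG x y
          split_ifs <;> simp_all
    _ = _ := by simp

theorem edgeCount_self_le (hG : IsOriented G) (A : Finset V) :
    edgeCount G A A ≤ (A.card : ℝ) ^ 2 / 2 := by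
  have := edgeCount_add_swap_le hG A A
  linarith

theorem IsOriented.flip (hG : IsOriented G) : IsOriented fun x y => G y x :=
  fun x y h h' => hG x y h' h

variable [Fintype V]

theorem le_of_card_bound {n c α ν : ℝ} (hn0 : 0 < n) (hα : 0 < α) (hα' : α ≤ 1 / 32) (hν0 : 0 ≤ ν)
    (hνα : ν ≤ α / 288) (hn : 1 ≤ ν * n) (hc : n / 8 ≤ c)
    (h : (3 / 4 + α) * n * (c * c - ν * n ^ 2 - n) ≤ c * (2 * (ν * n ^ 2) + c * (n - c))) :
    c ≤ (1 / 4 - α / 2) * n := by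
  have hc0 : 0 < c := by linarith
  have hnc : n ≤ 8 * c := by linarith
  have h1 : n ≤ ν * n * n := by nlinarith
  have h2 : (3 / 4 + α) * n * (ν * n ^ 2 + n) ≤ 128 * (ν * n) * c ^ 2 := by
    calc (3 / 4 + α) * n * (ν * n ^ 2 + n) ≤ 1 * n * (2 * (ν * n) * n) := by
          gcongr <;> linarith
      _ = 2 * (ν * n) * n ^ 2 := by ring
      _ ≤ 2 * (ν * n) * (8 * c) ^ 2 := by gcongr
      _ = _ := by ring
  have h3 : c * (2 * (ν * n ^ 2)) ≤ 16 * (ν * n) * c ^ 2 := by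
    calc c * (2 * (ν * n ^ 2)) = 2 * (ν * n) * c * n := by ring
      _ ≤ 2 * (ν * n) * c * (8 * c) := by gcongr
      _ = _ := by ring
  have h4 : (3 / 4 + α) * n * c ^ 2 ≤ (144 * (ν * n) + (n - c)) * c ^ 2 := by linarith
  have h5 := le_of_mul_le_mul_right h4 (by positivity)
  have h6 : ν * n ≤ α / 288 * n := by gcongr
  linarith

theorem not_of_partition_bounds {n a b c d x y α ν ε : ℝ} (hn0 : 0 < n) (hα : 0 < α) (hα' : α ≤ 1 / 32)
    (hν : ν = α ^ 3 / 300) (hε : ε = α / 2) (hn : 1 ≤ ν * n) (hx : ε * n ≤ x) (hy : ε * n ≤ y)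
    (h : (3 / 4 + α) * n * (x * y - ν * n ^ 2 - n) ≤
      y * (x * (a / 2 + b + ε * n / 2) + ν * n ^ 2) +
        x * (y * (d / 2 + b + ε * n / 2) + ν * n ^ 2))
    (hbc : b ≤ c + ν * n) (hc : c ≤ (1 / 4 - ε) * n) (htot : a + b + c + d = n) : False := by
  have hν0 : 0 < ν := by rw [hν]; positivity
  have hε0 : 0 < ε := by rw [hε]; positivity
  have hx0 : 0 < x := lt_of_lt_of_le (by positivity) hx
  have hy0 : 0 < y := lt_of_lt_of_le (by positivity) hy
  have hxn : n ≤ x / ε := by rw [le_div_iff₀ hε0]; linarith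
  have hyn : n ≤ y / ε := by rw [le_div_iff₀ hε0]; linarith
  have h2 : (3 / 4 + α) * n * (ν * n ^ 2 + n) ≤ 2 * (ν * n) / ε ^ 2 * (x * y) := by
    have h3 : n ≤ ν * n * n := by nlinarith
    calc (3 / 4 + α) * n * (ν * n ^ 2 + n) ≤ 1 * n * (2 * (ν * n) * n) := by
          gcongr <;> linarith
      _ = 2 * (ν * n) * (n * n) := by ring
      _ ≤ 2 * (ν * n) * (x / ε * (y / ε)) := by gcongr
      _ = _ := by field_simp
  have h3 : y * (ν * n ^ 2) + x * (ν * n ^ 2) ≤ 2 * (ν * n) / ε * (x * y) := by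
    have h4 : y * n ≤ y * (x / ε) := by gcongr
    have h5 : x * n ≤ x * (y / ε) := by gcongr
    calc y * (ν * n ^ 2) + x * (ν * n ^ 2) = ν * n * (y * n + x * n) := by ring
      _ ≤ ν * n * (y * (x / ε) + x * (y / ε)) := by gcongr
      _ = _ := by field_simp; ring
  have h4 : (3 / 4 + α) * n * (x * y) ≤
      ((a + d) / 2 + 2 * b + ε * n + 2 * (ν * n) / ε + 2 * (ν * n) / ε ^ 2) * (x * y) := by
    linarith
  have h5 := le_of_mul_le_mul_right h4 (by positivity)
  have h8 : 2 * (ν * n) / ε ^ 2 = 2 / 75 * (α * n) := by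
    rw [hν, hε]; field_simp; norm_num
  have h7 : 2 * (ν * n) / ε ≤ 2 * (ν * n) / ε ^ 2 := by
    have h9 : ε ^ 2 ≤ ε := by nlinarith
    gcongr
  have h10 : ν * n ≤ 1 / 300 * (α * n) := by
    have h11 : ν ≤ 1 / 300 * α := by
      have : α ^ 3 ≤ α := by
        simpa using pow_le_pow_of_le_one hα.le (by linarith) (show 1 ≤ 3 by norm_num)
      linarith
    nlinarith
  have h12 : 0 < α * n := by positivity
  have h13 : ε * n = α / 2 * n := by rw [hε]
  linarith

/-- The Ore-type degree condition. -/
def OreCondition (G : V → V → Prop) (α : ℝ) : Prop :=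
  ∀ x y, x ≠ y → ¬ G x y → (3 / 4 + α) * Fintype.card V ≤
    ((Finset.univ.filter fun z => G x z).card : ℝ) + (Finset.univ.filter fun z => G z y).card

theorem OreCondition.flip (h : OreCondition G α) : OreCondition (fun x y => G y x) α :=
  fun x y hxy hG => (h y x hxy.symm hG).trans (add_comm _ _).le

theorem OreCondition.edgeCount_ge (h : OreCondition G α) (hα : 0 ≤ α) (X Y : Finset V) :
    (3 / 4 + α) * Fintype.card V * (X.card * Y.card - edgeCount G X Y - Fintype.card V) ≤
      Y.card * edgeCount G X Finset.univ + X.card * edgeCount G Finset.univ Y := by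
  set n : ℝ := (Fintype.card V : ℝ) with hn
  have hn0 : 0 ≤ n := by positivity
  have hc : 0 ≤ (3 / 4 + α) * n := by positivity
  have h1 : (Y.card : ℝ) * edgeCount G X Finset.univ + X.card * edgeCount G Finset.univ Y =
      ∑ x ∈ X, ∑ y ∈ Y, (((Finset.univ.filter fun z => G x z).card : ℝ) +
        (Finset.univ.filter fun z => G z y).card) := by
    rw [edgeCount_eq_sum_out, edgeCount_eq_sum_in]
    simp [Finset.sum_add_distrib, Finset.mul_sum]
  have h2 : (∑ x ∈ X, ∑ y ∈ Y, if x = y then (1 : ℝ) else 0) ≤ n := by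
    calc _ ≤ ∑ x ∈ X, (1 : ℝ) := Finset.sum_le_sum fun x _ => by
          rw [Finset.sum_ite_eq]; split_ifs <;> norm_num
      _ = X.card := by simp
      _ ≤ n := by rw [hn]; exact_mod_cast Finset.card_le_univ X
  have h3 : (3 / 4 + α) * n * (X.card * Y.card - edgeCount G X Y -
      ∑ x ∈ X, ∑ y ∈ Y, if x = y then (1 : ℝ) else 0) =
      ∑ x ∈ X, ∑ y ∈ Y, (3 / 4 + α) * n *
        (1 - (if G x y then 1 else 0) - if x = y then (1 : ℝ) else 0) := by
    simp only [← Finset.mul_sum, Finset.sum_sub_distrib]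
    simp [edgeCount]
  rw [h1]
  refine le_trans (mul_le_mul_of_nonneg_left (by linarith) hc) (h3.le.trans ?_)
  refine Finset.sum_le_sum fun x _ => Finset.sum_le_sum fun y _ => ?_
  have hpos : (0 : ℝ) ≤ ((Finset.univ.filter fun z => G x z).card : ℝ) +
        (Finset.univ.filter fun z => G z y).card := by positivity
  by_cases hxy : x = y
  · refine le_trans (mul_nonpos_of_nonneg_of_nonpos hc ?_) hpos
    rw [if_pos hxy]
    split_ifs <;> norm_num
  · by_cases hGxy : G x y
    · simpa [hGxy, hxy] using hpos
    · simpa [hGxy, hxy] using h x y hxy hGxy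

theorem OreCondition.outdegree_ge (h : OreCondition G α) (hG : IsOriented G) (hα : 0 ≤ α)
    (hn : 16 ≤ Fintype.card V) (x : V) :
    (Fintype.card V : ℝ) / 8 ≤ (Finset.univ.filter fun y => G x y).card := by
  set N := Finset.univ.filter fun y => G x y
  set n : ℝ := (Fintype.card V : ℝ) with hn_def
  have hn' : 16 ≤ n := by rw [hn_def]; exact_mod_cast hn
  by_contra! hlt
  set Y := (insert x N)ᶜ with hY
  have hYcard : n - N.card - 1 ≤ Y.card := by
    have h1 : Y.card + (insert x N).card = Fintype.card V := Finset.card_compl_add_card _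
    have h2 := Finset.card_insert_le x N
    have h1' : (Y.card : ℝ) + (insert x N).card = n := by rw [hn_def]; exact_mod_cast h1
    have h2' : ((insert x N).card : ℝ) ≤ N.card + 1 := by exact_mod_cast h2
    linarith
  have h1 : (Y.card : ℝ) * (3 / 4 * n - N.card) ≤ n ^ 2 / 2 := by
    calc (Y.card : ℝ) * (3 / 4 * n - N.card) = ∑ y ∈ Y, (3 / 4 * n - N.card) := by
          rw [Finset.sum_const, nsmul_eq_mul]
      _ ≤ ∑ y ∈ Y, ((Finset.univ.filter fun z => G z y).card : ℝ) :=
        Finset.sum_le_sum fun y hy => by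
          simp only [hY, Finset.mem_compl, Finset.mem_insert, not_or] at hy
          have := h x y (Ne.symm hy.1) fun hxy => hy.2 (by simpa [N] using hxy)
          have : 0 ≤ α * n := by positivity
          linarith
      _ = edgeCount G Finset.univ Y := (edgeCount_eq_sum_in _ _).symm
      _ ≤ edgeCount G Finset.univ Finset.univ := edgeCount_mono_right _ (Finset.subset_univ _)
      _ ≤ _ := by
        have := edgeCount_self_le hG Finset.univ
        rwa [Finset.card_univ] at this
  have h2 : (n - N.card - 1) * (3 / 4 * n - N.card) ≤ n ^ 2 / 2 :=
    le_trans (mul_le_mul_of_nonneg_right hYcard (by linarith)) h1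
  have h3 : (7 / 8 * n - 1) * (5 / 8 * n) ≤ (n - N.card - 1) * (3 / 4 * n - N.card) := by
    apply mul_le_mul <;> linarith
  nlinarith

theorem OreCondition.card_le_of_sparse (h : OreCondition G α) (hG : IsOriented G) (hα : 0 < α)
    (hα' : α ≤ 1 / 32) (hν0 : 0 ≤ ν) (hνα : ν ≤ α / 288) (hn : 1 ≤ ν * Fintype.card V)
    {C : Finset V} (h2 : edgeCount G C C ≤ ν * (Fintype.card V : ℝ) ^ 2) :
    (C.card : ℝ) ≤ (1 / 4 - α / 2) * Fintype.card V := by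
  set n : ℝ := (Fintype.card V : ℝ) with hn_def
  have hn0 : 0 < n := by
    by_contra! h0
    have := mul_nonpos_of_nonneg_of_nonpos hν0 h0
    linarith
  by_contra! hc
  have hc8 : n / 8 ≤ C.card := by nlinarith
  have h1 := h.edgeCount_ge hα.le C C
  have h3 : edgeCount G C Finset.univ + edgeCount G Finset.univ C ≤
      2 * (ν * n ^ 2) + C.card * (n - C.card) := by
    rw [show (Finset.univ : Finset V) = C ∪ Cᶜ from (Finset.union_compl C).symm,
      edgeCount_union_left _ disjoint_compl_right, edgeCount_union_right _ disjoint_compl_right]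
    have h4 := edgeCount_add_swap_le hG C Cᶜ
    have h5 : (C.card : ℝ) + Cᶜ.card = n := by
      rw [hn_def]
      exact_mod_cast Finset.card_add_card_compl C
    rw [← h5, add_sub_cancel_left]
    rw [← h5] at h2
    linarith
  set c : ℝ := (C.card : ℝ) with hc_def
  have h5 : (3 / 4 + α) * n * (c * c - ν * n ^ 2 - n) ≤
      c * (2 * (ν * n ^ 2) + c * (n - c)) := by
    calc _ ≤ (3 / 4 + α) * n * (c * c - edgeCount G C C - n) := by gcongr
      _ ≤ c * (edgeCount G C Finset.univ + edgeCount G Finset.univ C) := by linarith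
      _ ≤ _ := by gcongr
  exact (le_of_card_bound hn0 hα hα' hν0 hνα hn hc8 h5).not_gt hc

theorem OreCondition.card_robust_ge (h : OreCondition G α) (hG : IsOriented G) (hα : 0 < α)
    (hα' : α ≤ 1 / 32) (hν : ν = α ^ 3 / 300) (hn : 1 ≤ ν * Fintype.card V) (S : Finset V)
    (hS : (Fintype.card V : ℝ) / 16 ≤ S.card) (hS' : (S.card : ℝ) ≤ 15 / 16 * Fintype.card V) :
    S.card + ν * Fintype.card V ≤ ((Finset.univ.filter fun y =>
      ν * Fintype.card V ≤ ((S.filter fun x => G x y).card : ℝ)).card : ℝ) := by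
  set n : ℝ := (Fintype.card V : ℝ) with hn_def
  set R := Finset.univ.filter fun y => ν * n ≤ ((S.filter fun x => G x y).card : ℝ) with hR
  by_contra! hlt
  have hν0 : 0 < ν := by rw [hν]; positivity
  have hn0 : 0 < n := by
    by_contra! h0
    have := mul_nonpos_of_nonneg_of_nonpos hν0.le h0
    linarith
  have hνα : ν ≤ α / 288 := by rw [hν]; nlinarith [mul_pos hα hα]
  have hSQ : edgeCount G S Rᶜ ≤ ν * n ^ 2 := by
    rw [edgeCount_eq_sum_in]
    calc ∑ y ∈ Rᶜ, ((S.filter fun x => G x y).card : ℝ) ≤ ∑ y ∈ Rᶜ, ν * n :=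
          Finset.sum_le_sum fun y hy => by
            simp only [hR, Finset.mem_compl, Finset.mem_filter, Finset.mem_univ, true_and,
              not_le] at hy
            exact hy.le
      _ = Rᶜ.card * (ν * n) := by simp
      _ ≤ n * (ν * n) := by
          gcongr
          rw [hn_def]
          exact_mod_cast Finset.card_le_univ _
      _ = _ := by ring
  set A := S ∩ R with hA
  set B := R \ S with hB
  set C := S \ R with hC
  set D := (S ∪ R)ᶜ with hD
  have hSAC : (A.card : ℝ) + C.card = S.card := by
    exact_mod_cast Finset.card_inter_add_card_sdiff S R
  have hRAB : (A.card : ℝ) + B.card = R.card := by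
    rw [hA, Finset.inter_comm]
    exact_mod_cast Finset.card_inter_add_card_sdiff R S
  have htot : (A.card : ℝ) + B.card + C.card + D.card = n := by
    have h1 : (D.card : ℝ) + (S ∪ R).card = n := by
      rw [hn_def]
      exact_mod_cast Finset.card_compl_add_card (S ∪ R)
    have h2 : ((S ∪ R).card : ℝ) + A.card = S.card + R.card := by
      exact_mod_cast Finset.card_union_add_card_inter S R
    linarith
  have hAS : A ⊆ S := Finset.inter_subset_left
  have hCS : C ⊆ S := Finset.sdiff_subset
  have hCQ : C ⊆ Rᶜ := fun x hx => by
    simp only [hC, Finset.mem_sdiff, Finset.mem_compl] at hx ⊢; exact hx.2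
  have hDQ : D ⊆ Rᶜ := fun x hx => by
    simp only [hD, Finset.mem_union, Finset.mem_compl] at hx ⊢; tauto
  have hsmall : ∀ X Y : Finset V, X ⊆ S → Y ⊆ Rᶜ → edgeCount G X Y ≤ ν * n ^ 2 :=
    fun X Y hX hY => (edgeCount_mono_left _ hX).trans ((edgeCount_mono_right _ hY).trans hSQ)
  have hleft : ∀ X : Finset V, X ⊆ S → edgeCount G X Finset.univ ≤
      edgeCount G X A + edgeCount G X B + ν * n ^ 2 := by
    intro X hX
    have h1 : (Finset.univ : Finset V) = (A ∪ B) ∪ Rᶜ := by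
      ext x; by_cases h : x ∈ S <;> by_cases h' : x ∈ R <;> simp [hA, hB, h, h']
    have h2 : Disjoint (A ∪ B) Rᶜ := by
      rw [Finset.disjoint_left]
      intro x
      simp only [hA, hB, Finset.mem_union, Finset.mem_inter, Finset.mem_sdiff, Finset.mem_compl]
      tauto
    have h3 : Disjoint A B := by
      rw [Finset.disjoint_left]
      intro x
      simp only [hA, hB, Finset.mem_inter, Finset.mem_sdiff]
      tauto
    rw [h1, edgeCount_union_right _ h2, edgeCount_union_right _ h3]
    linarith [hsmall X Rᶜ hX subset_rfl]
  have hright : ∀ Y : Finset V, Y ⊆ Rᶜ → edgeCount G Finset.univ Y ≤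
      edgeCount G D Y + edgeCount G B Y + ν * n ^ 2 := by
    intro Y hY
    have h1 : (Finset.univ : Finset V) = (D ∪ B) ∪ S := by
      ext x; by_cases h : x ∈ S <;> by_cases h' : x ∈ R <;> simp [hD, hB, h, h']
    have h2 : Disjoint (D ∪ B) S := by
      rw [Finset.disjoint_left]
      intro x
      simp only [hB, hD, Finset.mem_union, Finset.mem_sdiff, Finset.mem_compl]
      tauto
    have h3 : Disjoint D B := by
      rw [Finset.disjoint_left]
      intro x
      simp only [hB, hD, Finset.mem_union, Finset.mem_sdiff, Finset.mem_compl]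
      tauto
    rw [h1, edgeCount_union_left _ h2, edgeCount_union_left _ h3]
    linarith [hsmall S Y subset_rfl hY]
  have ha0 : (0 : ℝ) ≤ A.card := by positivity
  have hb0 : (0 : ℝ) ≤ B.card := by positivity
  have hc0 : (0 : ℝ) ≤ C.card := by positivity
  have hd0 : (0 : ℝ) ≤ D.card := by positivity
  have hbc : (B.card : ℝ) ≤ C.card + ν * n := by linarith
  have hc : (C.card : ℝ) ≤ (1 / 4 - α / 2) * n :=
    h.card_le_of_sparse hG hα hα' hν0.le hνα hn (hsmall C C hCS hCQ)
  set ε := α / 2 with hε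
  have hε0 : 0 < ε := by positivity
  obtain ⟨X, hXS, hXcard, hX⟩ : ∃ X ⊆ S, ε * n ≤ X.card ∧
      edgeCount G X Finset.univ ≤ X.card * (A.card / 2 + B.card + ε * n / 2) + ν * n ^ 2 := by
    by_cases ha : ε * n ≤ A.card
    · refine ⟨A, hAS, ha, (hleft A hAS).trans ?_⟩
      have h1 := edgeCount_self_le hG A
      have h2 := edgeCount_le (G := G) A B
      have h3 : 0 ≤ (A.card : ℝ) * (ε * n / 2) := by positivity
      linarith
    · refine ⟨C, hCS, ?_, (hleft C hCS).trans ?_⟩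
      · nlinarith
      · have h1 := edgeCount_le (G := G) C A
        have h2 := edgeCount_le (G := G) C B
        have h3 : (C.card : ℝ) * A.card ≤ C.card * (A.card / 2 + ε * n / 2) := by
          gcongr; linarith
        linarith
  obtain ⟨Y, hYQ, hYcard, hY⟩ : ∃ Y ⊆ Rᶜ, ε * n ≤ Y.card ∧
      edgeCount G Finset.univ Y ≤ Y.card * (D.card / 2 + B.card + ε * n / 2) + ν * n ^ 2 := by
    by_cases hd : ε * n ≤ D.card
    · refine ⟨D, hDQ, hd, (hright D hDQ).trans ?_⟩
      have h1 := edgeCount_self_le hG D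
      have h2 := edgeCount_le (G := G) B D
      have h3 : 0 ≤ (D.card : ℝ) * (ε * n / 2) := by positivity
      linarith
    · refine ⟨C, hCQ, ?_, (hright C hCQ).trans ?_⟩
      · nlinarith
      · have h1 := edgeCount_le (G := G) D C
        have h2 := edgeCount_le (G := G) B C
        have h3 : (D.card : ℝ) * C.card ≤ (D.card / 2 + ε * n / 2) * C.card := by
          gcongr; linarith
        linarith
  have hmain := h.edgeCount_ge hα.le X Y
  have hXY := hsmall X Y hXS hYQ
  refine not_of_partition_bounds hn0 hα hα' hν hε hn hXcard hYcard ?_ hbc hc htot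
  calc _ ≤ (3 / 4 + α) * n * (X.card * Y.card - edgeCount G X Y - n) := by gcongr
    _ ≤ _ := hmain
    _ ≤ _ := by gcongr

/-- Oriented graphs satisfying the Ore-type degree condition are robust expanders. -/
theorem OreCondition.isExpander (h : OreCondition G α) (hG : IsOriented G) (hα : 0 < α)
    (hα' : α ≤ 1 / 32) (hν : ν = α ^ 3 / 300) (hn : 1 ≤ ν * Fintype.card V) :
    IsExpander G ν := by
  have hν0 : 0 < ν := by rw [hν]; positivity
  have hν16 : ν ≤ 1 / 16 := by
    rw [hν]
    have : α ^ 3 ≤ 1 := pow_le_one₀ hα.le (by linarith)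
    linarith
  have hn16 : 16 ≤ Fintype.card V := by
    have : (16 : ℝ) ≤ Fintype.card V := by
      have h0 : (0 : ℝ) ≤ Fintype.card V := by positivity
      nlinarith
    exact_mod_cast this
  have hdeg : ∀ (s : Bool) (x : V), (Fintype.card V : ℝ) / 8 ≤
      (Finset.univ.filter fun y => dirEdge G s x y).card := by
    rintro (_ | _) x
    · simpa [dirEdge] using h.flip.outdegree_ge hG.flip hα.le hn16 x
    · simpa [dirEdge] using h.outdegree_ge hG hα.le hn16 x
  refine ⟨hdeg, fun s S hS => ?_⟩
  by_cases hS' : (S.card : ℝ) ≤ 15 / 16 * Fintype.card V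
  · rw [min_eq_left hS']
    cases s
    · simpa [dirEdge] using h.flip.card_robust_ge hG.flip hα hα' hν hn S hS hS'
    · simpa [dirEdge] using h.card_robust_ge hG hα hα' hν hn S hS hS'
  · rw [Finset.filter_true_of_mem]
    · have h0 : (0 : ℝ) ≤ Fintype.card V := by positivity
      rw [Finset.card_univ, min_eq_right (by linarith)]
      nlinarith
    · intro y _
      have h1 := hdeg (!s) y
      simp only [dirEdge_not] at h1
      set N := Finset.univ.filter fun x => dirEdge G s x y
      have h2 : S.filter (fun x => dirEdge G s x y) = S ∩ N := by ext; simp [N]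
      rw [h2]
      have h3 : ((S ∩ N).card : ℝ) + (S ∪ N).card = S.card + N.card := by
        exact_mod_cast Finset.card_inter_add_card_union S N
      have h4 : ((S ∪ N).card : ℝ) ≤ Fintype.card V := by
        exact_mod_cast Finset.card_le_univ _
      have h5 : ν * (Fintype.card V : ℝ) ≤ 1 / 16 * Fintype.card V := by gcongr
      push Not at hS'
      linarith

end Ore

section PathCover

open scoped Classical

variable {V : Type*}

/-- A partition of the vertex set into vertex sets of directed paths of `G`. -/
structure IsPathCover (G : V → V → Prop) (T : Finset (Finset V)) : Prop where
  path : ∀ P ∈ T, ∃ a b, DiPath G a b P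
  disjoint : ∀ P ∈ T, ∀ Q ∈ T, P ≠ Q → Disjoint P Q
  cover : ∀ x, ∃ P ∈ T, x ∈ P

theorem IsPathCover.mono {G G' : V → V → Prop} {T : Finset (Finset V)} (h : IsPathCover G T)
    (hG : ∀ x y, G x y → G' x y) : IsPathCover G' T :=
  ⟨fun P hP => let ⟨a, b, hab⟩ := h.path P hP; ⟨a, b, hab.mono hG⟩, h.disjoint, h.cover⟩

variable [Fintype V]

/-- An acyclic edge set with in- and outdegrees at most one is a union of directed paths. -/
theorem exists_isPathCover_of_matching (f : V → ℕ) (M : Finset (V × V))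
    (hf : ∀ e ∈ M, f e.1 < f e.2) (h1 : Set.InjOn Prod.fst (M : Set (V × V)))
    (h2 : Set.InjOn Prod.snd (M : Set (V × V))) :
    ∃ T, IsPathCover (fun x y => (x, y) ∈ M) T ∧ T.card + M.card = Fintype.card V := by
  induction M using Finset.induction_on with
  | empty =>
    refine ⟨Finset.univ.image fun x => {x}, ⟨?_, ?_, ?_⟩, ?_⟩
    · simp only [Finset.mem_image, Finset.mem_univ, true_and]
      rintro P ⟨x, rfl⟩
      exact ⟨x, x, .single x⟩
    · simp only [Finset.mem_image, Finset.mem_univ, true_and]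
      rintro P ⟨x, rfl⟩ Q ⟨y, rfl⟩ hxy
      rw [Finset.disjoint_singleton]
      rintro rfl
      exact hxy rfl
    · intro x
      exact ⟨{x}, by simp⟩
    · rw [Finset.card_image_of_injective _ Finset.singleton_injective]
      simp
  | insert e M he ih =>
    obtain ⟨x, y⟩ := e
    obtain ⟨T, hT, hcard⟩ := ih (fun e' he' => hf e' (Finset.mem_insert_of_mem he'))
      (h1.mono (by simp)) (h2.mono (by simp))
    have hxy : f x < f y := hf (x, y) (Finset.mem_insert_self _ _)
    obtain ⟨P, hP, hxP⟩ := hT.cover x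
    obtain ⟨Q, hQ, hyQ⟩ := hT.cover y
    obtain ⟨a, b, hab⟩ := hT.path P hP
    obtain ⟨c, d, hcd⟩ := hT.path Q hQ
    obtain rfl : x = b := by
      by_contra hxb
      obtain ⟨z, hz⟩ := hab.exists_succ hxP hxb
      have := h1 (Finset.mem_coe.2 (Finset.mem_insert_self _ _))
        (Finset.mem_coe.2 (Finset.mem_insert_of_mem hz)) rfl
      exact he (this ▸ hz)
    obtain rfl : y = c := by
      by_contra hyc
      obtain ⟨z, hz⟩ := hcd.exists_pred hyQ hyc
      have := h2 (Finset.mem_coe.2 (Finset.mem_insert_self _ _))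
        (Finset.mem_coe.2 (Finset.mem_insert_of_mem hz)) rfl
      exact he (this ▸ hz)
    have hrank : ∀ u v, (u, v) ∈ M → f u < f v := fun u v huv =>
      hf _ (Finset.mem_insert_of_mem huv)
    have hPQ : P ≠ Q := by
      rintro rfl
      by_cases hya : y = a
      · subst hya
        exact absurd (hab.rank_le hrank) hxy.not_ge
      · obtain ⟨z, hz⟩ := hab.exists_pred hyQ hya
        have := h2 (Finset.mem_coe.2 (Finset.mem_insert_self _ _))
          (Finset.mem_coe.2 (Finset.mem_insert_of_mem hz)) rfl
        exact he (this ▸ hz)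
    have hdisj := hT.disjoint P hP Q hQ hPQ
    have hnew : ∀ R ∈ (T.erase P).erase Q, Disjoint (P ∪ Q) R := by
      intro R hR
      simp only [Finset.mem_erase] at hR
      rw [Finset.disjoint_union_left]
      exact ⟨hT.disjoint P hP R hR.2.2 (Ne.symm hR.2.1), hT.disjoint Q hQ R hR.2.2 (Ne.symm hR.1)⟩
    have hnot : P ∪ Q ∉ (T.erase P).erase Q := by
      intro hmem
      exact Finset.disjoint_left.1 (hnew _ hmem) (Finset.mem_union_left _ hxP)
        (Finset.mem_union_left _ hxP)
    refine ⟨insert (P ∪ Q) ((T.erase P).erase Q), ⟨?_, ?_, ?_⟩, ?_⟩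
    · intro R hR
      rcases Finset.mem_insert.1 hR with rfl | hR
      · have hmono : ∀ u v, (u, v) ∈ M → (u, v) ∈ insert (x, y) M := fun u v =>
          Finset.mem_insert_of_mem
        exact ⟨a, d, (hab.mono hmono).append (hcd.mono hmono) (Finset.mem_insert_self _ _) hdisj⟩
      · obtain ⟨u, v, huv⟩ := hT.path R (by simp_all)
        exact ⟨u, v, huv.mono fun u v => Finset.mem_insert_of_mem⟩
    · intro R hR R' hR' hne
      rcases Finset.mem_insert.1 hR with rfl | hR <;> rcases Finset.mem_insert.1 hR' with rfl | hR'
      · exact absurd rfl hne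
      · exact hnew R' hR'
      · exact (hnew R hR).symm
      · exact hT.disjoint R (by simp_all) R' (by simp_all) hne
    · intro z
      obtain ⟨R, hR, hz⟩ := hT.cover z
      by_cases hRP : R = P
      · exact ⟨P ∪ Q, Finset.mem_insert_self _ _, Finset.mem_union_left _ (hRP ▸ hz)⟩
      by_cases hRQ : R = Q
      · exact ⟨P ∪ Q, Finset.mem_insert_self _ _, Finset.mem_union_right _ (hRQ ▸ hz)⟩
      · exact ⟨R, by simp [hRP, hRQ, hR], hz⟩
    · have hQ' : Q ∈ T.erase P := by simp [hQ, Ne.symm hPQ]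
      rw [Finset.card_insert_of_notMem hnot, Finset.card_insert_of_notMem he, ← hcard,
        ← Finset.card_erase_add_one hP, ← Finset.card_erase_add_one hQ']
      ring

/-- Hall's theorem with deficiency. -/
theorem exists_matching_of_deficiency (E : V → V → Prop) (X : Finset V) (d : ℕ)
    (h : ∀ S ⊆ X, S.card ≤ (Finset.univ.filter fun y => ∃ x ∈ S, E x y).card + d) :
    ∃ M : Finset (V × V), (∀ e ∈ M, E e.1 e.2) ∧ Set.InjOn Prod.fst (M : Set (V × V)) ∧
      Set.InjOn Prod.snd (M : Set (V × V)) ∧ X.card ≤ M.card + d := by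
  let N : X → Finset (V ⊕ Fin d) := fun x => (Finset.univ.filter fun y => E x y).disjSum Finset.univ
  obtain ⟨g, hg, hgN⟩ := (Finset.all_card_le_biUnion_card_iff_exists_injective N).1 (by
    intro S
    by_cases hS : S.Nonempty
    · have h1 : S.biUnion N = (Finset.univ.filter fun y => ∃ x ∈ S.map (.subtype _), E x y).disjSum
          (Finset.univ : Finset (Fin d)) := by
        obtain ⟨x₀, hx₀⟩ := hS
        ext z
        rcases z with z | z
        · simp [N, Finset.inl_mem_disjSum]
        · simp only [N, Finset.mem_biUnion, Finset.inr_mem_disjSum, Finset.mem_univ, and_true,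
            iff_true]
          exact ⟨x₀, hx₀⟩
      rw [h1, Finset.card_disjSum, Finset.card_univ, Fintype.card_fin, ← Finset.card_map]
      exact h _ fun x hx => by
        simp only [Finset.mem_map, Function.Embedding.subtype_apply] at hx
        obtain ⟨y, -, rfl⟩ := hx
        exact y.2
    · simp [Finset.not_nonempty_iff_eq_empty.1 hS])
  have hmem : ∀ x : X, ∀ y, g x = Sum.inl y → E x y := by
    intro x y hxy
    have := hgN x
    simpa [N, hxy] using this
  let M : Finset (V × V) := Finset.univ.filter fun e => ∃ h : e.1 ∈ X, g ⟨e.1, h⟩ = Sum.inl e.2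
  refine ⟨M, ?_, ?_, ?_, ?_⟩
  · rintro ⟨x, y⟩ he
    obtain ⟨hx, hxy⟩ := (Finset.mem_filter.1 he).2
    exact hmem _ _ hxy
  · rintro ⟨x, y⟩ he ⟨x', y'⟩ he' (rfl : x = x')
    obtain ⟨hx, hxy⟩ := (Finset.mem_filter.1 he).2
    obtain ⟨hx', hxy'⟩ := (Finset.mem_filter.1 he').2
    simp only at hxy hxy'
    rw [hxy] at hxy'
    simpa using hxy'
  · rintro ⟨x, y⟩ he ⟨x', y'⟩ he' (rfl : y = y')
    obtain ⟨hx, hxy⟩ := (Finset.mem_filter.1 he).2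
    obtain ⟨hx', hxy'⟩ := (Finset.mem_filter.1 he').2
    have := hg (hxy.trans hxy'.symm)
    simp only [Subtype.mk.injEq] at this
    simp [this]
  · have h1 : (Finset.univ : Finset X).image g ⊆ (M.image Prod.snd).disjSum Finset.univ := by
      intro z hz
      obtain ⟨x, -, rfl⟩ := Finset.mem_image.1 hz
      rcases hgx : g x with y | i
      · rw [Finset.inl_mem_disjSum, Finset.mem_image]
        exact ⟨(x, y), Finset.mem_filter.2 ⟨Finset.mem_univ _, x.2, hgx⟩, rfl⟩
      · simp
    have h2 := Finset.card_le_card h1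
    rw [Finset.card_image_of_injective _ hg, Finset.card_disjSum, Finset.card_univ,
      Finset.card_univ, Fintype.card_fin, Fintype.card_coe] at h2
    exact h2.trans (Nat.add_le_add_right Finset.card_image_le _)

end PathCover

section Regular

open scoped Classical

variable {V : Type*} [Fintype V] {G : V → V → Prop} {ν : ℝ}

/-- A robust expander contains a spanning `k`-regular subdigraph. -/
theorem IsExpander.exists_regular (hG : IsExpander G ν) (hν : ν ≤ 1 / 16) (k : ℕ)
    (hk : (k : ℝ) ≤ ν * Fintype.card V) :
    ∃ H : V → V → Prop, (∀ x y, H x y → G x y) ∧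
      ∀ s x, (Finset.univ.filter fun y => dirEdge H s x y).card = k := by
  induction k with
  | zero => exact ⟨fun _ _ => False, by simp, fun s x => by cases s <;> simp [dirEdge]⟩
  | succ k ih =>
    push_cast at hk
    obtain ⟨H, hHG, hH⟩ := ih (by linarith)
    set n : ℝ := (Fintype.card V : ℝ) with hn
    have hn0 : 0 ≤ n := by positivity
    have hνn : ν * n ≤ 1 / 16 * n := by gcongr
    have hout : ∀ x, n / 8 ≤ (Finset.univ.filter fun y => G x y ∧ ¬ H x y).card + k := by
      intro x
      have h1 := hG.degree true x
      have h2 := hH true x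
      simp only [dirEdge, if_true] at h1 h2
      rw [← h2]
      refine h1.trans ?_
      have h3 : (Finset.univ.filter fun y => G x y) ⊆
          (Finset.univ.filter fun y => G x y ∧ ¬ H x y) ∪ Finset.univ.filter fun y => H x y := by
        intro y
        simp only [Finset.mem_filter, Finset.mem_univ, true_and, Finset.mem_union]
        tauto
      exact_mod_cast (Finset.card_le_card h3).trans (Finset.card_union_le _ _)
    have hex : ∀ (S : Finset V) (y : V), (k : ℝ) < (S.filter fun x => G x y).card →
        ∃ x ∈ S, G x y ∧ ¬ H x y := by
      intro S y hlt
      by_contra! hcon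
      have h2 := hH false y
      have h3 : (S.filter fun x => G x y) ⊆ Finset.univ.filter fun x => dirEdge H false y x := by
        intro x hx
        rw [Finset.mem_filter] at hx ⊢
        exact ⟨Finset.mem_univ _, by simpa [dirEdge] using hcon x hx.1 hx.2⟩
      have h4 := Finset.card_le_card h3
      rw [h2] at h4
      have h5 : ((S.filter fun x => G x y).card : ℝ) ≤ k := by exact_mod_cast h4
      linarith
    let N : V → Finset V := fun x => Finset.univ.filter fun y => G x y ∧ ¬ H x y
    obtain ⟨g, hg, hgN⟩ := (Finset.all_card_le_biUnion_card_iff_exists_injective N).1 (by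
      intro S
      rcases S.eq_empty_or_nonempty with rfl | ⟨x₀, hx₀⟩
      · simp
      by_cases hS : (S.card : ℝ) ≤ n / 16
      · have h1 := Finset.card_le_card (Finset.subset_biUnion_of_mem N hx₀)
        have h2 : ((N x₀).card : ℝ) ≤ (S.biUnion N).card := by exact_mod_cast h1
        have h3 : n / 8 ≤ (N x₀).card + k := hout x₀
        have h4 : (S.card : ℝ) ≤ (S.biUnion N).card := by linarith
        exact_mod_cast h4
      push Not at hS
      by_cases hS' : (S.card : ℝ) ≤ 15 / 16 * n
      · have h1 := hG.expand true S hS.le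
        rw [min_eq_left hS'] at h1
        have h2 : (Finset.univ.filter fun y => ν * n ≤
            ((S.filter fun x => dirEdge G true x y).card : ℝ)) ⊆ S.biUnion N := by
          intro y hy
          simp only [Finset.mem_filter, Finset.mem_univ, true_and, dirEdge, if_true] at hy
          obtain ⟨x, hx, hxy⟩ := hex S y (by linarith)
          exact Finset.mem_biUnion.2 ⟨x, hx, by simpa [N] using hxy⟩
        have h3 := Finset.card_le_card h2
        have h4 : (S.card : ℝ) ≤ (S.biUnion N).card := by
          have : ((Finset.univ.filter fun y => ν * n ≤
            ((S.filter fun x => dirEdge G true x y).card : ℝ)).card : ℝ) ≤ (S.biUnion N).card := by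
            exact_mod_cast h3
          linarith
        exact_mod_cast h4
      · push Not at hS'
        have h1 : S.biUnion N = Finset.univ := by
          refine Finset.eq_univ_iff_forall.2 fun y => ?_
          have h2 := hG.degree false y
          obtain ⟨x, hx, hxy⟩ := hex S y (by
            have h3 : S.filter (fun x => G x y) =
                S ∩ Finset.univ.filter fun x => dirEdge G false y x := by
              ext; simp [dirEdge]
            rw [h3]
            set D := Finset.univ.filter fun x => dirEdge G false y x
            have h4 : ((S ∩ D).card : ℝ) + (S ∪ D).card = S.card + D.card := by
              exact_mod_cast Finset.card_inter_add_card_union S D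
            have h5 : ((S ∪ D).card : ℝ) ≤ n := by
              rw [hn]
              exact_mod_cast Finset.card_le_univ _
            linarith)
          exact Finset.mem_biUnion.2 ⟨x, hx, by simpa [N] using hxy⟩
        rw [h1]
        exact Finset.card_le_univ _)
    have hgG : ∀ x, G x (g x) ∧ ¬ H x (g x) := fun x => by simpa [N] using hgN x
    have hgb : Function.Bijective g := Finite.injective_iff_bijective.1 hg
    refine ⟨fun x y => H x y ∨ y = g x, ?_, ?_⟩
    · rintro x y (h | rfl)
      · exact hHG x y h
      · exact (hgG x).1
    · rintro (_ | _) x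
      · obtain ⟨z, rfl⟩ := hgb.2 x
        have h1 := hH false (g z)
        have h2 : (Finset.univ.filter fun y => dirEdge (fun x y => H x y ∨ y = g x) false (g z) y) =
            insert z (Finset.univ.filter fun y => dirEdge H false (g z) y) := by
          ext y
          simp [dirEdge, hg.eq_iff, or_comm, eq_comm]
        rw [h2, Finset.card_insert_of_notMem, h1]
        simpa [dirEdge] using (hgG z).2
      · have h1 := hH true x
        have h2 : (Finset.univ.filter fun y => dirEdge (fun x y => H x y ∨ y = g x) true x y) =
            insert (g x) (Finset.univ.filter fun y => dirEdge H true x y) := by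
          ext y
          simp [dirEdge, or_comm]
        rw [h2, Finset.card_insert_of_notMem, h1]
        simpa [dirEdge] using (hgG x).2

/-- There is a colouring with `t` colours under which the square deviations of the weights of the
colour classes from their mean are small on average. -/
theorem exists_balanced_colouring {J : Type*} [Fintype J] (w : J → V → ℝ) {t : ℕ} (ht : 0 < t) :
    ∃ f : V → Fin t, ∑ j, ∑ i, (∑ x, w j x * ((if f x = i then 1 else 0) - 1 / (t : ℝ))) ^ 2 ≤
      ∑ j, ∑ x, (w j x) ^ 2 := by
  have ht' : (0 : ℝ) < t := by exact_mod_cast ht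
  have hsum : ∀ c : Fin t, ∑ i, ((if c = i then 1 else 0) - 1 / (t : ℝ)) = 0 := by
    intro c
    simp [Finset.sum_sub_distrib, ht'.ne']
  suffices h : ∀ U : Finset V, ∃ f : V → Fin t,
      ∑ j, ∑ i, (∑ x ∈ U, w j x * ((if f x = i then 1 else 0) - 1 / (t : ℝ))) ^ 2 ≤
        ∑ j, ∑ x ∈ U, (w j x) ^ 2 from h Finset.univ
  intro U
  induction U using Finset.induction_on with
  | empty => exact ⟨fun _ => ⟨0, ht⟩, by simp⟩
  | insert v U hv ih =>
    obtain ⟨f, hf⟩ := ih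
    let e : J → Fin t → ℝ := fun j i =>
      ∑ x ∈ U, w j x * ((if f x = i then 1 else 0) - 1 / (t : ℝ))
    have he : ∀ j, ∑ i, e j i = 0 := by
      intro j
      simp only [e]
      rw [Finset.sum_comm]
      exact Finset.sum_eq_zero fun x _ => by rw [← Finset.mul_sum, hsum, mul_zero]
    obtain ⟨c, -, hc⟩ : ∃ c ∈ (Finset.univ : Finset (Fin t)), ∑ j, w j v * e j c ≤ 0 := by
      refine Finset.exists_le_of_sum_le ⟨⟨0, ht⟩, Finset.mem_univ _⟩ ?_
      rw [Finset.sum_comm, Finset.sum_const_zero]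
      exact (Finset.sum_eq_zero fun j _ => by rw [← Finset.mul_sum, he, mul_zero]).le
    have hnew : ∀ j i, ∑ x ∈ insert v U, w j x *
        ((if Function.update f v c x = i then 1 else 0) - 1 / (t : ℝ)) =
        w j v * ((if c = i then 1 else 0) - 1 / (t : ℝ)) + e j i := by
      intro j i
      rw [Finset.sum_insert hv, Function.update_self]
      congr 1
      exact Finset.sum_congr rfl fun x hx => by
        rw [Function.update_of_ne (ne_of_mem_of_not_mem hx hv)]
    have hcross : ∀ j, ∑ i, ((if c = i then 1 else 0) - 1 / (t : ℝ)) * e j i = e j c := by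
      intro j
      simp [sub_mul, Finset.sum_sub_distrib, ← Finset.mul_sum, he]
    have hsq : ∑ i : Fin t, ((if c = i then 1 else 0) - 1 / (t : ℝ)) ^ 2 ≤ 1 := by
      have h1 : ∀ i : Fin t, ((if c = i then 1 else 0) - 1 / (t : ℝ)) ^ 2 =
          (if c = i then 1 - 2 / (t : ℝ) else 0) + (1 / (t : ℝ)) ^ 2 := by
        intro i
        split_ifs <;> ring
      simp only [h1, Finset.sum_add_distrib, Finset.sum_ite_eq, Finset.mem_univ, if_true,
        Finset.sum_const, Finset.card_univ, Fintype.card_fin, nsmul_eq_mul]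
      have h2 : (t : ℝ) * (1 / (t : ℝ)) ^ 2 = 1 / t := by field_simp
      have h3 : 0 ≤ 1 / (t : ℝ) := by positivity
      rw [h2]
      ring_nf at h3 ⊢
      linarith
    refine ⟨Function.update f v c, ?_⟩
    simp only [hnew]
    calc ∑ j, ∑ i, (w j v * ((if c = i then 1 else 0) - 1 / (t : ℝ)) + e j i) ^ 2
        = ∑ j, ((w j v) ^ 2 * ∑ i : Fin t, ((if c = i then 1 else 0) - 1 / (t : ℝ)) ^ 2 +
            2 * (w j v * e j c) + ∑ i, e j i ^ 2) := by
          refine Finset.sum_congr rfl fun j _ => ?_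
          rw [← hcross, Finset.mul_sum, Finset.mul_sum, Finset.mul_sum, ← Finset.sum_add_distrib,
            ← Finset.sum_add_distrib]
          exact Finset.sum_congr rfl fun i _ => by ring
      _ ≤ ∑ j, ((w j v) ^ 2 * 1 + 2 * (w j v * e j c) + ∑ i, e j i ^ 2) := by
          gcongr
      _ = ∑ j, (w j v) ^ 2 + 2 * ∑ j, w j v * e j c + ∑ j, ∑ i, e j i ^ 2 := by
          simp only [mul_one, Finset.sum_add_distrib, ← Finset.mul_sum]
      _ ≤ ∑ j, (w j v) ^ 2 + ∑ j, ∑ x ∈ U, (w j x) ^ 2 := by linarith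
      _ = _ := by
          rw [← Finset.sum_add_distrib]
          exact Finset.sum_congr rfl fun j _ => by rw [Finset.sum_insert hv]

end Regular

section ExistsPathCover

open scoped Classical

variable {V : Type*} [Fintype V] {G : V → V → Prop} {ν : ℝ}

/-- The vertices of a regular digraph can be split into nearly equal classes such that the neighbourhoods
are nearly equally distributed on average. -/
theorem exists_balanced_classes {H : V → V → Prop} {k t : ℕ} {δ : ℝ}
    (hH : ∀ s x, (Finset.univ.filter fun y => dirEdge H s x y).card = k) (ht : 0 < t) (hδ : 0 < δ)
    (hn : 3 ≤ δ ^ 2 * Fintype.card V) :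
    ∃ f : V → Fin t,
      (∀ (s : Bool) (i : V → Fin t),
        ∑ v, |((Finset.univ.filter fun x => dirEdge H s v x ∧ f x = i v).card : ℝ) - k / t| ≤
          δ * (Fintype.card V : ℝ) ^ 2) ∧
      ∀ i, ((Finset.univ.filter fun x => f x = i).card : ℝ) ≤
        Fintype.card V / t + δ * Fintype.card V := by
  let w : (Bool × V) ⊕ V → V → ℝ :=
    Sum.elim (fun p x => if dirEdge H p.1 p.2 x then 1 else 0) fun _ _ => 1
  obtain ⟨f, hf⟩ := exists_balanced_colouring w ht
  refine ⟨f, ?_⟩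
  set n : ℝ := (Fintype.card V : ℝ) with hn_def
  have hn0 : 0 < n := by
    by_contra! h0
    have := mul_nonpos_of_nonneg_of_nonpos (sq_nonneg δ) h0
    linarith
  have hk : ∀ _ : V, (k : ℝ) ≤ n := by
    intro v
    rw [hn_def, ← hH true v]
    exact_mod_cast Finset.card_le_univ _
  have herr : ∀ s v i, ∑ x, w (.inl (s, v)) x * ((if f x = i then 1 else 0) - 1 / (t : ℝ)) =
      ((Finset.univ.filter fun x => dirEdge H s v x ∧ f x = i).card : ℝ) - k / t := by
    intro s v i
    simp only [w, Sum.elim_inl, mul_sub, Finset.sum_sub_distrib, ← Finset.sum_mul]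
    have h1 : ∑ x, (if dirEdge H s v x then (1 : ℝ) else 0) = k := by
      rw [← hH s v]; simp
    rw [h1]
    simp [← ite_and, div_eq_mul_inv, and_comm]
  have herr' : ∀ v i, ∑ x, w (.inr v) x * ((if f x = i then 1 else 0) - 1 / (t : ℝ)) =
      ((Finset.univ.filter fun x => f x = i).card : ℝ) - n / t := by
    intro v i
    simp [w, Finset.sum_sub_distrib, hn_def, div_eq_mul_inv]
  have htotal : ∑ j, ∑ x, w j x ^ 2 ≤ 3 * n ^ 2 := by
    have h1 : ∀ s v, ∑ x, w (.inl (s, v)) x ^ 2 = k := by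
      intro s v
      rw [← hH s v]; simp [w]
    have h2 : ∀ v, ∑ x, w (.inr v) x ^ 2 = n := by
      intro v
      simp [w, hn_def]
    rw [Fintype.sum_sum_type, Fintype.sum_prod_type]
    simp only [h1, h2]
    calc (∑ _ : Bool, ∑ _ : V, (k : ℝ)) + ∑ _ : V, n ≤ (∑ _ : Bool, ∑ _ : V, n) + ∑ _ : V, n := by
          gcongr with s _ v _
          exact hk v
      _ = 3 * n ^ 2 := by simp [← hn_def]; ring
  have hsq := hf.trans htotal
  rw [Fintype.sum_sum_type, Fintype.sum_prod_type] at hsq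
  simp only [herr, herr'] at hsq
  have hpos1 : 0 ≤ ∑ s : Bool, ∑ v : V, ∑ i,
      (((Finset.univ.filter fun x => dirEdge H s v x ∧ f x = i).card : ℝ) - k / t) ^ 2 :=
    Finset.sum_nonneg fun _ _ => Finset.sum_nonneg fun _ _ => Finset.sum_nonneg fun _ _ =>
      sq_nonneg _
  have hpos2 : 0 ≤ ∑ _ : V, ∑ i,
      (((Finset.univ.filter fun x => f x = i).card : ℝ) - n / t) ^ 2 :=
    Finset.sum_nonneg fun _ _ => Finset.sum_nonneg fun _ _ => sq_nonneg _
  constructor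
  · intro s i
    have h1 : ∑ v, (((Finset.univ.filter fun x => dirEdge H s v x ∧ f x = i v).card : ℝ) -
        k / t) ^ 2 ≤ 3 * n ^ 2 := by
      refine le_trans (Finset.sum_le_sum fun v _ => Finset.single_le_sum (f := fun i =>
        (((Finset.univ.filter fun x => dirEdge H s v x ∧ f x = i).card : ℝ) - k / t) ^ 2)
        (fun _ _ => sq_nonneg _) (Finset.mem_univ (i v))) ?_
      refine le_trans (Finset.single_le_sum (f := fun s => ∑ v, ∑ i,
        (((Finset.univ.filter fun x => dirEdge H s v x ∧ f x = i).card : ℝ) - k / t) ^ 2)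
        (fun _ _ => Finset.sum_nonneg fun _ _ => Finset.sum_nonneg fun _ _ => sq_nonneg _)
        (Finset.mem_univ s)) ?_
      linarith
    have hδn : 0 < δ * n := by positivity
    have h2 : ∀ z : ℝ, |z| ≤ z ^ 2 / (2 * (δ * n)) + δ * n / 2 := by
      intro z
      rw [div_add_div _ _ (by positivity) (by norm_num), le_div_iff₀ (by positivity), ← sq_abs]
      nlinarith [sq_nonneg (|z| - δ * n)]
    refine (Finset.sum_le_sum fun v _ => h2 _).trans ?_
    rw [Finset.sum_add_distrib, ← Finset.sum_div, Finset.sum_const, Finset.card_univ, nsmul_eq_mul,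
      ← hn_def]
    have h3 : (∑ v, (((Finset.univ.filter fun x => dirEdge H s v x ∧ f x = i v).card : ℝ) -
        k / t) ^ 2) / (2 * (δ * n)) ≤ δ * n ^ 2 / 2 := by
      rw [div_le_iff₀ (by positivity)]
      refine h1.trans ?_
      have : 3 * n ^ 2 ≤ (δ ^ 2 * n) * n ^ 2 := by gcongr
      linarith
    linarith
  · intro i
    have h1 : n * (((Finset.univ.filter fun x => f x = i).card : ℝ) - n / t) ^ 2 ≤ 3 * n ^ 2 := by
      have h2 : ∑ _ : V, (((Finset.univ.filter fun x => f x = i).card : ℝ) - n / t) ^ 2 ≤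
          3 * n ^ 2 := by
        refine le_trans (Finset.sum_le_sum fun v _ => Finset.single_le_sum (f := fun i =>
          (((Finset.univ.filter fun x => f x = i).card : ℝ) - n / t) ^ 2)
          (fun _ _ => sq_nonneg _) (Finset.mem_univ i)) ?_
        linarith
      simpa [← hn_def] using h2
    have h2 : (((Finset.univ.filter fun x => f x = i).card : ℝ) - n / t) ^ 2 ≤ (δ * n) ^ 2 := by
      refine le_of_mul_le_mul_left (h1.trans ?_) hn0
      have : 3 * n ^ 2 ≤ (δ ^ 2 * n) * n ^ 2 := by gcongr
      linarith
    linarith [(abs_le_of_sq_le_sq' h2 (by positivity)).2]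

/-- Large robust expanders have path covers with few paths. -/
theorem exists_isPathCover (ν ε : ℝ) (hν : 0 < ν) (hν' : ν ≤ 1 / 16) (hε : 0 < ε) :
    ∃ n₀ : ℕ, ∀ (V : Type) [Fintype V] (G : V → V → Prop), n₀ ≤ Fintype.card V →
      IsExpander G ν → ∃ T, IsPathCover G T ∧ (T.card : ℝ) ≤ ε * Fintype.card V := by
  obtain ⟨t, ht⟩ := exists_nat_ge (4 / ε)
  have ht0 : (0 : ℝ) < t := lt_of_lt_of_le (by positivity) ht
  have ht' : 0 < t := by exact_mod_cast ht0
  have ht1 : (1 : ℝ) ≤ t := by exact_mod_cast ht'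
  set δ := ε * ν / (16 * t) with hδ
  have hδ0 : 0 < δ := by positivity
  obtain ⟨n₀, hn₀⟩ := exists_nat_ge (2 / ν + 3 / δ ^ 2)
  refine ⟨n₀, fun V _ G hV hG => ?_⟩
  set n : ℝ := (Fintype.card V : ℝ) with hn_def
  have hn : 2 / ν + 3 / δ ^ 2 ≤ n := hn₀.trans (by rw [hn_def]; exact_mod_cast hV)
  have hp1 : 0 < 2 / ν := by positivity
  have hp2 : 0 < 3 / δ ^ 2 := by positivity
  have hn0 : 0 < n := by linarith
  have hn1 : 2 ≤ ν * n := by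
    have : 2 / ν ≤ n := by linarith
    rw [div_le_iff₀ hν] at this
    linarith
  have hn2 : 3 ≤ δ ^ 2 * n := by
    have : 3 / δ ^ 2 ≤ n := by linarith
    rw [div_le_iff₀ (by positivity)] at this
    linarith
  set k := ⌊ν * n⌋₊ with hk
  have hk1 : (k : ℝ) ≤ ν * n := Nat.floor_le (by positivity)
  have hk2 : ν * n / 2 ≤ k := by linarith [Nat.lt_floor_add_one (ν * n)]
  have hk0 : (0 : ℝ) < k := by linarith
  obtain ⟨H, hHG, hH⟩ := hG.exists_regular hν' k hk1
  obtain ⟨f, hf, hf'⟩ := exists_balanced_classes hH ht' hδ0 hn2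
  rw [← hn_def] at hf hf'
  let E : V → V → Prop := fun x y => H x y ∧ (f y : ℕ) = f x + 1
  set X : Finset V := Finset.univ.filter fun x => (f x : ℕ) + 1 < t with hX
  set d := ⌊ε * n / 4⌋₊ with hd
  have hd' : (d : ℝ) ≤ ε * n / 4 := Nat.floor_le (by positivity)
  obtain ⟨M, hM, hM1, hM2, hMcard⟩ := exists_matching_of_deficiency E X d (by
    intro S hS
    set N := Finset.univ.filter fun y => ∃ x ∈ S, E x y with hN
    let i : V → Fin t := fun x => if h : (f x : ℕ) + 1 < t then ⟨f x + 1, h⟩ else f x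
    let i' : V → Fin t := fun y => ⟨f y - 1, lt_of_le_of_lt (Nat.sub_le _ _) (f y).2⟩
    have h1 : (S.card : ℝ) * (k / t) - δ * n ^ 2 ≤
        ∑ x ∈ S, ((Finset.univ.filter fun y => dirEdge H true x y ∧ f y = i x).card : ℝ) := by
      have h2 := (Finset.sum_le_sum_of_subset_of_nonneg (Finset.subset_univ S)
        fun _ _ _ => abs_nonneg _).trans (hf true i)
      have h3 : ∑ x ∈ S, ((k : ℝ) / t -
          ((Finset.univ.filter fun y => dirEdge H true x y ∧ f y = i x).card : ℝ)) ≤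
          δ * n ^ 2 := by
        refine le_trans (Finset.sum_le_sum fun x _ => ?_) h2
        rw [abs_sub_comm]
        exact le_abs_self _
      rw [Finset.sum_sub_distrib, Finset.sum_const, nsmul_eq_mul] at h3
      linarith
    have h2 : ∑ y ∈ N, ((Finset.univ.filter fun x => dirEdge H false y x ∧ f x = i' y).card : ℝ) ≤
        N.card * (k / t) + δ * n ^ 2 := by
      have h2 := (Finset.sum_le_sum_of_subset_of_nonneg (Finset.subset_univ N)
        fun _ _ _ => abs_nonneg _).trans (hf false i')
      have h3 : ∑ y ∈ N,
          (((Finset.univ.filter fun x => dirEdge H false y x ∧ f x = i' y).card : ℝ) - k / t) ≤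
          δ * n ^ 2 :=
        le_trans (Finset.sum_le_sum fun x _ => le_abs_self _) h2
      rw [Finset.sum_sub_distrib, Finset.sum_const, nsmul_eq_mul] at h3
      linarith
    have h3 : ∑ x ∈ S, (Finset.univ.filter fun y => dirEdge H true x y ∧ f y = i x).card ≤
        ∑ y ∈ N, (Finset.univ.filter fun x => dirEdge H false y x ∧ f x = i' y).card := by
      rw [← Finset.card_sigma, ← Finset.card_sigma]
      refine Finset.card_le_card_of_injOn (fun p => ⟨p.2, p.1⟩) ?_ ?_
      · rintro ⟨x, y⟩ hxy
        simp only [Finset.coe_sigma, Set.mem_sigma_iff, Finset.mem_coe, Finset.mem_filter,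
          Finset.mem_univ, true_and, dirEdge, if_true] at hxy ⊢
        obtain ⟨hx, hxy, hfy⟩ := hxy
        have hx' : (f x : ℕ) + 1 < t := (Finset.mem_filter.1 (hS hx)).2
        have hfy' : (f y : ℕ) = f x + 1 := by
          rw [hfy]
          simp [i, hx']
        refine ⟨Finset.mem_filter.2 ⟨Finset.mem_univ _, x, hx, hxy, hfy'⟩, by simpa using hxy, ?_⟩
        ext
        simp [i', hfy']
      · rintro ⟨x, y⟩ _ ⟨x', y'⟩ _ h
        simp only [Sigma.mk.injEq, heq_eq_eq] at h
        simp [h.1, h.2]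
    have h3' : ∑ x ∈ S,
        ((Finset.univ.filter fun y => dirEdge H true x y ∧ f y = i x).card : ℝ) ≤
        ∑ y ∈ N, ((Finset.univ.filter fun x => dirEdge H false y x ∧ f x = i' y).card : ℝ) := by
      exact_mod_cast h3
    have h4 : (S.card : ℝ) * (k / t) ≤ (N.card + ε * n / 4) * (k / t) := by
      have h5 : 2 * (δ * n ^ 2) ≤ ε * n / 4 * (k / t) := by
        calc 2 * (δ * n ^ 2) = ε * n / 4 * ((ν * n / 2) / t) := by rw [hδ]; field_simp; norm_num
          _ ≤ _ := by gcongr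
      linarith
    have h5 := le_of_mul_le_mul_right h4 (by positivity)
    have h6 : S.card - N.card ≤ d := by
      refine Nat.le_floor ?_
      rcases le_total N.card S.card with h | h
      · rw [Nat.cast_sub h]; linarith
      · rw [Nat.sub_eq_zero_of_le h]; simpa using by positivity
    convert (show S.card ≤ N.card + d by omega))
  obtain ⟨T, hT, hTcard⟩ := exists_isPathCover_of_matching (fun x => (f x : ℕ)) M
    (fun e he => by have := (hM e he).2; omega) hM1 hM2
  refine ⟨T, hT.mono fun x y hxy => hHG x y (hM _ hxy).1, ?_⟩
  have h1 : (Finset.univ.filter fun x => f x = ⟨t - 1, by omega⟩) = Xᶜ := by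
    ext x
    simp only [hX, Finset.mem_filter, Finset.mem_univ, true_and, Finset.mem_compl, Fin.ext_iff]
    have := (f x).2
    omega
  have h2 := hf' ⟨t - 1, by omega⟩
  rw [h1] at h2
  have h3 : (X.card : ℝ) + Xᶜ.card = n := by
    rw [hn_def]
    exact_mod_cast Finset.card_add_card_compl X
  have h4 : (T.card : ℝ) + M.card = n := by
    rw [hn_def]
    exact_mod_cast hTcard
  have h5 : (X.card : ℝ) ≤ M.card + d := by exact_mod_cast hMcard
  have h6 : n / t ≤ ε * n / 4 := by
    rw [div_le_iff₀ ht0]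
    rw [div_le_iff₀ hε] at ht
    nlinarith
  have h7 : δ * n ≤ ε * n / 4 := by
    have : δ ≤ ε / 4 := by
      rw [hδ, div_le_iff₀ (by positivity)]
      have : ε * ν ≤ ε * t := by gcongr; linarith
      have : 0 < ε * t := by positivity
      linarith
    nlinarith
  linarith [mul_pos hε hn0]

end ExistsPathCover

section Connectors

open scoped Classical

variable {V : Type*} {G : V → V → Prop}

/-- Whenever at most `B` vertices have been used, any two vertices are joined through a path with at
most `K` unused vertices, all from `R`. -/
def HasConnectors (G : V → V → Prop) (R : Finset V) (B K : ℕ) : Prop :=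
  ∀ F : Finset V, F.card ≤ B → ∀ u v, ∃ a b C,
    DiPath G a b C ∧ G u a ∧ G b v ∧ C ⊆ R ∧ Disjoint C F ∧ C.card ≤ K

/-- Disjoint paths can be joined into a single path by connectors. -/
theorem HasConnectors.exists_path {R : Finset V} {B K : ℕ} (hR : HasConnectors G R B K)
    {T : Finset (Finset V)} (hT : T.Nonempty) (hpath : ∀ P ∈ T, ∃ a b, DiPath G a b P)
    (hdisj : ∀ P ∈ T, ∀ Q ∈ T, P ≠ Q → Disjoint P Q) (hTR : ∀ P ∈ T, Disjoint P R)
    (hB : T.card * K ≤ B) :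
    ∃ a b C, DiPath G a b (T.biUnion id ∪ C) ∧ C ⊆ R ∧ C.card ≤ T.card * K := by
  induction hT using Finset.Nonempty.cons_induction with
  | singleton P =>
    obtain ⟨a, b, hab⟩ := hpath P (Finset.mem_singleton_self _)
    exact ⟨a, b, ∅, by simpa using hab, by simp, by simp⟩
  | cons P T hP hT ih =>
    rw [Finset.card_cons, add_mul, one_mul] at hB
    obtain ⟨a, b, C, hab, hC, hcard⟩ := ih (fun Q hQ => hpath Q (Finset.mem_cons_of_mem hQ))
      (fun Q hQ Q' hQ' => hdisj Q (Finset.mem_cons_of_mem hQ) Q' (Finset.mem_cons_of_mem hQ'))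
      (fun Q hQ => hTR Q (Finset.mem_cons_of_mem hQ)) (by omega)
    obtain ⟨c, d, hcd⟩ := hpath P (Finset.mem_cons_self _ _)
    obtain ⟨p, q, C', hpq, hbp, hqc, hC'R, hC'C, hcard'⟩ := hR C (by omega) b c
    have h1 : Disjoint (T.biUnion id) R :=
      (Finset.disjoint_biUnion_left _ _ _).2 fun Q hQ => hTR Q (Finset.mem_cons_of_mem hQ)
    have h2 : Disjoint (T.biUnion id ∪ C) C' :=
      Finset.disjoint_union_left.2 ⟨h1.mono_right hC'R, hC'C.symm⟩
    have h3 : Disjoint (T.biUnion id) P :=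
      (Finset.disjoint_biUnion_left _ _ _).2 fun Q hQ =>
        hdisj Q (Finset.mem_cons_of_mem hQ) P (Finset.mem_cons_self _ _)
          (ne_of_mem_of_not_mem hQ hP)
    have h4 := (hTR P (Finset.mem_cons_self _ _)).symm
    have h5 : Disjoint (T.biUnion id ∪ C ∪ C') P :=
      Finset.disjoint_union_left.2 ⟨Finset.disjoint_union_left.2 ⟨h3, h4.mono_left hC⟩,
        h4.mono_left hC'R⟩
    refine ⟨a, d, C ∪ C', ?_, Finset.union_subset hC hC'R, ?_⟩
    · have := (hab.append hpq hbp h2).append hcd hqc h5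
      convert this using 1
      ext x
      simp only [Finset.mem_union, Finset.mem_biUnion, Finset.mem_cons, id]
      grind
    · rw [Finset.card_cons, add_mul, one_mul]
      exact (Finset.card_union_le _ _).trans (by omega)

theorem IsPacking.exists_disjoint {F : Finset V} {T T' : Finset (List V)} (hT : IsPacking F T)
    (hT' : T' ⊆ T) {U : Finset V} (hU : U.card < T'.card) : ∃ l ∈ T', ∀ x ∈ l, x ∉ U := by
  by_contra! hcon
  obtain ⟨l₀, hl₀⟩ := Finset.card_pos.1 (Nat.zero_lt_of_lt hU)
  have : Nonempty V := let ⟨x, _⟩ := hcon l₀ hl₀; ⟨x⟩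
  choose! f hf using hcon
  refine hU.not_ge (Finset.card_le_card_of_injOn f (fun l hl => (hf l hl).2) ?_)
  intro l hl l' hl' h
  by_contra hne
  exact hT.disjoint l (hT' hl) l' (hT' hl') hne (f l) (hf l hl).1 (h ▸ (hf l' hl').1)

variable [Fintype V] {ν : ℝ} {K : ℕ}

theorem exists_diPath_of_mem_walks {u v : V} {j : ℕ} {l : List V}
    (hl : l ∈ walks G (fun _ => true) u (j + 1) v) (hnodup : l.Nodup) :
    ∃ a b, DiPath G a b l.toFinset ∧ G u a ∧ G b v := by
  induction j generalizing v l with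
  | zero =>
    obtain ⟨z, l', rfl, hz, hl'⟩ := mem_walks_succ.1 hl
    obtain ⟨rfl, hu⟩ := mem_walks_zero.1 hl'
    exact ⟨z, z, by simpa using DiPath.single z, by simpa [dirEdge] using hu,
      by simpa [dirEdge] using hz⟩
  | succ j ih =>
    obtain ⟨z, l', rfl, hz, hl'⟩ := mem_walks_succ.1 hl
    rw [List.nodup_cons] at hnodup
    obtain ⟨a, b, hab, hua, hbz⟩ := ih hl' hnodup.2
    refine ⟨a, z, ?_, hua, by simpa [dirEdge] using hz⟩
    have := hab.append (.single z) hbz (by simpa using hnodup.1)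
    rwa [Finset.union_comm, ← Finset.insert_eq, ← List.toFinset_cons] at this

theorem IsExpander.hasConnectors (hG : IsExpander G ν) (hν : 0 < ν) (hν' : ν ≤ 1 / 16) {j B : ℕ}
    (hj : 1 ≤ j * ν)
    (hB : (B : ℝ) + (j + 1 : ℕ) ≤ ν ^ (j + 1) / (2 * (j + 1 : ℕ)) * Fintype.card V) :
    HasConnectors G Finset.univ B (j + 1) := by
  intro F hF u v
  have hV : 0 < Fintype.card V := Fintype.card_pos_iff.2 ⟨u⟩
  have h1 := card_good_lists_ge F (K := j + 1) (c := ν ^ (j + 1))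
    (D := walks G (fun _ => true) u (j + 1) v) (by omega) hV
    (fun l hl => length_of_mem_walks hl)
    (by rw [← mul_pow]; exact hG.card_walks_ge hν.le hν' _ u v hj)
    (le_trans (by have : (F.card : ℝ) ≤ B := by exact_mod_cast hF
                  gcongr) hB)
  have h2 : (0 : ℝ) < ν ^ (j + 1) / 2 * (Fintype.card V : ℝ) ^ (j + 1) := by positivity
  have h3 := h2.trans_le h1
  rw [Nat.cast_pos, Finset.card_pos] at h3
  obtain ⟨l, hl⟩ := h3
  obtain ⟨hl, hnodup, hF⟩ := Finset.mem_filter.1 hl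
  obtain ⟨a, b, hab, hua, hbv⟩ := exists_diPath_of_mem_walks hl hnodup
  refine ⟨a, b, l.toFinset, hab, hua, hbv, Finset.subset_univ _, ?_, ?_⟩
  · rw [Finset.disjoint_left]
    intro x hx
    exact hF x (by simpa using hx)
  · exact (List.toFinset_card_le l).trans (length_of_mem_walks hl).le

theorem IsPacking.hasConnectors {F : Finset V} {T : Finset (List V)} (hT : IsPacking F T)
    {j B : ℕ} (hB : ∀ u v, B < (T.filter (· ∈ walks G (fun _ => true) u (j + 1) v)).card) :
    HasConnectors G (T.biUnion List.toFinset) B (j + 1) := by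
  intro U hU u v
  obtain ⟨l, hl, hlU⟩ := hT.exists_disjoint (Finset.filter_subset _ _) (hU.trans_lt (hB u v))
  obtain ⟨hlT, hl⟩ := Finset.mem_filter.1 hl
  obtain ⟨a, b, hab, hua, hbv⟩ := exists_diPath_of_mem_walks hl (hT.nodup l hlT)
  refine ⟨a, b, l.toFinset, hab, hua, hbv, Finset.subset_biUnion_of_mem List.toFinset hlT, ?_, ?_⟩
  · rw [Finset.disjoint_left]
    intro x hx
    exact hlU x (by simpa using hx)
  · exact (List.toFinset_card_le l).trans (length_of_mem_walks hl).le

end Connectors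

section Absorbers

open scoped Classical

variable {V : Type*} {G : V → V → Prop}

/-- Two disjoint paths which together also form one longer path can be extended by four vertices
and two connectors. -/
theorem DiPath.extend_pair {a b x x' p q p' q' x₂ x₂' x₃ x₃' : V} {E O C C' : Finset V}
    (hQ : DiPath G a x' (E ∪ O)) (hE : DiPath G a x E) (hO : DiPath G b x' O) (hEO : Disjoint E O)
    (hpq : DiPath G p q C) (hpq' : DiPath G p' q' C') (hxp : G x' p) (hqx : G q x₂)
    (hxp' : G x₂' p') (hqx' : G q' x₃) (hxx₂ : G x x₂') (h33 : G x₃ x₃') (h23 : G x₂ x₃')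
    (h22 : G x₂ x₂') (hEN : Disjoint E {x₃, x₃', x₂, x₂'}) (hON : Disjoint O {x₃, x₃', x₂, x₂'})
    (hCN : Disjoint C {x₃, x₃', x₂, x₂'}) (hCN' : Disjoint C' {x₃, x₃', x₂, x₂'})
    (hEC : Disjoint E C) (hOC : Disjoint O C) (hEC' : Disjoint E C') (hOC' : Disjoint O C')
    (hCC' : Disjoint C C') (hnd : [x₃, x₃', x₂, x₂'].Nodup) :
    DiPath G a x₃' (E ∪ {x₂'} ∪ C' ∪ {x₃} ∪ (O ∪ C ∪ {x₂} ∪ {x₃'})) ∧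
      DiPath G a x₃ (E ∪ {x₂'} ∪ C' ∪ {x₃}) ∧ DiPath G b x₃' (O ∪ C ∪ {x₂} ∪ {x₃'}) ∧
      Disjoint (E ∪ {x₂'} ∪ C' ∪ {x₃}) (O ∪ C ∪ {x₂} ∪ {x₃'}) := by
  simp only [Finset.disjoint_insert_right, Finset.disjoint_singleton_right] at hEN hON hCN hCN'
  obtain ⟨e3, e3', e2, e2'⟩ := hEN
  obtain ⟨o3, o3', o2, o2'⟩ := hON
  obtain ⟨c3, c3', c2, c2'⟩ := hCN
  obtain ⟨d3, d3', d2, d2'⟩ := hCN'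
  simp only [List.nodup_cons, List.mem_cons, List.not_mem_nil, not_or] at hnd
  obtain ⟨⟨n1, n2, n3, -⟩, ⟨n5, n6, -⟩, ⟨n8, -⟩, -⟩ := hnd
  have hunion : E ∪ O ∪ C ∪ {x₂} ∪ {x₂'} ∪ C' ∪ {x₃} ∪ {x₃'} =
      E ∪ {x₂'} ∪ C' ∪ {x₃} ∪ (O ∪ C ∪ {x₂} ∪ {x₃'}) := by
    ac_rfl
  have hQ₁ := hQ.append hpq hxp (by simp [hEC, hOC])
  have hQ₂ := (hQ₁.append (.single x₂) hqx (by simp [e2, o2, c2])).append (.single x₂') h22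
    (by simp [e2', o2', c2', Ne.symm n8])
  have hQ₃ := hQ₂.append hpq' hxp' (by simp [hEC', hOC', hCC', d2, d2'])
  have hQ₄ := (hQ₃.append (.single x₃) hqx' (by simp [e3, o3, c3, n2, n3, d3])).append
    (.single x₃') h33 (by simp [e3', o3', c3', n5, n6, d3', Ne.symm n1])
  rw [hunion] at hQ₄
  refine ⟨hQ₄, ?_, ?_, ?_⟩
  · exact ((hE.append (.single x₂') hxx₂ (by simp [e2'])).append hpq' hxp'
      (by simp [hEC', d2'])).append (.single x₃) hqx' (by simp [e3, d3, n3])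
  · exact ((hO.append hpq hxp hOC).append (.single x₂) hqx (by simp [o2, c2])).append
      (.single x₃') h23 (by simp [o3', c3', n5])
  · simp [hEO, hEC, o2', c2', n8, hOC'.symm, hCC'.symm, o3, c3, Ne.symm n2, e2, d2, e3', d3', n6,
      Ne.symm n1]

variable [Fintype V] {B K : ℕ}

/-- The step directions of alternating walks. -/
def alternating (i : ℕ) : Bool := i % 2 == 0

theorem exists_of_mem_walks_alternating {v y : V} {j : ℕ} {l : List V}
    (h : l ∈ walks G alternating v (4 * (j + 1) + 2) y) :
    ∃ x₃ x₃' x₂ x₂' l', l = x₃ :: x₃' :: x₂ :: x₂' :: l' ∧ G x₃ y ∧ G x₃ x₃' ∧ G x₂ x₃' ∧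
      G x₂ x₂' ∧ l' ∈ walks G alternating v (4 * j + 2) x₂' := by
  obtain ⟨x₃, l₃, rfl, h₃, h⟩ := mem_walks_succ.1 h
  obtain ⟨x₃', l₃', rfl, h₃', h⟩ := mem_walks_succ.1 h
  obtain ⟨x₂, l₂, rfl, h₂, h⟩ := mem_walks_succ.1 h
  obtain ⟨x₂', l₂', rfl, h₂', h⟩ := mem_walks_succ.1 h
  change dirEdge G (alternating (4 * (j + 1))) x₂ x₃' at h₂
  change dirEdge G (alternating (4 * j + 3)) x₂' x₂ at h₂'
  have e₃ : alternating (4 * (j + 1) + 1 + 1) = true := by simp [alternating]; omega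
  have e₃' : alternating (4 * (j + 1) + 1) = false := by simp [alternating]; omega
  have e₂ : alternating (4 * (j + 1)) = true := by simp [alternating]; omega
  have e₂' : alternating (4 * j + 3) = false := by simp [alternating]; omega
  rw [e₃] at h₃
  rw [e₃'] at h₃'
  rw [e₂] at h₂
  rw [e₂'] at h₂'
  exact ⟨x₃, x₃', x₂, x₂', l₂', rfl, by simpa [dirEdge] using h₃, by simpa [dirEdge] using h₃',
    by simpa [dirEdge] using h₂, by simpa [dirEdge] using h₂', h⟩

/-- The interior of an alternating closed walk extends to a path which can absorb the base point of
the walk. -/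
theorem HasConnectors.exists_gadget (hC : HasConnectors G Finset.univ B K) (j : ℕ) (l : List V)
    (hl : l.Nodup) (hex : ∃ v y, l ∈ walks G alternating v (4 * j + 2) y) (F : Finset V)
    (hlF : ∀ x ∈ l, x ∉ F) (hF : F.card + (4 * j + 2 + 2 * j * K) ≤ B) :
    ∃ a b x x' E O, DiPath G a x' (E ∪ O) ∧ DiPath G a x E ∧ DiPath G b x' O ∧ Disjoint E O ∧
      Disjoint (E ∪ O) F ∧ (E ∪ O).card ≤ 4 * j + 2 + 2 * j * K ∧
      ∀ v y, l ∈ walks G alternating v (4 * j + 2) y → G v b ∧ G x y := by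
  induction j generalizing l F with
  | zero =>
    obtain ⟨v, y, h⟩ := hex
    obtain ⟨z₂, l', rfl, -, h'⟩ := mem_walks_succ.1 h
    obtain ⟨z₁, l'', rfl, h21, h''⟩ := mem_walks_succ.1 h'
    obtain ⟨rfl, -⟩ := mem_walks_zero.1 h''
    have hne : z₂ ≠ z₁ := by simpa using hl
    have hG21 : G z₂ z₁ := by simpa [dirEdge, alternating] using h21
    refine ⟨z₂, z₁, z₂, z₁, {z₂}, {z₁}, ?_, .single _, .single _, by simpa using hne, ?_, ?_, ?_⟩
    · exact (DiPath.single z₂).append (.single z₁) hG21 (by simpa using hne)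
    · rw [Finset.disjoint_left]
      intro x hx
      exact hlF x (by simpa [or_comm] using hx)
    · exact (Finset.card_union_le _ _).trans (by simp)
    · intro v y h
      obtain ⟨z, l', hz, hzy, h'⟩ := mem_walks_succ.1 h
      obtain ⟨rfl, rfl⟩ := List.cons.inj hz
      obtain ⟨z', l'', hz', -, h''⟩ := mem_walks_succ.1 h'
      obtain ⟨rfl, rfl⟩ := List.cons.inj hz'
      exact ⟨by simpa [dirEdge, alternating] using (mem_walks_zero.1 h'').2,
        by simpa [dirEdge, alternating] using hzy⟩
  | succ j ih =>
    obtain ⟨v, y, h⟩ := hex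
    obtain ⟨x₃, x₃', x₂, x₂', l', rfl, -, h33, h23, h22, hl'⟩ := exists_of_mem_walks_alternating h
    set N : Finset V := {x₃, x₃', x₂, x₂'} with hN
    have hNcard : N.card ≤ 4 := Finset.card_le_four
    have hexp : 2 * (j + 1) * K = 2 * j * K + 2 * K := by ring
    rw [hexp] at hF ⊢
    have hlN : [x₃, x₃', x₂, x₂'].Nodup := hl.sublist
      (List.Sublist.cons_cons _ (.cons_cons _ (.cons_cons _ (.cons_cons _ (List.nil_sublist _)))))
    simp only [List.nodup_cons, List.mem_cons, not_or] at hl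
    obtain ⟨⟨-, -, -, n4⟩, ⟨-, -, n7⟩, ⟨-, n9⟩, n10, hl'nd⟩ := hl
    have hFN : (F ∪ N).card ≤ F.card + 4 := (Finset.card_union_le _ _).trans (by omega)
    obtain ⟨a, b, x, x', E, O, hQ, hE, hO, hEO, hEOF, hcard, habs⟩ := ih l' hl'nd ⟨v, x₂', hl'⟩
      (F ∪ N) (by
        intro x hx
        simp only [hN, Finset.mem_union, Finset.mem_insert, Finset.mem_singleton, not_or]
        refine ⟨hlF x (by simp [hx]), ?_, ?_, ?_, ?_⟩ <;> rintro rfl <;> contradiction)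
      (by omega)
    have hU : (E ∪ O ∪ (F ∪ N)).card ≤ 4 * j + 2 + 2 * j * K + (F.card + 4) :=
      (Finset.card_union_le _ _).trans (by omega)
    obtain ⟨p, q, C, hpq, hxp, hqx, -, hCU, hCcard⟩ := hC (E ∪ O ∪ (F ∪ N)) (by omega) x' x₂
    obtain ⟨p', q', C', hpq', hxp', hqx', -, hCU', hCcard'⟩ :=
      hC (E ∪ O ∪ (F ∪ N) ∪ C) ((Finset.card_union_le _ _).trans (by omega)) x₂' x₃
    obtain ⟨-, hxx₂⟩ := habs v x₂' hl'
    simp only [Finset.disjoint_union_right, Finset.disjoint_union_left] at hEOF hCU hCU'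
    obtain ⟨⟨hEF, hOF⟩, hEN, hON⟩ := hEOF
    obtain ⟨⟨hCE, hCO⟩, hCF, hCN⟩ := hCU
    obtain ⟨⟨⟨hC'E, hC'O⟩, hC'F, hC'N⟩, hC'C⟩ := hCU'
    obtain ⟨hnewQ, hnewE, hnewO, hnew⟩ := hQ.extend_pair hE hO hEO hpq hpq' hxp hqx hxp' hqx' hxx₂
      h33 h23 h22 hEN hON hCN hC'N hCE.symm hCO.symm hC'E.symm hC'O.symm hC'C.symm hlN
    refine ⟨a, b, x₃, x₃', E ∪ {x₂'} ∪ C' ∪ {x₃}, O ∪ C ∪ {x₂} ∪ {x₃'}, hnewQ, hnewE, hnewO, hnew,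
      ?_, ?_, ?_⟩
    · simp only [List.mem_cons, forall_eq_or_imp] at hlF
      simp only [Finset.disjoint_union_left, Finset.disjoint_singleton_left]
      exact ⟨⟨⟨⟨hEF, hlF.2.2.2.1⟩, hC'F⟩, hlF.1⟩, ⟨⟨hOF, hCF⟩, hlF.2.2.1⟩, hlF.2.1⟩
    · have k0 := Finset.card_union_le E O
      have k1 := Finset.card_union_le (E ∪ {x₂'} ∪ C' ∪ {x₃}) (O ∪ C ∪ {x₂} ∪ {x₃'})
      have k2 := Finset.card_union_le (E ∪ {x₂'} ∪ C') {x₃}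
      have k3 := Finset.card_union_le (E ∪ {x₂'}) C'
      have k4 := Finset.card_union_le E {x₂'}
      have k5 := Finset.card_union_le (O ∪ C ∪ {x₂}) {x₃'}
      have k6 := Finset.card_union_le (O ∪ C) {x₂}
      have k7 := Finset.card_union_le O C
      rw [Finset.card_union_of_disjoint hEO] at hcard
      simp only [Finset.card_singleton] at k2 k4 k5 k6
      omega
    · intro v y h
      obtain ⟨y₃, y₃', y₂, y₂', l'', heq, h3, -, -, -, hl''⟩ := exists_of_mem_walks_alternating h
      simp only [List.cons.injEq] at heq
      obtain ⟨rfl, rfl, rfl, rfl, rfl⟩ := heq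
      exact ⟨(habs v _ hl'').1, h3⟩

/-- There is a path that can absorb any set of vertices assigned injectively to the closed
alternating walks in a packing. -/
theorem HasConnectors.exists_absorbing_path [Nonempty V] (hC : HasConnectors G Finset.univ B K)
    {j m : ℕ} (hm : 2 * (4 * j + 2) + 2 * j * K + K ≤ m) (A : Finset (List V)) (F : Finset V)
    (hA : IsPacking F A) (hwalk : ∀ l ∈ A, ∃ v, l ∈ walks G alternating v (4 * j + 2) v)
    (hB : F.card + A.card * m + K ≤ B) :
    ∃ u v X, Disjoint X F ∧ X.card ≤ A.card * m + K ∧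
      ∀ (W : Finset V) (φ : V → List V), Disjoint X W → Set.InjOn φ W →
        (∀ w ∈ W, φ w ∈ A ∧ φ w ∈ walks G alternating w (4 * j + 2) w) →
        DiPath G u v (X ∪ W) := by
  induction A using Finset.induction_on generalizing F with
  | empty =>
    obtain ⟨z⟩ := ‹Nonempty V›
    obtain ⟨a, b, C, hab, -, -, -, hCF, hcard⟩ := hC F (by omega) z z
    refine ⟨a, b, C, hCF, by simpa using hcard, fun W φ _ _ hφ => ?_⟩
    have hW : W = ∅ := Finset.eq_empty_of_forall_notMem fun w hw => by simpa using (hφ w hw).1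
    simpa [hW] using hab
  | insert l A hlA ih =>
    rw [Finset.card_insert_of_notMem hlA, add_mul, one_mul] at hB ⊢
    obtain ⟨v₀, hv₀⟩ := hwalk l (Finset.mem_insert_self _ _)
    have hllen : l.toFinset.card ≤ 4 * j + 2 :=
      (List.toFinset_card_le l).trans (length_of_mem_walks hv₀).le
    have hFl : (F ∪ l.toFinset).card ≤ F.card + (4 * j + 2) :=
      (Finset.card_union_le _ _).trans (by omega)
    obtain ⟨u, v, X, hXF, hXcard, hX⟩ := ih (F ∪ l.toFinset)
      ⟨fun l' hl' => hA.nodup l' (Finset.mem_insert_of_mem hl'), fun l' hl' x hx => by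
        rw [Finset.mem_union, List.mem_toFinset, not_or]
        exact ⟨hA.avoid l' (Finset.mem_insert_of_mem hl') x hx, hA.disjoint l'
          (Finset.mem_insert_of_mem hl') l (Finset.mem_insert_self _ _)
          (ne_of_mem_of_not_mem hl' hlA) x hx⟩,
        fun l₁ h₁ l₂ h₂ => hA.disjoint l₁ (Finset.mem_insert_of_mem h₁) l₂
          (Finset.mem_insert_of_mem h₂)⟩
      (fun l' hl' => hwalk l' (Finset.mem_insert_of_mem hl')) (by omega)
    rw [Finset.disjoint_union_right] at hXF
    have hFX : (F ∪ X).card ≤ F.card + (A.card * m + K) :=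
      (Finset.card_union_le _ _).trans (by omega)
    obtain ⟨a, b, x, x', E, O, hQ, hE, hO, hEO, hEOF, hcard, habs⟩ := hC.exists_gadget j l
      (hA.nodup l (Finset.mem_insert_self _ _)) ⟨v₀, v₀, hv₀⟩ (F ∪ X) (by
        intro x hx
        rw [Finset.mem_union, not_or]
        exact ⟨hA.avoid l (Finset.mem_insert_self _ _) x hx,
          fun hxX => Finset.disjoint_left.1 hXF.2 hxX (by simpa using hx)⟩) (by omega)
    obtain ⟨p, q, C, hpq, hvp, hqa, -, hCU, hCcard⟩ := hC (E ∪ O ∪ (F ∪ X))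
      ((Finset.card_union_le _ _).trans (by omega)) v a
    simp only [Finset.disjoint_union_right, Finset.disjoint_union_left] at hEOF hCU
    obtain ⟨⟨hEF, hOF⟩, hEX, hOX⟩ := hEOF
    obtain ⟨⟨hCE, hCO⟩, hCF, hCX⟩ := hCU
    refine ⟨u, x', X ∪ C ∪ (E ∪ O), ?_, ?_, ?_⟩
    · simp only [Finset.disjoint_union_left]
      exact ⟨⟨hXF.1, hCF⟩, hEF, hOF⟩
    · have k1 := Finset.card_union_le (X ∪ C) (E ∪ O)
      have k2 := Finset.card_union_le X C
      omega
    · intro W φ hXW hφ hW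
      simp only [Finset.disjoint_union_left] at hXW
      obtain ⟨⟨hXW, hCW⟩, hEW, hOW⟩ := hXW
      by_cases hw : ∃ w ∈ W, φ w = l
      · obtain ⟨w, hw, hwl⟩ := hw
        have hpath := hX (W.erase w) φ (hXW.mono_right (Finset.erase_subset _ _))
          (hφ.mono (by simp)) (fun w' hw' => by
            obtain ⟨hne, hw'⟩ := Finset.mem_erase.1 hw'
            refine ⟨Finset.mem_of_mem_insert_of_ne (hW w' hw').1 fun h => hne ?_, (hW w' hw').2⟩
            exact hφ hw' hw (h.trans hwl.symm))
        obtain ⟨hwb, hxw⟩ := habs w w (hwl ▸ (hW w hw).2)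
        have hwX : w ∉ X := fun h => Finset.disjoint_left.1 hXW h hw
        have hwC : w ∉ C := fun h => Finset.disjoint_left.1 hCW h hw
        have hwE : w ∉ E := fun h => Finset.disjoint_left.1 hEW h hw
        have hwO : w ∉ O := fun h => Finset.disjoint_left.1 hOW h hw
        have hW' := fun (S : Finset V) (hS : Disjoint S W) =>
          (hS.mono_right (Finset.erase_subset w W)).symm
        have hQ' : DiPath G a x' (E ∪ {w} ∪ O) :=
          (hE.append (.single w) hxw (by simpa using hwE)).append hO hwb
            (by simp [hEO, hwO])
        have := (hpath.append hpq hvp (by simp [hCX.symm, hW' C hCW])).append hQ' hqa (by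
          simp [hEX.symm, hwX, hOX.symm, hW' E hEW, hW' O hOW, hCE, hwC, hCO])
        convert this using 1
        ext z
        simp only [Finset.mem_union, Finset.mem_erase, Finset.mem_singleton]
        by_cases hz : z = w
        · simp [hz, hw]
        · simp only [hz]; tauto
      · push Not at hw
        have hpath := hX W φ hXW hφ fun w hw' =>
          ⟨Finset.mem_of_mem_insert_of_ne (hW w hw').1 (hw w hw'), (hW w hw').2⟩
        have := (hpath.append hpq hvp (by simp [hCX.symm, hCW.symm])).append hQ hqa (by
          simp [hEX.symm, hOX.symm, hEW.symm, hOW.symm, hCE, hCO])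
        convert this using 1
        ext z
        simp only [Finset.mem_union]
        tauto

end Absorbers

section Assembly

open scoped Classical

/-- A form of Hall's theorem: if every `D w` is large, then there are distinct representatives. -/
theorem exists_injOn_mem {α β : Type*} [Inhabited β] {A : Finset β} {D : α → Finset β}
    {W : Finset α} (h : ∀ w ∈ W, W.card ≤ (A.filter (· ∈ D w)).card) :
    ∃ φ : α → β, Set.InjOn φ W ∧ ∀ w ∈ W, φ w ∈ A ∧ φ w ∈ D w := by
  obtain ⟨f, hf, hfD⟩ := (Finset.all_card_le_biUnion_card_iff_exists_injective
    (fun w : W => A.filter (· ∈ D w))).1 (by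
      intro s
      rcases s.eq_empty_or_nonempty with rfl | ⟨w, hw⟩
      · simp
      · calc s.card ≤ W.card := by simpa using s.card_le_univ
          _ ≤ _ := h w w.2
          _ ≤ _ := Finset.card_le_card
            (Finset.subset_biUnion_of_mem (fun w : W => A.filter (· ∈ D w)) hw))
  refine ⟨fun w => if hw : w ∈ W then f ⟨w, hw⟩ else default, ?_, ?_⟩
  · intro w hw w' hw' hww
    rw [Finset.mem_coe] at hw hw'
    simp only [hw, hw', dif_pos] at hww
    simpa using hf hww
  · intro w hw
    simpa [hw] using hfD ⟨w, hw⟩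

variable {V : Type*} [Fintype V] {G : V → V → Prop} {B K : ℕ}

/-- An absorbing path, a reservoir of connectors and a path cover of the remaining vertices yield a
Hamilton cycle. -/
theorem HasConnectors.exists_isHamCycle {R X : Finset V} (hR : HasConnectors G R B K)
    (hXR : Disjoint X R) {u v : V} (hX : ∀ W ⊆ R, DiPath G u v (X ∪ W)) {T : Finset (Finset V)}
    (hT : T.Nonempty) (hpath : ∀ P ∈ T, ∃ a b, DiPath G a b P)
    (hdisj : ∀ P ∈ T, ∀ Q ∈ T, P ≠ Q → Disjoint P Q) (hcover : T.biUnion id = (X ∪ R)ᶜ)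
    (hB : T.card * K + 2 * K ≤ B) : ∃ f, IsHamCycle G f := by
  have hTXR : Disjoint (T.biUnion id) (X ∪ R) := by
    rw [hcover]
    exact disjoint_compl_left
  rw [Finset.disjoint_union_right] at hTXR
  obtain ⟨a, b, C₀, hab, hC₀, hcard₀⟩ := hR.exists_path hT hpath hdisj (fun P hP =>
    hTXR.2.mono_left (Finset.subset_biUnion_of_mem id hP)) (by omega)
  obtain ⟨p, q, C₁, hpq, hvp, hqa, hC₁, hdisj₁, hcard₁⟩ := hR C₀ (by omega) v a
  obtain ⟨p', q', C₂, hpq', hbp, hqu, hC₂, hdisj₂, -⟩ := hR (C₀ ∪ C₁)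
    ((Finset.card_union_le _ _).trans (by omega)) b u
  rw [Finset.disjoint_union_right] at hdisj₂
  have hW : Disjoint (R \ (C₀ ∪ C₁ ∪ C₂)) (C₀ ∪ C₁ ∪ C₂) := Finset.sdiff_disjoint
  simp only [Finset.disjoint_union_right] at hW
  obtain ⟨⟨hW₀, hW₁⟩, hW₂⟩ := hW
  set W := R \ (C₀ ∪ C₁ ∪ C₂) with hWdef
  have hWR : W ⊆ R := Finset.sdiff_subset
  have h₁ := (hX W hWR).append hpq hvp (by
    rw [Finset.disjoint_union_left]
    exact ⟨hXR.mono_right hC₁, hW₁⟩)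
  have h₂ := h₁.append hab hqa (by
    simp only [Finset.disjoint_union_left, Finset.disjoint_union_right]
    exact ⟨⟨⟨hTXR.1.symm, (hTXR.2.mono_right hWR).symm⟩, (hTXR.2.mono_right hC₁).symm⟩,
      ⟨hXR.mono_right hC₀, hW₀⟩, hdisj₁⟩)
  have h₃ := h₂.append hpq' hbp (by
    simp only [Finset.disjoint_union_left]
    exact ⟨⟨⟨hXR.mono_right hC₂, hW₂⟩, hdisj₂.2.symm⟩, hTXR.2.mono_right hC₂, hdisj₂.1.symm⟩)
  refine DiPath.exists_isHamCycle (a := u) (b := q') ?_ hqu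
  convert h₃ using 1
  ext z
  simp only [hcover, hWdef, Finset.mem_union, Finset.mem_compl, Finset.mem_sdiff,
    Finset.mem_univ, true_iff]
  tauto

/-- The Ore-type condition passes to large induced subgraphs. -/
theorem OreCondition.induce {α : ℝ} (h : OreCondition G α) (hα : 0 ≤ α) {S : Finset V}
    (hS : (S.card : ℝ) ≤ α / 4 * Fintype.card V) :
    OreCondition (fun x y : {x // x ∉ S} => G x y) (α / 2) := by
  intro x y hxy hG
  have hdeg : ∀ P : V → Prop, ((Finset.univ.filter P).card : ℝ) ≤
      (Finset.univ.filter fun z : {x // x ∉ S} => P z).card + S.card := by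
    intro P
    have : Finset.univ.filter P ⊆
        (Finset.univ.filter fun z : {x // x ∉ S} => P z).map (Function.Embedding.subtype _) ∪ S := by
      intro z hz
      by_cases hzS : z ∈ S <;> simp_all
    have h' := (Finset.card_le_card this).trans (Finset.card_union_le _ _)
    rw [Finset.card_map] at h'
    exact_mod_cast h'
  have h₁ := h x y (fun h => hxy (Subtype.ext h)) hG
  have h₂ := hdeg (fun z => G x z)
  have h₃ := hdeg (fun z => G z y)
  have h₄ : (Fintype.card {x // x ∉ S} : ℝ) ≤ Fintype.card V := by
    exact_mod_cast Fintype.card_subtype_le _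
  have h₅ : (3 / 4 + α / 2) * (Fintype.card {x // x ∉ S} : ℝ) ≤
      (3 / 4 + α / 2) * Fintype.card V := by gcongr
  linarith

/-- After deleting a small set of vertices, an oriented graph with the Ore-type condition can be
covered by few disjoint paths. -/
theorem OreCondition.exists_paths {α ε : ℝ} (hα : 0 < α) (hα' : α ≤ 1 / 32) (hε : 0 < ε) :
    ∃ n₀ : ℕ, ∀ (V : Type) [Fintype V] (G : V → V → Prop), n₀ ≤ Fintype.card V → IsOriented G →
      OreCondition G α → ∀ S : Finset V, (S.card : ℝ) ≤ α / 4 * Fintype.card V →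
      ∃ T : Finset (Finset V), T.Nonempty ∧ (∀ P ∈ T, ∃ a b, DiPath G a b P) ∧
        (∀ P ∈ T, ∀ Q ∈ T, P ≠ Q → Disjoint P Q) ∧ T.biUnion id = Sᶜ ∧
        (T.card : ℝ) ≤ ε * Fintype.card V := by
  obtain ⟨ν, hν⟩ : ∃ ν : ℝ, ν = (α / 2) ^ 3 / 300 := ⟨_, rfl⟩
  have hν0 : 0 < ν := by rw [hν]; positivity
  have hν1 : ν ≤ 1 / 16 := by
    have : (α / 2) ^ 3 ≤ 1 ^ 3 := pow_le_pow_left₀ (by positivity) (by linarith) 3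
    rw [hν]
    linarith
  obtain ⟨n₁, hn₁⟩ := exists_isPathCover ν ε hν0 hν1 hε
  refine ⟨2 * n₁ + ⌈2 / ν⌉₊ + 1, fun V _ G hn hG hO S hS => ?_⟩
  have hcardS : (Fintype.card {x // x ∉ S} : ℝ) = Fintype.card V - S.card := by
    rw [eq_sub_iff_add_eq]
    have := Fintype.card_subtype_compl (fun x => x ∈ S)
    have h' := S.card_le_univ
    simp only [Fintype.card_coe] at this
    rw [this]
    exact_mod_cast Nat.sub_add_cancel h'
  have hn' : ((2 * n₁ + ⌈2 / ν⌉₊ + 1 : ℕ) : ℝ) ≤ Fintype.card V := by exact_mod_cast hn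
  push_cast at hn'
  have hceil := Nat.le_ceil (2 / ν)
  have hhalf : (Fintype.card V : ℝ) / 2 ≤ Fintype.card {x // x ∉ S} := by
    rw [hcardS]
    nlinarith
  have hn₁' : n₁ ≤ Fintype.card {x // x ∉ S} := by
    have : (n₁ : ℝ) ≤ Fintype.card {x // x ∉ S} := by
      have : (0 : ℝ) ≤ 2 / ν := by positivity
      linarith
    exact_mod_cast this
  have h1ν : 1 ≤ ν * Fintype.card {x // x ∉ S} := by
    have : 1 / ν ≤ Fintype.card {x // x ∉ S} := by
      have h₀ : (0 : ℝ) ≤ n₁ := by positivity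
      have : 2 / ν = 2 * (1 / ν) := by ring
      linarith
    rw [div_le_iff₀ hν0] at this
    linarith
  have hexp := (hO.induce hα.le hS).isExpander (fun x y => hG x y) (half_pos hα) (by linarith) hν h1ν
  obtain ⟨T, hT, hTcard⟩ := hn₁ {x // x ∉ S} _ hn₁' hexp
  let e : {x // x ∉ S} ↪ V := Function.Embedding.subtype _
  refine ⟨T.image (Finset.map e), ?_, ?_, ?_, ?_, ?_⟩
  · have : 0 < Fintype.card {x // x ∉ S} := by
      have : (0 : ℝ) < Fintype.card {x // x ∉ S} := by nlinarith
      exact_mod_cast this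
    obtain ⟨x⟩ := Fintype.card_pos_iff.1 this
    obtain ⟨P, hP, -⟩ := hT.cover x
    exact ⟨_, Finset.mem_image_of_mem _ hP⟩
  · intro P' hP'
    obtain ⟨P, hP, rfl⟩ := Finset.mem_image.1 hP'
    obtain ⟨a, b, hab⟩ := hT.path P hP
    exact ⟨e a, e b, hab.map e fun x y h => h⟩
  · intro P' hP' Q' hQ' hPQ
    obtain ⟨P, hP, rfl⟩ := Finset.mem_image.1 hP'
    obtain ⟨Q, hQ, rfl⟩ := Finset.mem_image.1 hQ'
    rw [Finset.disjoint_map]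
    exact hT.disjoint P hP Q hQ fun h => hPQ (by rw [h])
  · ext x
    simp only [Finset.mem_biUnion, Finset.mem_image, exists_exists_and_eq_and, id,
      Finset.mem_compl]
    constructor
    · rintro ⟨P, -, hx⟩
      obtain ⟨y, -, rfl⟩ := Finset.mem_map.1 hx
      exact y.2
    · intro hx
      obtain ⟨P, hP, hxP⟩ := hT.cover ⟨x, hx⟩
      exact ⟨P, hP, Finset.mem_map.2 ⟨_, hxP, rfl⟩⟩
  · calc ((T.image (Finset.map e)).card : ℝ) ≤ T.card := by exact_mod_cast Finset.card_image_le
      _ ≤ ε * Fintype.card {x // x ∉ S} := hTcard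
      _ ≤ ε * Fintype.card V := by
        gcongr
        exact_mod_cast Fintype.card_subtype_le _

/-- A robust expander has a short path absorbing every subset of any sufficiently small set. -/
theorem IsExpander.exists_absorber {ν δ : ℝ} {j : ℕ} (hν : 0 < ν) (hν' : ν ≤ 1 / 16)
    (hj : 1 ≤ j * ν) (hδ : 0 < δ) :
    ∃ γ : ℝ, 0 < γ ∧ ∃ n₀ : ℕ, ∀ (V : Type) [Fintype V] (G : V → V → Prop), n₀ ≤ Fintype.card V →
      IsExpander G ν → ∃ u v X, (X.card : ℝ) ≤ δ * Fintype.card V ∧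
        ∀ R : Finset V, Disjoint X R → (R.card : ℝ) ≤ γ * Fintype.card V →
          ∀ W ⊆ R, DiPath G u v (X ∪ W) := by
  obtain ⟨K, hK⟩ : ∃ K, K = 4 * j + 1 + 1 := ⟨_, rfl⟩
  obtain ⟨m, hm⟩ : ∃ m, m = 2 * K + 2 * j * K + K := ⟨_, rfl⟩
  obtain ⟨c, hc⟩ : ∃ c, c = ν ^ K := ⟨_, rfl⟩
  have hc0 : 0 < c := by rw [hc]; positivity
  have hc1 : c ≤ 1 := by rw [hc]; exact pow_le_one₀ hν.le (by linarith)
  have hK0 : (0 : ℝ) < K := by rw [hK]; positivity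
  have hm0 : (0 : ℝ) < m := by
    have : 0 < m := by omega
    exact_mod_cast this
  have hj' : 1 ≤ ((4 * j + 1 : ℕ) : ℝ) * ν := by
    push_cast
    have : 0 ≤ (j : ℝ) * ν := by positivity
    linarith
  obtain ⟨β, hβ⟩ : ∃ β, β = min (min (δ / 2 / m) (c / (8 * K) / m)) (c / (8 * K) / K) := ⟨_, rfl⟩
  have hβ0 : 0 < β := by rw [hβ]; positivity
  have hβK : β * K ≤ c / (8 * K) := by
    rw [← le_div_iff₀ hK0, hβ]
    exact min_le_right _ _
  have hβδ : β * m ≤ δ / 2 := by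
    rw [← le_div_iff₀ hm0, hβ]
    exact (min_le_left _ _).trans (min_le_left _ _)
  have hβc : β * m ≤ c / (8 * K) := by
    rw [← le_div_iff₀ hm0, hβ]
    exact (min_le_left _ _).trans (min_le_right _ _)
  obtain ⟨n₁, hn₁⟩ := exists_packing c β K hc0 hc1 hβ0 (by omega) hβK
  obtain ⟨n₂, hn₂⟩ := exists_nat_ge (K / (δ / 2))
  obtain ⟨n₃, hn₃⟩ := exists_nat_ge ((2 * K + 2) / (c / (8 * K)))
  refine ⟨c * β / 8, by positivity, n₁ + n₂ + n₃ + 1, fun V _ G hn hG => ?_⟩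
  have : Nonempty V := Fintype.card_pos_iff.1 (by omega)
  have hn₂' : K / (δ / 2) ≤ Fintype.card V :=
    hn₂.trans (by exact_mod_cast (by omega : n₂ ≤ Fintype.card V))
  have hn₃' : (2 * K + 2) / (c / (8 * K)) ≤ Fintype.card V :=
    hn₃.trans (by exact_mod_cast (by omega : n₃ ≤ Fintype.card V))
  rw [div_le_iff₀ (by positivity)] at hn₂' hn₃'
  obtain ⟨A, hAcard, hA, hAD, hAw⟩ := hn₁ V (by omega) V
    (fun w => walks G alternating w (4 * j + 1 + 1) w) ∅ (Nat.le_self_pow two_ne_zero _)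
    (fun w l hl => hK ▸ length_of_mem_walks hl)
    (fun w => by
      rw [hc, ← mul_pow, hK]
      exact hG.card_walks_ge hν.le hν' _ w w hj')
    (by simp only [Finset.card_empty, Nat.cast_zero]; positivity)
  have hAm : (A.card * m : ℝ) ≤ δ / 2 * Fintype.card V :=
    calc (A.card * m : ℝ) ≤ β * Fintype.card V * m := by gcongr
      _ = β * m * Fintype.card V := by ring
      _ ≤ _ := by gcongr
  have hAm' : (A.card * m : ℝ) ≤ c / (8 * K) * Fintype.card V :=
    calc (A.card * m : ℝ) ≤ β * Fintype.card V * m := by gcongr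
      _ = β * m * Fintype.card V := by ring
      _ ≤ _ := by gcongr
  have hcon : HasConnectors G Finset.univ (A.card * m + K) K := by
    rw [hK]
    refine hG.hasConnectors hν hν' hj' ?_
    rw [← hK, ← hc]
    have : c / (2 * K) = 4 * (c / (8 * K)) := by field_simp; norm_num
    rw [this]
    push_cast
    have : 0 ≤ c / (8 * K) * Fintype.card V := by positivity
    linarith
  obtain ⟨u, v, X, -, hX, habs⟩ := hcon.exists_absorbing_path (j := j) (m := m) (by omega) A ∅ hA hAD
    (by simp)
  refine ⟨u, v, X, ?_, fun R hXR hR W hWR => ?_⟩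
  · calc (X.card : ℝ) ≤ A.card * m + K := by exact_mod_cast hX
      _ ≤ _ := by linarith
  · obtain ⟨φ, hφ, hφA⟩ := exists_injOn_mem (A := A) (W := W)
      (D := fun w => walks G alternating w (4 * j + 1 + 1) w) fun w _ => by
        have h₁ : (W.card : ℝ) ≤ R.card := by exact_mod_cast Finset.card_le_card hWR
        have h₂ := (h₁.trans hR).trans (hAw w)
        rw [Nat.cast_le] at h₂
        convert h₂
    exact habs W φ (hXR.mono_right hWR) hφ hφA

/-- A robust expander has a small set of vertices containing many connectors for each pair. -/
theorem IsExpander.exists_reservoir {ν δ : ℝ} {j : ℕ} (hν : 0 < ν) (hν' : ν ≤ 1 / 16)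
    (hj : 1 ≤ j * ν) (hδ : 0 < δ) :
    ∃ γ : ℝ, 0 < γ ∧ ∃ n₀ : ℕ, ∀ (V : Type) [Fintype V] (G : V → V → Prop), n₀ ≤ Fintype.card V →
      IsExpander G ν → ∀ F : Finset V,
        (F.card : ℝ) ≤ ν ^ (j + 1) / (8 * (j + 1 : ℕ)) * Fintype.card V →
        ∃ R, Disjoint F R ∧ (R.card : ℝ) ≤ δ * Fintype.card V ∧
          ∀ B : ℕ, B < γ * Fintype.card V → HasConnectors G R B (j + 1) := by
  obtain ⟨K, hK⟩ : ∃ K, K = j + 1 := ⟨_, rfl⟩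
  rw [← hK]
  obtain ⟨c, hc⟩ : ∃ c, c = ν ^ K := ⟨_, rfl⟩
  rw [← hc]
  have hc0 : 0 < c := by rw [hc]; positivity
  have hc1 : c ≤ 1 := by rw [hc]; exact pow_le_one₀ hν.le (by linarith)
  have hK0 : (0 : ℝ) < K := by rw [hK]; positivity
  obtain ⟨β, hβ⟩ : ∃ β, β = min (δ / K) (c / (8 * K) / K) := ⟨_, rfl⟩
  have hβ0 : 0 < β := by rw [hβ]; positivity
  have hβK : β * K ≤ c / (8 * K) := by
    rw [← le_div_iff₀ hK0, hβ]
    exact min_le_right _ _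
  have hβδ : β * K ≤ δ := by
    rw [← le_div_iff₀ hK0, hβ]
    exact min_le_left _ _
  obtain ⟨n₁, hn₁⟩ := exists_packing c β K hc0 hc1 hβ0 (by omega) hβK
  refine ⟨c * β / 8, by positivity, n₁, fun V _ G hn hG F hF => ?_⟩
  obtain ⟨T, hTcard, hT, hTD, hTw⟩ := hn₁ V hn (V × V)
    (fun i => walks G (fun _ => true) i.1 (j + 1) i.2) F (by rw [Fintype.card_prod, sq])
    (fun i l hl => hK ▸ length_of_mem_walks hl)
    (fun i => by
      rw [hc, ← mul_pow, hK]
      exact hG.card_walks_ge hν.le hν' _ _ _ hj) hF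
  refine ⟨T.biUnion List.toFinset, ?_, ?_, fun B hB => ?_⟩
  · rw [Finset.disjoint_biUnion_right]
    intro l hl
    rw [Finset.disjoint_right]
    exact fun x hx => hT.avoid l hl x (List.mem_toFinset.1 hx)
  · have h : (T.biUnion List.toFinset).card ≤ T.card * K :=
      Finset.card_biUnion_le_card_mul _ _ _ fun l hl => by
        obtain ⟨i, hi⟩ := hTD l hl
        exact (List.toFinset_card_le l).trans (hK ▸ length_of_mem_walks hi).le
    calc ((T.biUnion List.toFinset).card : ℝ) ≤ T.card * K := by exact_mod_cast h
      _ ≤ β * Fintype.card V * K := by gcongr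
      _ = β * K * Fintype.card V := by ring
      _ ≤ _ := by gcongr
  · rw [hK]
    exact hT.hasConnectors fun u v => by exact_mod_cast hB.trans_le (hTw (u, v))

theorem OreCondition.exists_isHamCycle {α : ℝ} (hα : 0 < α) (hα' : α ≤ 1 / 32) :
    ∃ n₀ : ℕ, ∀ (V : Type) [Fintype V] (G : V → V → Prop), n₀ ≤ Fintype.card V →
      IsOriented G → OreCondition G α → ∃ f, IsHamCycle G f := by
  obtain ⟨ν, hν⟩ : ∃ ν : ℝ, ν = α ^ 3 / 300 := ⟨_, rfl⟩
  have hν0 : 0 < ν := by rw [hν]; positivity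
  have hν1 : ν ≤ 1 / 16 := by
    have : α ^ 3 ≤ 1 := pow_le_one₀ hα.le (by linarith)
    rw [hν]
    linarith
  obtain ⟨j, hj⟩ := exists_nat_ge (1 / ν)
  rw [div_le_iff₀ hν0] at hj
  obtain ⟨K, hK⟩ : ∃ K, K = j + 1 := ⟨_, rfl⟩
  have hK0 : (0 : ℝ) < K := by rw [hK]; positivity
  obtain ⟨δ, hδ⟩ : ∃ δ, δ = min (ν ^ (j + 1) / (8 * (j + 1 : ℕ))) (α / 8) := ⟨_, rfl⟩
  have hδ0 : 0 < δ := by rw [hδ]; positivity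
  obtain ⟨γ, hγ, n₁, hn₁⟩ := IsExpander.exists_absorber hν0 hν1 hj hδ0
  obtain ⟨γ', hγ', n₂, hn₂⟩ := IsExpander.exists_reservoir hν0 hν1 hj
    (lt_min hγ (by positivity : 0 < α / 8))
  obtain ⟨n₃, hn₃⟩ := OreCondition.exists_paths hα hα' (by positivity : 0 < γ' / (2 * K))
  obtain ⟨n₄, hn₄⟩ := exists_nat_gt (2 * K / (γ' / 2))
  obtain ⟨n₅, hn₅⟩ := exists_nat_ge (1 / ν)
  refine ⟨n₁ + n₂ + n₃ + n₄ + n₅, fun V _ G hn hG hO => ?_⟩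
  have hn₄' : 2 * K / (γ' / 2) < Fintype.card V :=
    hn₄.trans_le (by exact_mod_cast (by omega : n₄ ≤ Fintype.card V))
  have hn₅' : 1 / ν ≤ Fintype.card V :=
    hn₅.trans (by exact_mod_cast (by omega : n₅ ≤ Fintype.card V))
  rw [div_lt_iff₀ (by positivity)] at hn₄'
  rw [div_le_iff₀ hν0, mul_comm] at hn₅'
  have hexp := hO.isExpander hG hα hα' hν hn₅'
  obtain ⟨u, v, X, hXcard, hX⟩ := hn₁ V G (by omega) hexp
  obtain ⟨R, hXR, hRcard, hR⟩ := hn₂ V G (by omega) hexp X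
    (hXcard.trans (by gcongr; rw [hδ]; exact min_le_left _ _))
  obtain ⟨T, hT, hpath, hdisj, hcover, hTcard⟩ := hn₃ V G (by omega) hG hO (X ∪ R) (by
    have h₁ : ((X ∪ R).card : ℝ) ≤ X.card + R.card := by exact_mod_cast Finset.card_union_le _ _
    have h₂ : (X.card : ℝ) ≤ α / 8 * Fintype.card V :=
      hXcard.trans (by gcongr; rw [hδ]; exact min_le_right _ _)
    have h₃ : (R.card : ℝ) ≤ α / 8 * Fintype.card V :=
      hRcard.trans (by gcongr; exact min_le_right _ _)
    linarith)
  refine (hR (T.card * K + 2 * K) ?_).exists_isHamCycle hXR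
    (hX R hXR (hRcard.trans (by gcongr; exact min_le_left _ _))) hT hpath hdisj hcover
    (by rw [hK])
  push_cast
  have : (T.card * K : ℝ) ≤ γ' / 2 * Fintype.card V :=
    calc (T.card * K : ℝ) ≤ γ' / (2 * K) * Fintype.card V * K := by gcongr
      _ = _ := by field_simp
  linarith

end Assembly

/-- For every α > 0 there exists n₀ such that every oriented graph on n ≥ n₀ vertices
satisfying d⁺(x) + d⁻(y) ≥ (3/4 + α)n whenever there is no edge from x to y (x ≠ y)
contains a Hamilton cycle. -/
theorem oriented_hamilton_ore (α : ℝ) (hα : 0 < α) :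
    ∃ n₀ : ℕ, ∀ (V : Type) [Fintype V] (G : V → V → Prop),
      IsOriented G →
      n₀ ≤ Fintype.card V →
      (∀ x y : V, x ≠ y → ¬ G x y →
        (3 / 4 + α) * (Fintype.card V : ℝ) ≤ (outDeg G x : ℝ) + (inDeg G y : ℝ)) →
      ∃ f : ZMod (Fintype.card V) → V, IsHamCycle G f := by
  obtain ⟨n₀, hn₀⟩ := OreCondition.exists_isHamCycle (lt_min hα (by norm_num : (0 : ℝ) < 1 / 32))
    (min_le_right _ _)
  refine ⟨n₀, fun V _ G hG hn h => hn₀ V G hn hG fun x y hxy hxG => ?_⟩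
  classical
  have h' := h x y hxy hxG
  rw [outDeg, inDeg, Nat.card_eq_fintype_card, Nat.card_eq_fintype_card, Fintype.card_subtype,
    Fintype.card_subtype] at h'
  refine le_trans ?_ (h'.trans (le_of_eq ?_))
  · gcongr
    exact min_le_left _ _
  · congr!
end

section
/- Let G be a strongly connected digraph on n ≥ 2 vertices. If d⁺(x) + d⁻(y) ≥ n for every ordered pair of distinct vertices x, y for which there is no edge from x to y, then G has a Hamilton cycle. -/
/-- A digraph is strongly connected if there is a directed path between any two vertices. -/
def StronglyConnected {V : Type*} (G : V → V → Prop) : Prop :=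
  ∀ x y : V, Relation.ReflTransGen G x y

/-- `DiPath G u v S`: there is a directed path from `u` to `v` with vertex set exactly `S`. -/
inductive DiPath_s8 {V : Type*} [DecidableEq V] (G : V → V → Prop) : V → V → Finset V → Prop
  | single (u : V) : DiPath_s8 G u u {u}
  | cons {u w v : V} {S : Finset V} :
      G u w → DiPath_s8 G w v S → u ∉ S → DiPath_s8 G u v (insert u S)

/-- `DiLink G a b M`: one can go from `a` to `b` along a path whose set of inner vertices
is `M`. -/
def DiLink {V : Type*} [DecidableEq V] (G : V → V → Prop) (a b : V) (M : Finset V) : Prop :=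
  (M = ∅ ∧ G a b) ∨ ∃ m m', G a m ∧ DiPath_s8 G m m' M ∧ G m' b

/-- `DiCycle G S`: there is a directed cycle with vertex set exactly `S`. -/
def DiCycle {V : Type*} [DecidableEq V] (G : V → V → Prop) (S : Finset V) : Prop :=
  ∃ u v, DiPath_s8 G u v S ∧ G v u

namespace DiPath_s8

variable {V : Type*} [DecidableEq V] {G : V → V → Prop}

theorem left_mem {u v : V} {S : Finset V} (h : DiPath_s8 G u v S) : u ∈ S := by
  cases h <;> simp

theorem append_s8 {u v w x : V} {S T : Finset V} (h : DiPath_s8 G u v S) (hvw : G v w)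
    (h' : DiPath_s8 G w x T) (hd : Disjoint S T) : DiPath_s8 G u x (S ∪ T) := by
  induction h with
  | single u =>
    rw [Finset.singleton_union]
    exact cons hvw h' (by simpa using hd)
  | cons hG _ hu ih =>
    rw [Finset.disjoint_insert_left] at hd
    rw [Finset.insert_union]
    exact cons hG (ih hvw hd.2) (by simp [hu, hd.1])

/-- Splitting a path just after one of its vertices. -/
theorem split_after {u v x : V} {S : Finset V} (h : DiPath_s8 G u v S) (hx : x ∈ S) :
    ∃ S₁ S₂, S₁ ∪ S₂ = S ∧ Disjoint S₁ S₂ ∧ DiPath_s8 G u x S₁ ∧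
      ((v = x ∧ S₂ = ∅) ∨ ∃ w, G x w ∧ DiPath_s8 G w v S₂) := by
  induction h with
  | single u =>
    obtain rfl : x = u := by simpa using hx
    exact ⟨{x}, ∅, by simp, by simp, single x, Or.inl ⟨rfl, rfl⟩⟩
  | @cons u w v S hG hp hu ih =>
    by_cases hxu : x = u
    · subst hxu
      exact ⟨{x}, S, Finset.singleton_union x S, by simpa using hu, single x,
        Or.inr ⟨w, hG, hp⟩⟩
    · obtain ⟨S₁, S₂, hS, hd, h₁, h₂⟩ := ih (by simpa [hxu] using hx)
      subst hS
      simp only [Finset.mem_union, not_or] at hu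
      exact ⟨insert u S₁, S₂, by simp [Finset.insert_union],
        by simp [hd, hu.2], cons hG h₁ hu.1, h₂⟩

/-- Splitting a path just before one of its vertices. -/
theorem split_before {u v x : V} {S : Finset V} (h : DiPath_s8 G u v S) (hx : x ∈ S) :
    ∃ S₁ S₂, S₁ ∪ S₂ = S ∧ Disjoint S₁ S₂ ∧ DiPath_s8 G x v S₂ ∧
      ((u = x ∧ S₁ = ∅) ∨ ∃ w, DiPath_s8 G u w S₁ ∧ G w x) := by
  induction h with
  | single u =>
    obtain rfl : x = u := by simpa using hx
    exact ⟨∅, {x}, by simp, by simp, single x, Or.inl ⟨rfl, rfl⟩⟩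
  | @cons u w v S hG hp hu ih =>
    by_cases hxu : x = u
    · subst hxu
      exact ⟨∅, insert x S, by simp, by simp, cons hG hp hu, Or.inl ⟨rfl, rfl⟩⟩
    · obtain ⟨S₁, S₂, hS, hd, h₁, h₂⟩ := ih (by simpa [hxu] using hx)
      subst hS
      simp only [Finset.mem_union, not_or] at hu
      refine ⟨insert u S₁, S₂, by simp [Finset.insert_union],
        by simp [hd, hu.2], h₁, Or.inr ?_⟩
      rcases h₂ with ⟨rfl, rfl⟩ | ⟨z, hz, hzx⟩
      · exact ⟨u, by simpa using single u, hG⟩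
      · exact ⟨z, cons hG hz hu.1, hzx⟩

/-- A walk starting with an edge and continuing along a path contains a path. -/
theorem exists_cons {u w v : V} {S : Finset V} (hG : G u w) (h : DiPath_s8 G w v S) :
    ∃ T ⊆ insert u S, DiPath_s8 G u v T := by
  by_cases hu : u ∈ S
  · obtain ⟨S₁, S₂, rfl, -, h₁, -⟩ := h.split_before hu
    exact ⟨S₂, fun z hz => by simp [hz], h₁⟩
  · exact ⟨_, subset_rfl, cons hG h hu⟩

/-- A walk continuing along a path and ending with an edge contains a path. -/
theorem exists_snoc {u w v : V} {S : Finset V} (h : DiPath_s8 G u w S) (hG : G w v) :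
    ∃ T ⊆ insert v S, DiPath_s8 G u v T := by
  by_cases hv : v ∈ S
  · obtain ⟨S₁, S₂, rfl, -, h₁, -⟩ := h.split_after hv
    exact ⟨S₁, fun z hz => by simp [hz], h₁⟩
  · exact ⟨S ∪ {v}, by intro z; simp, h.append_s8 hG (single v) (by simpa using hv)⟩

/-- The concatenation of two paths contains a path. -/
theorem exists_trans {u v w : V} {S T : Finset V} (h : DiPath_s8 G u v S) (h' : DiPath_s8 G v w T) :
    ∃ U ⊆ S ∪ T, DiPath_s8 G u w U := by
  induction h with
  | single u => exact ⟨T, Finset.subset_union_right, h'⟩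
  | cons hG _ _ ih =>
    obtain ⟨U, hU, hp⟩ := ih h'
    obtain ⟨U', hU', hp'⟩ := exists_cons hG hp
    refine ⟨U', hU'.trans ?_, hp'⟩
    rw [Finset.insert_union]
    exact Finset.insert_subset_insert _ hU

/-- A vertex that cannot be inserted in a path has few neighbours on it. -/
theorem insert_or_card_le [DecidableRel G] {u v : V} {S : Finset V} (h : DiPath_s8 G u v S) {x : V}
    (hx : x ∉ S) :
    DiPath_s8 G u v (insert x S) ∨
      (S.filter (G x)).card + (S.filter (G · x)).card ≤ S.card + if G x u then 1 else 0 := by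
  induction h with
  | single u =>
    right
    simp only [Finset.filter_singleton, Finset.card_singleton]
    split_ifs <;> simp
  | @cons u w v S hG hp hu ih =>
    simp only [Finset.mem_insert, not_or] at hx
    rcases ih hx.2 with h | h
    · left
      rw [Finset.insert_comm]
      exact cons hG h (by simp [hu, Ne.symm hx.1])
    by_cases hins : G u x ∧ G x w
    · left
      rw [Finset.insert_comm]
      exact cons hins.1 (cons hins.2 hp hx.2) (by simp [hu, Ne.symm hx.1])
    · right
      rw [Finset.filter_insert, Finset.filter_insert, Finset.card_insert_of_notMem hu]
      have h₁ : u ∉ S.filter (G x) := by simp [hu]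
      have h₂ : u ∉ S.filter (G · x) := by simp [hu]
      by_cases ha : G u x <;> by_cases hb : G x w <;> by_cases hc : G x u <;>
        simp_all [Finset.card_insert_of_notMem] <;> omega

/-- A path can be parametrised by natural numbers. -/
theorem exists_param {u v : V} {S : Finset V} (h : DiPath_s8 G u v S) :
    ∃ g : ℕ → V, g 0 = u ∧ g (S.card - 1) = v ∧ (∀ i, i + 1 < S.card → G (g i) (g (i + 1))) ∧
      ∀ x ∈ S, ∃ i < S.card, g i = x := by
  induction h with
  | single u => exact ⟨fun _ => u, rfl, rfl, by simp, by simp⟩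
  | @cons u w v S hG hp hu ih =>
    obtain ⟨g, h₀, h₁, h₂, h₃⟩ := ih
    have hpos : 0 < S.card := Finset.card_pos.2 ⟨_, hp.left_mem⟩
    rw [Finset.card_insert_of_notMem hu]
    refine ⟨fun i => Nat.casesOn i u g, rfl, ?_, ?_, ?_⟩
    · obtain ⟨k, hk⟩ : ∃ k, S.card = k + 1 := ⟨S.card - 1, by omega⟩
      simpa [hk] using h₁
    · rintro (_ | i) hi
      · simpa [h₀] using hG
      · exact h₂ i (by omega)
    · intro x hx
      rcases Finset.mem_insert.1 hx with rfl | hx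
      · exact ⟨0, by omega, rfl⟩
      · obtain ⟨i, hi, rfl⟩ := h₃ x hx
        exact ⟨i + 1, by omega, rfl⟩

/-- Following a walk to `y` backwards, either one never meets `S`, or some vertex of `S` is joined
to `y` by a path outside `S`. -/
theorem exists_to {S : Finset V} {c y : V} (hy : y ∉ S) (h : Relation.ReflTransGen G c y) :
    (c ∉ S ∧ ∃ U, DiPath_s8 G c y U ∧ Disjoint U S) ∨
      ∃ a ∈ S, ∃ p U, G a p ∧ DiPath_s8 G p y U ∧ Disjoint U S := by
  induction h using Relation.ReflTransGen.head_induction_on with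
  | refl => exact Or.inl ⟨hy, {y}, single y, by simpa using hy⟩
  | @head c d hcd _ ih =>
    rcases ih with ⟨hd, U, hU, hUS⟩ | h
    · by_cases hc : c ∈ S
      · exact Or.inr ⟨c, hc, d, U, hcd, hU, hUS⟩
      · obtain ⟨T, hT, hp⟩ := exists_cons hcd hU
        exact Or.inl ⟨hc, T, hp, Finset.disjoint_of_subset_left hT (by simp [hc, hUS])⟩
    · exact Or.inr h

/-- Following a walk from `y`, either one never meets `S`, or `y` is joined to some vertex of `S`
by a path outside `S`. -/
theorem exists_from {S : Finset V} {c y : V} (hy : y ∉ S) (h : Relation.ReflTransGen G y c) :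
    (c ∉ S ∧ ∃ U, DiPath_s8 G y c U ∧ Disjoint U S) ∨
      ∃ b ∈ S, ∃ p U, DiPath_s8 G y p U ∧ G p b ∧ Disjoint U S := by
  induction h with
  | refl => exact Or.inl ⟨hy, {y}, single y, by simpa using hy⟩
  | @tail d c _ hdc ih =>
    rcases ih with ⟨hd, U, hU, hUS⟩ | h
    · by_cases hc : c ∈ S
      · exact Or.inr ⟨c, hc, d, U, hU, hdc, hUS⟩
      · obtain ⟨T, hT, hp⟩ := exists_snoc hU hdc
        exact Or.inl ⟨hc, T, hp, Finset.disjoint_of_subset_left hT (by simp [hc, hUS])⟩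
    · exact Or.inr h

theorem diCycle_union {a b : V} {Q M : Finset V} (h : DiPath_s8 G b a Q) (h' : DiLink G a b M)
    (hd : Disjoint Q M) : DiCycle G (Q ∪ M) := by
  rcases h' with ⟨rfl, hab⟩ | ⟨m, m', ham, hp, hmb⟩
  · exact ⟨b, a, by simpa using h, hab⟩
  · exact ⟨b, m', h.append_s8 ham hp hd, hmb⟩

end DiPath_s8

namespace DiCycle

variable {V : Type*} [DecidableEq V] {G : V → V → Prop}

theorem exists_rotation {S : Finset V} (h : DiCycle G S) {b : V} (hb : b ∈ S) :
    ∃ v, DiPath_s8 G b v S ∧ G v b := by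
  obtain ⟨u, v, hp, hvu⟩ := h
  obtain ⟨S₁, S₂, rfl, hd, h₂, ⟨rfl, rfl⟩ | ⟨w, h₁, hwb⟩⟩ := hp.split_before hb
  · exact ⟨v, by simpa using h₂, hvu⟩
  · exact ⟨w, by simpa [Finset.union_comm] using h₂.append_s8 hvu h₁ hd.symm, hwb⟩

/-- Two vertices of a cycle split it into a path and a link. -/
theorem exists_split {S : Finset V} (h : DiCycle G S) {a b : V} (ha : a ∈ S) (hb : b ∈ S) :
    ∃ Q M, DiPath_s8 G b a Q ∧ DiLink G a b M ∧ Disjoint Q M ∧ Q ∪ M = S := by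
  obtain ⟨v, hp, hvb⟩ := h.exists_rotation hb
  obtain ⟨Q, M, hS, hd, hQ, ⟨rfl, rfl⟩ | ⟨w, haw, hM⟩⟩ := hp.split_after ha
  · exact ⟨Q, ∅, hQ, Or.inl ⟨rfl, hvb⟩, hd, hS⟩
  · exact ⟨Q, M, hQ, Or.inr ⟨w, v, haw, hM, hvb⟩, hd, hS⟩

/-- In a strongly connected digraph without a spanning cycle, take a longest cycle. There are two
distinct vertices that are not adjacent and whose total degree is small. -/
theorem exists_not_adj_card_lt [Fintype V] [DecidableRel G] (hirr : Irreflexive G)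
    (hsc : StronglyConnected G) {S : Finset V} (hS : DiCycle G S)
    (hmax : ∀ T, DiCycle G T → T.card ≤ S.card) (hne : S ≠ Finset.univ) :
    ∃ x y, x ≠ y ∧ ¬ G x y ∧ ¬ G y x ∧
      (Finset.univ.filter (G x)).card + (Finset.univ.filter (G · x)).card +
        ((Finset.univ.filter (G y)).card + (Finset.univ.filter (G · y)).card) <
      2 * Fintype.card V := by
  obtain ⟨y, hy⟩ : ∃ y, y ∉ S := by
    by_contra! h
    exact hne (Finset.eq_univ_iff_forall.2 h)
  obtain ⟨c, hc⟩ : ∃ c, c ∈ S := by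
    obtain ⟨u, v, hp, -⟩ := hS
    exact ⟨u, hp.left_mem⟩
  let A : V → Prop := fun a => ∃ p U, G a p ∧ DiPath_s8 G p y U ∧ Disjoint U S
  let B : V → Prop := fun b => ∃ p U, DiPath_s8 G y p U ∧ G p b ∧ Disjoint U S
  obtain ⟨a₀, ha₀, hA₀⟩ : ∃ a ∈ S, A a := by
    rcases DiPath_s8.exists_to hy (hsc c y) with h | h
    · exact absurd hc h.1
    · exact h
  obtain ⟨b₀, hb₀, hB₀⟩ : ∃ b ∈ S, B b := by
    rcases DiPath_s8.exists_from hy (hsc y c) with h | h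
    · exact absurd hc h.1
    · exact h
  let D : Finset V → Prop := fun M => ∃ a b Q, DiPath_s8 G b a Q ∧ DiLink G a b M ∧
    Disjoint Q M ∧ Q ∪ M = S ∧ A a ∧ B b
  have hD₀ : ∃ M, D M := by
    obtain ⟨Q, M, h₁, h₂, h₃, h₄⟩ := hS.exists_split ha₀ hb₀
    exact ⟨M, a₀, b₀, Q, h₁, h₂, h₃, h₄, hA₀, hB₀⟩
  obtain ⟨M, hDM, hMmin⟩ := exists_minimalFor_of_wellFoundedLT D Finset.card hD₀
  obtain ⟨a, b, Q, hQ, hM, hQM, hQMS, hA, hB⟩ := hDM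
  have hMmin' : ∀ M', D M' → M.card ≤ M'.card := fun M' h' => by
    by_contra! hlt
    exact absurd (hMmin h' hlt.le) (by simpa using hlt)
  have hnA : ∀ r ∈ M, ¬ A r := by
    intro r hr hAr
    rcases hM with ⟨rfl, -⟩ | ⟨m, m', ham, hp, hmb⟩
    · simp at hr
    obtain ⟨M₁, M₂, rfl, hd, h₁, h₂⟩ := hp.split_after hr
    rw [Finset.disjoint_union_right] at hQM
    have hlt := hMmin' M₂ ⟨r, b, Q ∪ M₁, hQ.append_s8 ham h₁ hQM.1, ?_,
      Finset.disjoint_union_left.2 ⟨hQM.2, hd⟩, by rw [Finset.union_assoc, hQMS], hAr, hB⟩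
    · rw [Finset.card_union_of_disjoint hd] at hlt
      have := Finset.card_pos.2 ⟨_, h₁.left_mem⟩
      omega
    · rcases h₂ with ⟨rfl, rfl⟩ | ⟨w, hrw, hw⟩
      · exact Or.inl ⟨rfl, hmb⟩
      · exact Or.inr ⟨w, m', hrw, hw, hmb⟩
  have hnB : ∀ r ∈ M, ¬ B r := by
    intro r hr hBr
    rcases hM with ⟨rfl, -⟩ | ⟨m, m', ham, hp, hmb⟩
    · simp at hr
    obtain ⟨M₁, M₂, rfl, hd, h₁, h₂⟩ := hp.split_before hr
    rw [Finset.disjoint_union_right] at hQM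
    have hlt := hMmin' M₁ ⟨a, r, M₂ ∪ Q, h₁.append_s8 hmb hQ hQM.2.symm, ?_,
      Finset.disjoint_union_left.2 ⟨hd.symm, hQM.1⟩, ?_, hA, hBr⟩
    · rw [Finset.card_union_of_disjoint hd] at hlt
      have := Finset.card_pos.2 ⟨_, h₁.left_mem⟩
      omega
    · rcases h₂ with ⟨rfl, rfl⟩ | ⟨w, hw, hwr⟩
      · exact Or.inl ⟨rfl, ham⟩
      · exact Or.inr ⟨m, w, ham, hw, hwr⟩
    · rw [← hQMS]
      ac_rfl
  have hyQ : y ∉ Q := fun h => hy (hQMS ▸ Finset.mem_union_left _ h)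
  have hyM : y ∉ M := fun h => hy (hQMS ▸ Finset.mem_union_right _ h)
  have hdegQ : (Q.filter (G y)).card + (Q.filter (G · y)).card ≤ Q.card + 1 := by
    rcases hQ.insert_or_card_le hyQ with h | h
    · have := hmax _ (h.diCycle_union hM (by simp [hyM, hQM]))
      rw [Finset.insert_union, hQMS, Finset.card_insert_of_notMem hy] at this
      omega
    · split_ifs at h <;> omega
  let E : Finset V → Prop := fun Q' => DiPath_s8 G b a Q' ∧ Q ⊆ Q' ∧ Q' ⊆ S
  have hQS : Q ⊆ S := hQMS ▸ Finset.subset_union_left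
  obtain ⟨Q', ⟨hQ', hQQ', hQ'S⟩, hQ'max⟩ := (Set.toFinite {Q' | E Q'}).exists_maximal
    ⟨Q, hQ, subset_rfl, hQS⟩
  obtain ⟨r, hrS, hrQ'⟩ : ∃ r ∈ S, r ∉ Q' := by
    by_contra! h
    obtain rfl : Q' = S := Finset.Subset.antisymm hQ'S h
    obtain ⟨p, U, hap, hU, hUS⟩ := hA
    obtain ⟨p', U', hU', hpb, hUS'⟩ := hB
    obtain ⟨W, hW, hpW⟩ := hU.exists_trans hU'
    have hWS : Disjoint Q' W :=
      (Finset.disjoint_of_subset_left hW (Finset.disjoint_union_left.2 ⟨hUS, hUS'⟩)).symm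
    have := hmax _ (hQ'.diCycle_union (Or.inr ⟨p, p', hap, hpW, hpb⟩) hWS)
    rw [Finset.card_union_of_disjoint hWS] at this
    have := Finset.card_pos.2 ⟨_, hpW.left_mem⟩
    omega
  have hrM : r ∈ M := by
    rw [← hQMS, Finset.mem_union] at hrS
    exact hrS.resolve_left fun h => hrQ' (hQQ' h)
  have hdegQ' : (Q'.filter (G r)).card + (Q'.filter (G · r)).card ≤ Q'.card + 1 := by
    rcases hQ'.insert_or_card_le hrQ' with h | h
    · have hE : E (insert r Q') := ⟨h, hQQ'.trans (Finset.subset_insert _ _),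
        Finset.insert_subset hrS hQ'S⟩
      exact absurd (hQ'max hE (Finset.subset_insert _ _) (Finset.mem_insert_self _ _)) hrQ'
    · split_ifs at h <;> omega
  have hyy : Disjoint {y} S := by simpa using hy
  have hyB : ∀ s ∈ M, ¬ G y s := fun s hs h =>
    hnB s hs ⟨y, {y}, DiPath_s8.single y, h, hyy⟩
  have hAy : ∀ s ∈ M, ¬ G s y := fun s hs h =>
    hnA s hs ⟨y, {y}, h, DiPath_s8.single y, hyy⟩
  have hout : ∀ z ∉ S, G y z → ¬ G z r := fun z hz hyz hzr => by
    have hzy : z ≠ y := fun h => hirr y (h ▸ hyz)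
    refine hnB r hrM ⟨z, insert y {z}, .cons hyz (.single z) (by simpa using hzy.symm), hzr, ?_⟩
    simp [hz, hy]
  have hin : ∀ z ∉ S, G z y → ¬ G r z := fun z hz hzy hrz => by
    have hne : z ≠ y := fun h => hirr y (h ▸ hzy)
    refine hnA r hrM ⟨z, insert z {y}, hrz, .cons hzy (.single y) (by simpa using hne), ?_⟩
    simp [hz, hy]
  refine ⟨y, r, fun h => hy (h ▸ hrS), hyB r hrM, hAy r hrM, ?_⟩
  have hsplit : ∀ (p : V → Prop) [DecidablePred p] (X Y : Finset V), X ∪ Y = S → Disjoint X Y →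
      (Finset.univ.filter p).card =
        (X.filter p).card + (Y.filter p).card + (Sᶜ.filter p).card := by
    intro p _ X Y hXY hd
    rw [← Finset.union_compl S, Finset.filter_union, Finset.card_union_of_disjoint
      (Finset.disjoint_filter_filter disjoint_compl_right), ← hXY, Finset.filter_union,
      Finset.card_union_of_disjoint (Finset.disjoint_filter_filter hd)]
  have hQR : Q' ∪ (S \ Q') = S := Finset.union_sdiff_of_subset hQ'S
  have hQRd : Disjoint Q' (S \ Q') := Finset.disjoint_sdiff
  rw [hsplit (G y) Q M hQMS hQM, hsplit (G · y) Q M hQMS hQM,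
    hsplit (G r) Q' _ hQR hQRd, hsplit (G · r) Q' _ hQR hQRd,
    Finset.filter_false_of_mem hyB, Finset.filter_false_of_mem hAy]
  have hrR : r ∈ S \ Q' := by simp [hrS, hrQ']
  have hyT : y ∈ Sᶜ := by simpa using hy
  have hR₁ : ((S \ Q').filter (G r)).card < (S \ Q').card :=
    Finset.card_lt_card (Finset.filter_ssubset.2 ⟨r, hrR, hirr r⟩)
  have hR₂ : ((S \ Q').filter (G · r)).card < (S \ Q').card :=
    Finset.card_lt_card (Finset.filter_ssubset.2 ⟨r, hrR, hirr r⟩)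
  have hbound : ∀ (p q : V → Prop) [DecidablePred p] [DecidablePred q], ¬ p y → ¬ q y →
      (∀ z ∉ S, p z → ¬ q z) → (Sᶜ.filter p).card + (Sᶜ.filter q).card < Sᶜ.card := by
    intro p q _ _ hp hq hpq
    rw [← Finset.card_union_of_disjoint, ← Finset.filter_or]
    · exact Finset.card_lt_card (Finset.filter_ssubset.2 ⟨y, hyT, by tauto⟩)
    · exact Finset.disjoint_filter.2 fun z hz => hpq z (by simpa using hz)
  have hT₁ := hbound (G y) (G · r) (hirr y) (hyB r hrM) hout
  have hT₂ := hbound (G · y) (G r) (hirr y) (hAy r hrM) hin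
  have hc₁ : Q.card + M.card = S.card := by
    rw [← Finset.card_union_of_disjoint hQM, hQMS]
  have hc₂ : Q'.card + (S \ Q').card = S.card := by
    rw [← Finset.card_union_of_disjoint hQRd, hQR]
  have hc₃ : S.card + Sᶜ.card = Fintype.card V := Finset.card_add_card_compl S
  have hc₄ : Q.card ≤ Q'.card := Finset.card_le_card hQQ'
  simp only [Finset.card_empty]
  omega

end DiCycle

/-- A spanning cycle is a Hamilton cycle. -/
theorem DiCycle.exists_isHamCycle {V : Type*} [DecidableEq V] [Fintype V] {G : V → V → Prop}
    (h : DiCycle G Finset.univ) : ∃ f : ZMod (Fintype.card V) → V, IsHamCycle G f := by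
  obtain ⟨u, v, hp, hvu⟩ := h
  obtain ⟨g, h₀, h₁, h₂, h₃⟩ := hp.exists_param
  rw [Finset.card_univ] at h₁ h₂ h₃
  have : NeZero (Fintype.card V) :=
    have : Nonempty V := ⟨u⟩
    ⟨Fintype.card_ne_zero⟩
  refine ⟨fun i => g i.val, ?_, fun i => ?_⟩
  · rw [Fintype.bijective_iff_surjective_and_card]
    refine ⟨fun x => ?_, ZMod.card _⟩
    obtain ⟨i, hi, hx⟩ := h₃ x (Finset.mem_univ x)
    exact ⟨i, by simpa [ZMod.val_natCast, Nat.mod_eq_of_lt hi] using hx⟩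
  · have hi := ZMod.val_lt i
    by_cases hlt : i.val + 1 < Fintype.card V
    · have : (i + 1).val = i.val + 1 := by
        rw [ZMod.val_add, ZMod.val_one_eq_one_mod, Nat.add_mod_mod, Nat.mod_eq_of_lt hlt]
      simpa [this] using h₂ _ hlt
    · have hv : i.val = Fintype.card V - 1 := by omega
      have hz : i + 1 = 0 := by
        rw [← ZMod.natCast_zmod_val i, ← Nat.cast_one, ← Nat.cast_add,
          show i.val + 1 = Fintype.card V by omega, ZMod.natCast_self]
      simpa [hz, hv, h₀, h₁] using hvu

/-- Woodall's theorem: a strongly connected digraph on n ≥ 2 vertices in which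
d⁺(x) + d⁻(y) ≥ n for every ordered pair of distinct vertices x, y with no edge from x to y
has a Hamilton cycle. -/
theorem woodall (V : Type) [Fintype V] (G : V → V → Prop)
    (hirr : Irreflexive G)
    (hn : 2 ≤ Fintype.card V)
    (hsc : StronglyConnected G)
    (hdeg : ∀ x y : V, x ≠ y → ¬ G x y → Fintype.card V ≤ outDeg G x + inDeg G y) :
    ∃ f : ZMod (Fintype.card V) → V, IsHamCycle G f := by
  classical
  have hex : ∃ S, DiCycle G S := by
    obtain ⟨x, y, hxy⟩ := Fintype.one_lt_card_iff.1 hn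
    obtain h | ⟨z, hxz, -⟩ := Relation.ReflTransGen.cases_head (hsc x y)
    · exact absurd h hxy
    · rcases DiPath_s8.exists_to (Finset.notMem_empty x) (hsc z x) with ⟨-, U, hU, -⟩ | ⟨a, ha, -⟩
      · exact ⟨U, z, x, hU, hxz⟩
      · simp at ha
  obtain ⟨S, hS, hmax⟩ := Set.exists_max_image {S | DiCycle G S} Finset.card (Set.toFinite _) hex
  by_cases hne : S = Finset.univ
  · exact DiCycle.exists_isHamCycle (hne ▸ hS)
  · obtain ⟨x, y, hxy, h₁, h₂, hlt⟩ :=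
      DiCycle.exists_not_adj_card_lt hirr hsc hS hmax hne
    have h₃ := hdeg x y hxy h₁
    have h₄ := hdeg y x hxy.symm h₂
    have hout : ∀ z, outDeg G z = (Finset.univ.filter (G z)).card := fun z => by
      rw [outDeg, Nat.card_eq_fintype_card, Fintype.card_subtype]
    have hin : ∀ z, inDeg G z = (Finset.univ.filter (G · z)).card := fun z => by
      rw [inDeg, Nat.card_eq_fintype_card, Fintype.card_subtype]
    rw [hout, hin] at h₃ h₄
    omega
end

section
/- Let G be a strongly connected digraph on n ≥ 2 vertices. If d(x) + d(y) ≥ 2n − 1 for every pair of distinct non-adjacent vertices x, y in G, then G has a Hamilton cycle. -/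
/-- The total degree of a vertex. -/
noncomputable def totalDeg {V : Type*} (G : V → V → Prop) (x : V) : ℕ :=
  outDeg G x + inDeg G x

namespace Meyniel

variable {V : Type*} {G : V → V → Prop}

/-- A list of vertices listing the vertices of a directed cycle in order; a single vertex counts
as a degenerate cycle, whence the reflexive closure. -/
def IsCyc (G : V → V → Prop) (l : List V) : Prop :=
  l.Nodup ∧ l.IsChain (fun x y => G x y ∨ x = y) ∧
    ∀ x ∈ l.getLast?, ∀ y ∈ l.head?, G x y ∨ x = y

/-- There is a walk from `y` to `b` all of whose vertices but the last avoid `l`. -/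
def Escapes (G : V → V → Prop) (l : List V) (y b : V) : Prop :=
  y ∉ l ∧ ∃ z, Relation.ReflTransGen (fun p q => G p q ∧ q ∉ l) y z ∧ G z b

lemma isCyc_append_iff {P Q : List V} (hP : P ≠ []) (hQ : Q ≠ []) :
    IsCyc G (P ++ Q) ↔ (P ++ Q).Nodup ∧
      P.IsChain (fun x y => G x y ∨ x = y) ∧ Q.IsChain (fun x y => G x y ∨ x = y) ∧
      (∀ x ∈ P.getLast?, ∀ y ∈ Q.head?, G x y ∨ x = y) ∧
      ∀ x ∈ Q.getLast?, ∀ y ∈ P.head?, G x y ∨ x = y := by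
  rw [IsCyc, List.isChain_append, List.getLast?_append_of_ne_nil _ hQ,
    List.head?_append_of_ne_nil _ hP]
  tauto

lemma IsCyc.rotate {P Q : List V} (h : IsCyc G (P ++ Q)) : IsCyc G (Q ++ P) := by
  rcases eq_or_ne P [] with rfl | hP
  · simpa using h
  rcases eq_or_ne Q [] with rfl | hQ
  · simpa using h
  rw [isCyc_append_iff hP hQ] at h
  rw [isCyc_append_iff hQ hP, List.nodup_append_comm]
  tauto

lemma Escapes.cons {l : List V} {x y b : V} (h : Escapes G l y b) (hx : x ∉ l) (hxy : G x y) :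
    Escapes G l x b := by
  obtain ⟨hy, z, hz, hzb⟩ := h
  exact ⟨hx, z, .head ⟨hxy, hy⟩ hz, hzb⟩

lemma Escapes.of_edge {l : List V} {y b : V} (hy : y ∉ l) (h : G y b) : Escapes G l y b :=
  ⟨hy, y, .refl, h⟩

lemma Escapes.congr {l l' : List V} {y b : V} (h : Escapes G l y b) (hl : ∀ x, x ∈ l ↔ x ∈ l') :
    Escapes G l' y b := by
  simpa only [Escapes, hl] using h

lemma exists_escapes {l : List V} {a : V} (ha : a ∈ l) {y : V}
    (h : Relation.ReflTransGen G y a) (hy : y ∉ l) : ∃ b ∈ l, Escapes G l y b := by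
  induction h using Relation.ReflTransGen.head_induction_on with
  | refl => exact absurd ha hy
  | @head y x hyx _ ih =>
    by_cases hx : x ∈ l
    · exact ⟨x, hx, .of_edge hy hyx⟩
    · obtain ⟨b, hb, h⟩ := ih hx
      exact ⟨b, hb, h.cons hy hyx⟩

lemma exists_exit {l : List V} {a z : V} (h : Relation.ReflTransGen G a z) (ha : a ∈ l)
    (hz : z ∉ l) : ∃ x ∈ l, ∃ y, y ∉ l ∧ G x y := by
  induction h with
  | refl => exact absurd ha hz
  | @tail x y _ hxy ih =>
    by_cases hx : x ∈ l
    · exact ⟨x, hx, y, hz, hxy⟩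
    · exact ih hx

/-- An escaping walk can be shortened to a path. -/
lemma Escapes.exists_path {l : List V} {y b : V} (h : Escapes G l y b) :
    ∃ P : List V, P.Nodup ∧ P.IsChain (fun x y => G x y ∨ x = y) ∧ P.head? = some y ∧
      (∀ x ∈ P, x ∉ l) ∧ ∀ x ∈ P.getLast?, G x b := by
  obtain ⟨hy, z, hz, hzb⟩ := h
  induction hz using Relation.ReflTransGen.head_induction_on with
  | refl => exact ⟨[z], by simp, by simp, by simp, by simpa, by simpa⟩
  | @head y x hyx _ ih =>
    obtain ⟨P, hnd, hch, hhd, hout, hlast⟩ := ih hyx.2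
    by_cases hyP : y ∈ P
    · obtain ⟨P₁, P₂, rfl⟩ := List.append_of_mem hyP
      refine ⟨y :: P₂, (List.nodup_append.1 hnd).2.1, (List.isChain_append.1 hch).2.1, rfl,
        fun x hx => hout x (by simp only [List.mem_append]; exact Or.inr hx), ?_⟩
      rwa [List.getLast?_append_of_ne_nil _ (by simp)] at hlast
    · obtain ⟨P', rfl⟩ : ∃ P', P = x :: P' := by
        cases P <;> simp_all
      refine ⟨y :: x :: P', List.nodup_cons.2 ⟨hyP, hnd⟩,
        List.isChain_cons_cons.2 ⟨Or.inl hyx.1, hch⟩, rfl, ?_, ?_⟩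
      · rintro w (_ | ⟨_, hw⟩)
        · exact hy
        · exact hout w hw
      · rwa [List.getLast?_cons_cons]

/-- A nonempty family of duplicate-free lists has a longest member. -/
lemma exists_longest [Fintype V] (p : List V → Prop) (hp : ∀ l, p l → l.Nodup) (h : ∃ l, p l) :
    ∃ l, p l ∧ ∀ l', p l' → l'.length ≤ l.length := by
  obtain ⟨l₀, h₀⟩ := h
  have hfin : {k | ∃ l, p l ∧ l.length = k}.Finite :=
    (Set.finite_Iic (Fintype.card V)).subset (by
      rintro _ ⟨l, hl, rfl⟩
      exact (hp l hl).length_le_card)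
  obtain ⟨k, ⟨l, hl, rfl⟩, hmax⟩ := hfin.exists_maximal ⟨_, l₀, h₀, rfl⟩
  refine ⟨l, hl, fun l' hl' => ?_⟩
  by_contra! hlt
  exact absurd (hmax ⟨l', hl', rfl⟩ hlt.le) (not_le.2 hlt)

lemma isChain_insert {R : V → V → Prop} {l₁ l₂ : List V} {u v w : V}
    (h : (l₁ ++ u :: v :: l₂).IsChain R) (hu : R u w) (hv : R w v) :
    (l₁ ++ u :: w :: v :: l₂).IsChain R := by
  rw [List.isChain_append] at h ⊢
  simp only [List.isChain_cons_cons, List.head?_cons] at h ⊢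
  tauto

lemma IsCyc.exists_bypass (hsc : StronglyConnected G) {l : List V} (hl : IsCyc G l) {a₀ z : V}
    (ha₀ : a₀ ∈ l) (hz : z ∉ l) :
    ∃ M Q : List V, ∃ a b y : V, IsCyc G (M ++ Q) ∧ (M ++ Q).length = l.length ∧
      Q.getLast? = some a ∧ Q.head? = some b ∧ G a y ∧ Escapes G (M ++ Q) y b := by
  obtain ⟨a, ha, y, hy, hay⟩ := exists_exit (hsc a₀ z) ha₀ hz
  obtain ⟨b, hb, hesc⟩ := exists_escapes ha (hsc y a) hy
  obtain ⟨l₁, l₂, rfl⟩ := List.append_of_mem ha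
  have hcyc : IsCyc G (l₂ ++ (l₁ ++ [a])) := by
    apply IsCyc.rotate
    simpa using hl
  have hmem : ∀ x, x ∈ l₁ ++ a :: l₂ ↔ x ∈ l₂ ++ (l₁ ++ [a]) := by
    intro x
    simp only [List.mem_append, List.mem_cons, List.not_mem_nil]
    tauto
  obtain ⟨M, N, hMN⟩ := List.append_of_mem ((hmem b).1 hb)
  refine ⟨M, b :: N, a, b, y, hMN ▸ hcyc, ?_, ?_, rfl, hay, hMN ▸ hesc.congr hmem⟩
  · rw [← hMN]
    simp only [List.length_append, List.length_cons, List.length_nil]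
    omega
  · have := congrArg List.getLast? hMN
    rw [List.getLast?_append_of_ne_nil _ (by simp),
      List.getLast?_append_of_ne_nil M (by simp)] at this
    simpa using this.symm

section Degrees

open Classical in
/-- The number of edges between `x` and `v`. -/
noncomputable def edgeCount (G : V → V → Prop) (x v : V) : ℕ :=
  (if G x v then 1 else 0) + (if G v x then 1 else 0)

lemma edgeCount_le_two (x v : V) : edgeCount G x v ≤ 2 := by
  unfold edgeCount; split_ifs <;> omega

lemma edgeCount_self (hirr : ∀ x, ¬ G x x) (x : V) : edgeCount G x x = 0 := by
  simp [edgeCount, hirr x]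

lemma edgeCount_eq_zero {x v : V} (h₁ : ¬ G x v) (h₂ : ¬ G v x) : edgeCount G x v = 0 := by
  simp [edgeCount, h₁, h₂]

lemma totalDeg_eq_sum [Fintype V] (x : V) : totalDeg G x = ∑ v, edgeCount G x v := by
  classical
  simp only [totalDeg, outDeg, inDeg, edgeCount, Finset.sum_add_distrib, Nat.card_eq_fintype_card,
    Fintype.card_subtype, Finset.sum_boole, Nat.cast_id]

open Classical in
/-- A vertex that cannot be inserted into a path `l` sends at most `l.length + 1` edges to it. -/
lemma sum_edgeCount_cons_le {w : V} : ∀ (a : V) (l : List V),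
    (a :: l).IsChain (fun u v => ¬ (G u w ∧ G w v)) →
      ((a :: l).map (edgeCount G w)).sum ≤ (a :: l).length + if G w a then 1 else 0
  | a, [], _ => by
    simp only [edgeCount, List.map_cons, List.map_nil, List.sum_cons, List.sum_nil,
      List.length_cons, List.length_nil]
    split_ifs <;> omega
  | a, b :: l, h => by
    rw [List.isChain_cons_cons] at h
    have ih := sum_edgeCount_cons_le b l h.2
    rw [List.map_cons, List.sum_cons, List.length_cons]
    have h1 := h.1
    unfold edgeCount at *
    split_ifs at * <;> first | omega | tauto

lemma sum_edgeCount_le {w : V} (l : List V)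
    (h : l.IsChain (fun u v => ¬ (G u w ∧ G w v))) :
    (l.map (edgeCount G w)).sum ≤ l.length + 1 := by
  cases l with
  | nil => simp
  | cons a l =>
    refine (sum_edgeCount_cons_le a l h).trans ?_
    split_ifs <;> omega

/-- The degree estimate behind the theorem: `y` lies off the cycle `M ++ Q`, is not adjacent to
`M` and cannot be inserted into `Q`, while `w` cannot be inserted into the longer path `Q'`. -/
lemma totalDeg_add_le [Fintype V] (hirr : ∀ x, ¬ G x x) {M Q Q' : List V} {w y : V}
    (hnd : (M ++ Q).Nodup) (hnd' : Q'.Nodup) (hsub : Q' ⊆ M ++ Q) (hlen : Q.length ≤ Q'.length)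
    (hw : w ∈ M) (hwQ : w ∉ Q') (hy : y ∉ M ++ Q)
    (hyM : ∀ c ∈ M, ¬ G y c ∧ ¬ G c y)
    (hthru : ∀ z ∉ M ++ Q, ¬ (G y z ∧ G z w) ∧ ¬ (G w z ∧ G z y))
    (hyQ : Q.IsChain (fun u v => ¬ (G u y ∧ G y v)))
    (hwQ' : Q'.IsChain (fun u v => ¬ (G u w ∧ G w v))) :
    totalDeg G y + totalDeg G w ≤ 2 * Fintype.card V - 2 := by
  classical
  set S := (M ++ Q).toFinset with hS
  have hScard : S.card = M.length + Q.length := by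
    rw [hS, List.toFinset_card_of_nodup hnd, List.length_append]
  have hyS : y ∈ Sᶜ := by simpa [hS] using hy
  have hout : ∑ v ∈ Sᶜ, (edgeCount G y v + edgeCount G w v) ≤ 2 * (Sᶜ.card - 1) := by
    rw [← Finset.add_sum_erase _ _ hyS, edgeCount_self hirr,
      edgeCount_eq_zero (hyM w hw).2 (hyM w hw).1, ← Finset.card_erase_of_mem hyS, mul_comm]
    rw [add_zero, zero_add]
    refine Finset.sum_le_card_nsmul _ _ 2 fun z hz => ?_
    have hz' : z ∉ M ++ Q := by
      simpa [hS] using (Finset.mem_erase.1 hz).2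
    have := hthru z hz'
    unfold edgeCount
    split_ifs <;> first | omega | tauto
  have hin_y : ∑ v ∈ S, edgeCount G y v ≤ Q.length + 1 := by
    rw [List.sum_toFinset _ hnd, List.map_append, List.sum_append]
    have h0 : (M.map (edgeCount G y)).sum = 0 := by
      rw [List.sum_eq_zero_iff]
      intro k hk
      obtain ⟨c, hc, rfl⟩ := List.mem_map.1 hk
      exact edgeCount_eq_zero (hyM c hc).1 (hyM c hc).2
    rw [h0, zero_add]
    exact sum_edgeCount_le _ hyQ
  have hsubS : Q'.toFinset ⊆ S.erase w := by
    intro v hv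
    rw [List.mem_toFinset] at hv
    exact Finset.mem_erase.2 ⟨fun h => hwQ (h ▸ hv), List.mem_toFinset.2 (hsub hv)⟩
  have hwS : w ∈ S := by simp [hS, hw]
  have hcard := Finset.card_sdiff_of_subset hsubS
  have hcard' := Finset.card_le_card hsubS
  rw [List.toFinset_card_of_nodup hnd', Finset.card_erase_of_mem hwS] at hcard hcard'
  have hin_w : ∑ v ∈ S, edgeCount G w v ≤
      2 * (S.card - 1 - Q'.length) + (Q'.length + 1) := by
    rw [← Finset.add_sum_erase _ _ hwS, edgeCount_self hirr, zero_add,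
      ← Finset.sum_sdiff hsubS, ← hcard]
    refine add_le_add ?_ ?_
    · rw [mul_comm]
      exact Finset.sum_le_card_nsmul _ _ 2 fun z _ => edgeCount_le_two w z
    · rw [List.sum_toFinset _ hnd']
      exact sum_edgeCount_le _ hwQ'
  have htot : totalDeg G y + totalDeg G w = ∑ v ∈ S, edgeCount G y v + ∑ v ∈ S, edgeCount G w v +
      ∑ v ∈ Sᶜ, (edgeCount G y v + edgeCount G w v) := by
    rw [totalDeg_eq_sum, totalDeg_eq_sum, ← Finset.sum_add_sum_compl S,
      ← Finset.sum_add_sum_compl S (edgeCount G w), Finset.sum_add_distrib]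
    ring
  have hc := Finset.card_add_card_compl S
  have hpos : 0 < Sᶜ.card := Finset.card_pos.2 ⟨y, hyS⟩
  have hpos' : 0 < S.card := Finset.card_pos.2 ⟨w, hwS⟩
  omega

end Degrees

/-- Inserting vertices of `M` into the path `Q` as long as possible, one reaches a path `Q'` with
the same ends. -/
lemma exists_maximal_insertion [Fintype V] {M Q : List V} {a b : V} (hcyc : IsCyc G (M ++ Q))
    (ha : Q.getLast? = some a) (hb : Q.head? = some b) :
    ∃ Q' : List V, Q'.Nodup ∧ Q'.IsChain (fun x y => G x y ∨ x = y) ∧ Q'.getLast? = some a ∧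
      Q'.head? = some b ∧ Q ⊆ Q' ∧ Q' ⊆ M ++ Q ∧
      ∀ w ∈ M, w ∉ Q' → Q'.IsChain (fun u v => ¬ (G u w ∧ G w v)) := by
  obtain ⟨Q', ⟨hnd, hch, ha', hb', hQ, hS⟩, hmax⟩ := exists_longest
    (fun Q' => Q'.Nodup ∧ Q'.IsChain (fun x y => G x y ∨ x = y) ∧ Q'.getLast? = some a ∧
      Q'.head? = some b ∧ Q ⊆ Q' ∧ Q' ⊆ M ++ Q) (fun _ h => h.1)
    ⟨Q, (List.nodup_append.1 hcyc.1).2.1, (List.isChain_append.1 hcyc.2.1).2.1, ha, hb,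
      List.Subset.refl _, List.subset_append_right _ _⟩
  refine ⟨Q', hnd, hch, ha', hb', hQ, hS, fun w hw hwQ => ?_⟩
  rw [List.isChain_iff_forall_rel_of_append_cons_cons]
  rintro u v l₁ l₂ rfl ⟨huw, hwv⟩
  have hperm : (l₁ ++ u :: w :: v :: l₂).Perm (w :: (l₁ ++ u :: v :: l₂)) := by
    simpa using List.perm_middle (a := w) (l₁ := l₁ ++ [u]) (l₂ := v :: l₂)
  have := hmax (l₁ ++ u :: w :: v :: l₂) ⟨hperm.nodup_iff.2 (List.nodup_cons.2 ⟨hwQ, hnd⟩),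
    isChain_insert hch (.inl huw) (.inl hwv), by simpa using ha', by simpa using hb',
    fun x hx => hperm.mem_iff.2 (List.mem_cons_of_mem _ (hQ hx)), fun x hx => ?_⟩
  · simp at this
  · rcases List.mem_cons.1 (hperm.mem_iff.1 hx) with rfl | hx
    · exact List.mem_append_left _ hw
    · exact hS hx

lemma exists_isCyc_forall_mem [Fintype V] (hirr : ∀ x, ¬ G x x) (hn : 2 ≤ Fintype.card V)
    (hsc : StronglyConnected G)
    (hdeg : ∀ x y : V, x ≠ y → ¬ G x y → ¬ G y x →
      2 * Fintype.card V - 1 ≤ totalDeg G x + totalDeg G y) :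
    ∃ l : List V, IsCyc G l ∧ ∀ v, v ∈ l := by
  obtain ⟨v₀⟩ : Nonempty V := Fintype.card_pos_iff.1 (by omega)
  obtain ⟨l, hl, hmax⟩ := exists_longest (IsCyc G) (fun _ h => h.1) ⟨[v₀], by simp [IsCyc]⟩
  refine ⟨l, hl, ?_⟩
  by_contra! hz
  obtain ⟨z, hz⟩ := hz
  have hne : l ≠ [] := by
    rintro rfl
    simpa using hmax [v₀] (by simp [IsCyc])
  have hex : ∃ k, ∃ M Q : List V, ∃ a b y : V, M.length = k ∧ IsCyc G (M ++ Q) ∧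
      (M ++ Q).length = l.length ∧
      Q.getLast? = some a ∧ Q.head? = some b ∧ G a y ∧ Escapes G (M ++ Q) y b := by
    obtain ⟨M, Q, a, b, y, h⟩ := hl.exists_bypass hsc (List.head_mem hne) hz
    exact ⟨_, M, Q, a, b, y, rfl, h⟩
  classical
  obtain ⟨M, Q, a, b, y, hk, hcyc, hlen, ha, hb, hay, hesc⟩ := Nat.find_spec hex
  have hmin : ∀ M' Q' : List V, ∀ a b y : V, M'.length < M.length → IsCyc G (M' ++ Q') →
      (M' ++ Q').length = l.length → Q'.getLast? = some a → Q'.head? = some b → G a y →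
      ¬ Escapes G (M' ++ Q') y b := by
    intro M' Q' a b y hlt h1 h2 h3 h4 h5 h6
    exact Nat.find_min hex (hk ▸ hlt) ⟨M', Q', a, b, y, rfl, h1, h2, h3, h4, h5, h6⟩
  have hQne : Q ≠ [] := by
    rintro rfl
    simp at ha
  -- minimality of `M` forbids entering or leaving `M` through vertices off the cycle
  have hto : ∀ c ∈ M, ¬ Escapes G (M ++ Q) y c := by
    intro c hc h
    obtain ⟨M₁, M₂, rfl⟩ := List.append_of_mem hc
    have heq : (M₁ ++ c :: M₂) ++ Q = M₁ ++ (c :: (M₂ ++ Q)) := by simp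
    rw [heq] at hcyc hlen h
    refine hmin M₁ _ a c y (by simp) hcyc hlen ?_ rfl hay h
    rw [← List.cons_append, List.getLast?_append_of_ne_nil _ hQne, ha]
  have hfrom : ∀ c ∈ M, ∀ x, G c x → ¬ Escapes G (M ++ Q) x b := by
    intro c hc x hcx h
    obtain ⟨M₁, M₂, rfl⟩ := List.append_of_mem hc
    have hrot : IsCyc G (M₂ ++ (Q ++ (M₁ ++ [c]))) := by
      rw [← List.append_assoc]
      apply IsCyc.rotate
      simpa using hcyc
    refine hmin M₂ (Q ++ (M₁ ++ [c])) c b x (by simp; omega) hrot ?_ (by simp)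
      (by rw [List.head?_append_of_ne_nil _ hQne, hb]) hcx (h.congr fun v => ?_)
    · rw [← hlen]
      simp only [List.length_append, List.length_cons, List.length_nil]
      omega
    · simp only [List.mem_append, List.mem_cons, List.not_mem_nil]
      tauto
  have hyM : ∀ c ∈ M, ¬ G y c ∧ ¬ G c y := fun c hc =>
    ⟨fun h => hto c hc (.of_edge hesc.1 h), fun h => hfrom c hc y h hesc⟩
  have hthru : ∀ c ∈ M, ∀ z ∉ M ++ Q, ¬ (G y z ∧ G z c) ∧ ¬ (G c z ∧ G z y) := fun c hc z hz =>
    ⟨fun h => hto c hc ((Escapes.of_edge hz h.2).cons hesc.1 h.1),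
      fun h => hfrom c hc z h.1 (hesc.cons hz h.2)⟩
  have hyQ : Q.IsChain (fun u v => ¬ (G u y ∧ G y v)) := by
    rw [List.isChain_iff_forall_rel_of_append_cons_cons]
    rintro u v l₁ l₂ rfl ⟨huy, hyv⟩
    have hperm : (M ++ (l₁ ++ u :: y :: v :: l₂)).Perm (y :: (M ++ (l₁ ++ u :: v :: l₂))) := by
      simpa using List.perm_middle (a := y) (l₁ := M ++ (l₁ ++ [u])) (l₂ := v :: l₂)
    have hins := isChain_insert (l₁ := M ++ l₁) (by simpa using hcyc.2.1)
      (Or.inl huy : G u y ∨ u = y) (Or.inl hyv : G y v ∨ y = v)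
    have := hmax (M ++ (l₁ ++ u :: y :: v :: l₂)) ⟨hperm.nodup_iff.2
      (List.nodup_cons.2 ⟨hesc.1, hcyc.1⟩), by simpa using hins, by simpa using hcyc.2.2⟩
    rw [hperm.length_eq, List.length_cons] at this
    omega
  obtain ⟨Q', hnd, hch, ha', hb', hQQ', hsub, hins⟩ := exists_maximal_insertion hcyc ha hb
  by_cases hall : ∀ w ∈ M, w ∈ Q'
  · obtain ⟨P, hPnd, hPch, hPy, hPout, hPlast⟩ := hesc.exists_path
    have hPne : P ≠ [] := by
      rintro rfl
      simp at hPy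
    have hQ'ne : Q' ≠ [] := by
      rintro rfl
      simp at ha'
    have hbig := hmax (P ++ Q') ((isCyc_append_iff hPne hQ'ne).2
      ⟨List.nodup_append'.2 ⟨hPnd, hnd, fun x hx hx' => hPout x hx (hsub hx')⟩, hPch, hch,
        fun x hx v hv => by
          rw [hb', Option.mem_some_iff] at hv
          exact .inl (hv ▸ hPlast x hx),
        fun x hx v hv => by
          rw [ha', Option.mem_some_iff] at hx
          rw [hPy, Option.mem_some_iff] at hv
          exact .inl (hx ▸ hv ▸ hay)⟩)
    have hle : (M ++ Q).length ≤ Q'.length :=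
      (hcyc.1.subperm (List.append_subset.2 ⟨hall, hQQ'⟩)).length_le
    have := List.length_pos_iff.2 hPne
    rw [List.length_append] at hbig
    omega
  · push Not at hall
    obtain ⟨w, hw, hwQ'⟩ := hall
    have hle := totalDeg_add_le hirr hcyc.1 hnd hsub
      ((List.nodup_append.1 hcyc.1).2.1.subperm hQQ').length_le hw hwQ' hesc.1 hyM (hthru w hw)
      hyQ (hins w hw hwQ')
    have hyw : y ≠ w := by
      rintro rfl
      exact hesc.1 (List.mem_append_left _ hw)
    have := hdeg y w hyw (hyM w hw).1 (hyM w hw).2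
    omega

lemma IsCyc.exists_isHamCycle [Fintype V] (hn : 2 ≤ Fintype.card V) {l : List V}
    (hl : IsCyc G l) (hall : ∀ v, v ∈ l) : ∃ f : ZMod (Fintype.card V) → V, IsHamCycle G f := by
  classical
  have hlen : l.length = Fintype.card V := by
    rw [← List.toFinset_card_of_nodup hl.1, ← Finset.card_univ]
    congr 1
    ext v
    simp [hall]
  have : NeZero (Fintype.card V) := ⟨by omega⟩
  have : Fact (1 < Fintype.card V) := ⟨by omega⟩
  have hlt : ∀ i : ZMod (Fintype.card V), i.val < l.length := fun i => i.val_lt.trans_eq hlen.symm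
  have hinj : Function.Injective fun i : ZMod (Fintype.card V) => l[i.val]'(hlt i) := by
    intro i j hij
    exact ZMod.val_injective _ ((hl.1.getElem_inj_iff).1 hij)
  refine ⟨fun i => l[i.val]'(hlt i),
    (Fintype.bijective_iff_injective_and_card _).2 ⟨hinj, ZMod.card _⟩, fun i => ?_⟩
  have hne : l[i.val]'(hlt i) ≠ l[(i + 1).val]'(hlt (i + 1)) := fun h => by
    simpa using hinj h
  refine Or.resolve_right ?_ hne
  have hval : (i + 1).val = (i.val + 1) % Fintype.card V := by
    rw [ZMod.val_add, ZMod.val_one]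
  rcases Nat.lt_or_ge (i.val + 1) l.length with h | h
  · have h' : (i + 1).val = i.val + 1 := by rw [hval, Nat.mod_eq_of_lt (h.trans_eq hlen)]
    simp only [h']
    exact List.isChain_iff_getElem.1 hl.2.1 i.val h
  · have hi : i.val = l.length - 1 := by have := hlt i; omega
    have h' : (i + 1).val = 0 := by
      rw [hval, hi, hlen, Nat.sub_add_cancel (by omega), Nat.mod_self]
    refine hl.2.2 _ ?_ _ ?_
    · simp [List.getLast?_eq_getElem?, hi]
    · simp only [h']
      simp [List.head?_eq_getElem?]

end Meyniel

/-- Meyniel's theorem: a strongly connected digraph on n ≥ 2 vertices in which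
d(x) + d(y) ≥ 2n − 1 for every pair of distinct non-adjacent vertices x, y
has a Hamilton cycle. -/
theorem meyniel (V : Type) [Fintype V] (G : V → V → Prop)
    (hirr : Irreflexive G)
    (hn : 2 ≤ Fintype.card V)
    (hsc : StronglyConnected G)
    (hdeg : ∀ x y : V, x ≠ y → ¬ G x y → ¬ G y x →
      2 * Fintype.card V - 1 ≤ totalDeg G x + totalDeg G y) :
    ∃ f : ZMod (Fintype.card V) → V, IsHamCycle G f := by
  obtain ⟨l, hl, hall⟩ := Meyniel.exists_isCyc_forall_mem hirr hn hsc hdeg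
  exact hl.exists_isHamCycle hn hall
end
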